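/- arXiv:2507.14012 — 2 statements merged into one kernel-verified Lean document; each statement's English description precedes it below -/
import Mathlib

section
/- Let Δ ⊂ ℝ³ be a tetrahedron with |Δ| = 1 and Λ_L := (−L/2, L/2)³. There is a constant C depending only on Δ such that for every ρ ∈ [0,1] and all ℓ, L > 0, E_{Λ_L}(ρ)/L³ − μ* ρ ≥ F_{ℓΔ}(ρ)/ℓ³ − C(μ* + |F_{ℓΔ}(ρ)|/ℓ³)(ℓ/L) − C ρ/ℓ. -/
open MeasureTheory Metric Set Filter Bornology
open scoped Topology ENNReal NNReal Pointwise

noncomputable section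

/-- Three-dimensional Euclidean space. -/
abbrev E3 : Type := EuclideanSpace ℝ (Fin 3)

/-- The divergence of a vector field on `E3`, defined as the trace of its derivative. -/
def divg (φ : E3 → E3) (x : E3) : ℝ :=
  LinearMap.trace ℝ E3 (fderiv ℝ φ x : E3 →ₗ[ℝ] E3)

/-- The candidate values `∫_Ω div φ` over `C¹` compactly supported vector fields bounded by one. -/
def perCand (Ω : Set E3) : Set ℝ :=
  {a : ℝ | ∃ φ : E3 → E3, ContDiff ℝ 1 φ ∧ HasCompactSupport φ ∧
      (∀ x, ‖φ x‖ ≤ 1) ∧ a = ∫ x in Ω, divg φ x}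

/-- The perimeter of a set, in the sense of geometric measure theory. -/
def per (Ω : Set E3) : ℝ := sSup (perCand Ω)

/-- A set has finite perimeter if the family of integrals defining the perimeter is
bounded above. -/
def HasFinPer (Ω : Set E3) : Prop := BddAbove (perCand Ω)

/-- The Lebesgue volume of a set as a real number. -/
def vol (Ω : Set E3) : ℝ := (volume Ω).toReal

/-- The liquid drop energy `𝓔_Λ[ρ,Ω]`. -/
def ldEnergy (Λ : Set E3) (ρ : ℝ) (Ω : Set E3) : ℝ :=
  per Ω + (1/2) * ∫ x, ∫ y,
    (Set.indicator Ω (fun _ => (1:ℝ)) x - ρ * Set.indicator Λ (fun _ => (1:ℝ)) x) *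
      (Set.indicator Ω (fun _ => (1:ℝ)) y - ρ * Set.indicator Λ (fun _ => (1:ℝ)) y) / ‖x - y‖

/-- The neutral ground state energy `E_Λ(ρ)`. -/
def EE (Λ : Set E3) (ρ : ℝ) : ℝ :=
  sInf {t : ℝ | ∃ Ω : Set E3, MeasurableSet Ω ∧ Ω ⊆ Λ ∧ HasFinPer Ω ∧
    vol Ω = ρ * vol Λ ∧ t = ldEnergy Λ ρ Ω}

/-- The liquid drop energy `I[Ω]` of an isolated droplet (no background). -/
def II (Ω : Set E3) : ℝ :=
  per Ω + (1/2) * ∫ x in Ω, ∫ y in Ω, 1 / ‖x - y‖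

/-- `μ* = inf I[Ω]/|Ω|`. -/
def muStar : ℝ :=
  sInf {t : ℝ | ∃ Ω : Set E3, MeasurableSet Ω ∧ HasFinPer Ω ∧
    0 < volume Ω ∧ volume Ω < ⊤ ∧ t = II Ω / vol Ω}

/-- A minimizer for the isolated liquid drop problem. -/
def IsMinimizer (Ω : Set E3) : Prop :=
  MeasurableSet Ω ∧ HasFinPer Ω ∧ 0 < volume Ω ∧ volume Ω < ⊤ ∧ II Ω = muStar * vol Ω

/-- The set of masses of minimizers. -/
def minimizerMasses : Set ℝ := {m : ℝ | ∃ Ω : Set E3, IsMinimizer Ω ∧ m = vol Ω}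

/-- The largest mass of a minimizer. -/
def mStar : ℝ := sSup minimizerMasses

/-- The smallest mass of a minimizer. -/
def mStarStar : ℝ := sInf minimizerMasses

/-- `Λ` is an `(r,L)`-Lipschitz open set: near each boundary point it is, in a suitable
orthonormal coordinate system, the epigraph of an `L`-Lipschitz function. -/
def IsLipschitzDomain (r L : ℝ) (Λ : Set E3) : Prop :=
  ∀ x ∈ frontier Λ, ∃ (g : E3 ≃ᵢ E3) (f : ℝ × ℝ → ℝ),
    LipschitzWith L.toNNReal f ∧
    Λ ∩ ball x r = {y ∈ ball x r | f (g y 0, g y 1) < g y 2}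

/-- Fisher regularity of the boundary. -/
def FisherCond (C ℓ : ℝ) (Λ : Set E3) : Prop :=
  ∀ h : ℝ, 0 < h → h ≤ ℓ → (volume (frontier Λ + ball (0:E3) h)).toReal ≤ C * ℓ^2 * h

/-- An admissible sequence of domains for the thermodynamic limit. -/
def IsAdmissibleSeq (r L C : ℝ) (Λs : ℕ → Set E3) (ℓ : ℕ → ℝ) : Prop :=
  Tendsto ℓ atTop atTop ∧
  ∀ n : ℕ, IsOpen (Λs n) ∧ IsBounded (Λs n) ∧ IsLipschitzDomain r L (Λs n) ∧
    ball 0 (ℓ n / C) ⊆ Λs n ∧ Λs n ⊆ ball 0 (ℓ n) ∧ FisherCond C (ℓ n) (Λs n)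

/-- `e` is the thermodynamic limit function of the liquid drop model. -/
def IsThermoLimit (e : ℝ → ℝ) : Prop :=
  ∀ ρ : ℝ, 0 ≤ ρ → ρ ≤ 1 →
    ∀ (r L C : ℝ) (Λs : ℕ → Set E3) (ℓ : ℕ → ℝ), 0 < r → 0 < L → 0 < C →
      IsAdmissibleSeq r L C Λs ℓ →
      Tendsto (fun n => EE (Λs n) ρ / vol (Λs n)) atTop (𝓝 (e ρ))

/-- The domain for the `N`-particle Jellium problem: `N^{1/3} Λ₁` with `Λ₁` the ball of
unit volume centered at the origin. -/
def jelDomain (N : ℕ) : Set E3 :=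
  ball (0:E3) ((N : ℝ) ^ ((1:ℝ)/3) * (3 / (4 * Real.pi)) ^ ((1:ℝ)/3))

/-- The `N`-particle Jellium ground state energy. -/
def jelN (N : ℕ) : ℝ :=
  sInf {t : ℝ | ∃ x : Fin N → E3, (∀ j, x j ∈ jelDomain N) ∧
    t = (∑ j : Fin N, ∑ k : Fin N, if j < k then 1 / ‖x j - x k‖ else 0)
      - (∑ j : Fin N, ∫ y in jelDomain N, 1 / ‖x j - y‖)
      + (1/2) * ∫ x' in jelDomain N, ∫ y in jelDomain N, 1 / ‖x' - y‖}

/-- `eJ` is the Jellium energy per particle in the thermodynamic limit. -/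
def IsJelliumLimit (eJ : ℝ) : Prop :=
  Tendsto (fun N : ℕ => jelN N / (N : ℝ)) atTop (𝓝 eJ)

/-- The grand-canonical liquid drop energy `F_Λ(ρ)`. -/
def FF (Λ : Set E3) (ρ : ℝ) : ℝ :=
  sInf {t : ℝ | ∃ Ω : Set E3, MeasurableSet Ω ∧ Ω ⊆ Λ ∧ HasFinPer Ω ∧
    t = ldEnergy Λ ρ Ω - muStar * vol Ω}

/-- A tetrahedron: the interior of the convex hull of four affinely independent points. -/
def IsTetra (Δ : Set E3) : Prop :=
  ∃ v : Fin 4 → E3, AffineIndependent ℝ v ∧ Δ = interior (convexHull ℝ (Set.range v))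

/-- The open cube `(-L/2, L/2)³`. -/
def cubeL (Lside : ℝ) : Set E3 := {x : E3 | ∀ i, |x i| < Lside / 2}

/-- The grand-canonical Jellium energy of point particles of charge `m` in the domain `S`
with a uniform background of density one. -/
def pointJellium (m : ℝ) (S : Set E3) : ℝ :=
  sInf {t : ℝ | ∃ (n : ℕ) (x : Fin n → E3), (∀ j, x j ∈ S) ∧
    t = (∑ j : Fin n, ∑ k : Fin n, if j < k then m^2 / ‖x j - x k‖ else 0)
      - m * (∑ j : Fin n, ∫ y in S, 1 / ‖x j - y‖)
      + (1/2) * ∫ x' in S, ∫ y in S, 1 / ‖x' - y‖}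

/-- The conclusions of the decomposition theorem for minimizing sequences. -/
def IsDecomp (Ω : ℕ → Set E3) (m : ℝ) (K : ℕ) (Ωs : Fin K → Set E3)
    (a : ℕ → Fin K → E3) (R : ℝ) (φ : ℕ → ℕ) : Prop :=
  StrictMono φ ∧ 0 < R ∧
  (∀ j k : Fin K, j ≠ k → Tendsto (fun n => ‖a n j - a n k‖) atTop atTop) ∧
  (∀ j, IsMinimizer (Ωs j)) ∧
  (∀ j, mStarStar ≤ vol (Ωs j) ∧ vol (Ωs j) ≤ mStar) ∧
  (∀ j, Tendsto
    (fun n => volume (symmDiff ({x : E3 | x + a n j ∈ Ω (φ n)} ∩ ball (0:E3) R) (Ωs j)))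
    atTop (𝓝 0)) ∧
  Tendsto (fun n => volume (Ω (φ n) \ ⋃ j, ball (a n j) R)) atTop (𝓝 0) ∧
  Tendsto (fun n => per (Ω (φ n) \ ⋃ j, ball (a n j) R)) atTop (𝓝 0) ∧
  m = ∑ j, vol (Ωs j) ∧
  (2 ≤ K → ∃ ε : ℕ → ℝ, Tendsto ε atTop (𝓝 0) ∧ ∀ n : ℕ,
    muStar * vol (Ω (φ n)) +
      (∑ j : Fin K, ∑ k : Fin K,
        if j < k then (vol (Ωs j) * vol (Ωs k) + ε n) / ‖a n j - a n k‖ else 0)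
      ≤ II (Ω (φ n)))

instance : MeasurableSpace (Matrix (Fin 3) (Fin 3) ℝ) :=
  (inferInstance : MeasurableSpace (Fin 3 → Fin 3 → ℝ))

/-- The rotation group SO(3), as a set of matrices. -/
def SO3 : Set (Matrix (Fin 3) (Fin 3) ℝ) := {R | R * R.transpose = 1 ∧ R.det = 1}

/-- The action of a matrix on Euclidean space. -/
def rot (R : Matrix (Fin 3) (Fin 3) ℝ) (x : E3) : E3 :=
  (EuclideanSpace.equiv (Fin 3) ℝ).symm (R.mulVec (EuclideanSpace.equiv (Fin 3) ℝ x))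

/-- The image of a set under the rigid motion `x ↦ Rx + τ`. -/
def rigidImage (R : Matrix (Fin 3) (Fin 3) ℝ) (τ : E3) (S : Set E3) : Set E3 :=
  (fun x => rot R x + τ) '' S

/-- `μ` is the normalized Haar measure of SO(3): a probability measure concentrated on SO(3)
which is invariant under left multiplication by rotations. -/
def IsHaarSO3 (μ : Measure (Matrix (Fin 3) (Fin 3) ℝ)) : Prop :=
  IsProbabilityMeasure μ ∧ μ SO3ᶜ = 0 ∧ ∀ S ∈ SO3, Measure.map (fun R => S * R) μ = μ

/-- The cube of the tiling of side length `ε` indexed by `z ∈ ℤ³`. -/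
def cubeZ (ε : ℝ) (z : Fin 3 → ℤ) : Set E3 := {x : E3 | ∀ i, |x i - ε * (z i : ℝ)| < ε / 2}

/-- The distance between two sets. -/
def setDist (s t : Set E3) : ℝ := sInf {d : ℝ | ∃ p ∈ s, ∃ q ∈ t, d = dist p q}

/-- The outer cubic boundary layer of `Λ` at scale `ε`. -/
def outerLayer (Λ : Set E3) (ε : ℝ) : Set E3 :=
  ⋃ z ∈ {z : Fin 3 → ℤ | setDist (cubeZ ε z) (frontier Λ) ≤ ε}, closure (cubeZ ε z \ Λ)

/-!
Averaged over all translates, the window `T = ℓΔ` sees a competitor `Ω` in the cube with the right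
volume and, by the coarea formula, with perimeter at most `|T| Per Ω + |Ω| Per T`. Its Coulomb
energy is averaged into the quadratic form with kernel `|T ∩ (T - U(x - y))| / |x - y|`, where `U`
is an orthogonal map. The covariogram of a simplex along a ray is `|T| (1 - t / R)₊³`, so averaging
over `U` gives a mixture of the kernels `(1 - |x| / R)₊³ / |x|`; the difference between the Coulomb
kernel and each of these is positive definite (Graf–Schenker). Hence some orientation of `T` loses
no Coulomb energy, and every translate of `T` inside the cube costs at least the grand-canonical
energy of `T`.
-/

/-! ### Divergence and test fields -/

section TestField

variable {E : Type*} [NormedAddCommGroup E] [InnerProductSpace ℝ E]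

/-- A test field for the variational definition of the perimeter: a compactly supported `C¹`
vector field bounded by one. -/
structure IsTestField (φ : E → E) : Prop where
  contDiff : ContDiff ℝ 1 φ
  hasCompactSupport : HasCompactSupport φ
  norm_le_one : ∀ x, ‖φ x‖ ≤ 1

namespace IsTestField

variable {φ : E → E}

lemma comp_add_right (hφ : IsTestField φ) (s : E) : IsTestField fun x => φ (x + s) where
  contDiff := hφ.contDiff.comp (contDiff_id.add contDiff_const)
  hasCompactSupport := hφ.hasCompactSupport.comp_homeomorph (Homeomorph.addRight s)
  norm_le_one _ := hφ.norm_le_one _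

lemma conj (hφ : IsTestField φ) (U : E ≃ₗᵢ[ℝ] E) : IsTestField fun x => U.symm (φ (U x)) where
  contDiff := U.symm.contDiff.comp (hφ.contDiff.comp U.contDiff)
  hasCompactSupport :=
    (hφ.hasCompactSupport.comp_homeomorph U.toHomeomorph).comp_left (map_zero U.symm)
  norm_le_one _ := (U.symm.norm_map _).trans_le (hφ.norm_le_one _)

lemma abs_inner_le (hφ : IsTestField φ) {e : E} (he : ‖e‖ = 1) (x : E) :
    |inner ℝ e (φ x)| ≤ 1 :=
  (abs_real_inner_le_norm _ _).trans (by rw [he, one_mul]; exact hφ.norm_le_one x)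

end IsTestField

/-- The field `g / √(‖g‖² + κ²)`: a smooth substitute for the unit vector `g / ‖g‖`. -/
def softUnit (κ : ℝ) (g : E) : E := (√(‖g‖ ^ 2 + κ ^ 2))⁻¹ • g

lemma contDiff_softUnit {κ : ℝ} (hκ : 0 < κ) : ContDiff ℝ 1 (softUnit κ : E → E) :=
  ((ContDiff.sqrt ((contDiff_id.norm_sq ℝ).add contDiff_const) fun _ => by positivity).inv
    fun _ => by positivity).smul contDiff_id

lemma softUnit_zero (κ : ℝ) : softUnit κ (0 : E) = 0 := smul_zero _

lemma norm_softUnit_le_one (κ : ℝ) (g : E) : ‖softUnit κ g‖ ≤ 1 := by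
  rw [softUnit, norm_smul, norm_inv, Real.norm_of_nonneg (Real.sqrt_nonneg _)]
  exact inv_mul_le_one_of_le₀ (Real.le_sqrt_of_sq_le (by nlinarith [sq_nonneg κ]))
    (Real.sqrt_nonneg _)

lemma norm_le_inner_softUnit_add {κ : ℝ} (hκ : 0 < κ) (g : E) :
    ‖g‖ ≤ inner ℝ g (softUnit κ g) + κ := by
  set N := √(‖g‖ ^ 2 + κ ^ 2) with hN
  have hNpos : 0 < N := Real.sqrt_pos.2 (by positivity)
  have hNsq : N ^ 2 = ‖g‖ ^ 2 + κ ^ 2 := Real.sq_sqrt (by positivity)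
  have hgN : ‖g‖ ≤ N := Real.le_sqrt_of_sq_le (by nlinarith [sq_nonneg κ])
  have hκN : κ ≤ N := Real.le_sqrt_of_sq_le (by nlinarith [sq_nonneg ‖g‖])
  have hinner : inner ℝ g (softUnit κ g) = ‖g‖ ^ 2 / N := by
    rw [softUnit, inner_smul_right, real_inner_self_eq_norm_sq, ← hN, div_eq_inv_mul]
  rw [hinner, ← sub_le_iff_le_add, le_div_iff₀ hNpos]
  nlinarith [norm_nonneg g]

section Divergence

lemma hasCompactSupport_trace_fderiv {φ : E → E} (h : HasCompactSupport φ) :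
    HasCompactSupport fun x => LinearMap.trace ℝ E (fderiv ℝ φ x) :=
  (h.fderiv (𝕜 := ℝ)).comp_left (g := fun A : E →L[ℝ] E => LinearMap.trace ℝ E A) (by simp)

lemma trace_fderiv_eq_sum {ι : Type*} [Fintype ι] (b : OrthonormalBasis ι ℝ E) {φ : E → E}
    {x : E} (h : DifferentiableAt ℝ φ x) :
    LinearMap.trace ℝ E (fderiv ℝ φ x) =
      ∑ i, fderiv ℝ (fun y => inner ℝ (b i) (φ y)) x (b i) := by
  rw [LinearMap.trace_eq_sum_inner _ b]
  refine Finset.sum_congr rfl fun i _ => ?_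
  have hi := (innerSL ℝ (b i)).hasFDerivAt.comp x h.hasFDerivAt
  exact (DFunLike.congr_fun hi.fderiv (b i)).symm

variable [FiniteDimensional ℝ E]

lemma continuous_trace_fderiv {φ : E → E} (h : ContDiff ℝ 1 φ) :
    Continuous fun x => LinearMap.trace ℝ E (fderiv ℝ φ x) :=
  (LinearMap.continuous_of_finiteDimensional
    ((LinearMap.trace ℝ E).comp (ContinuousLinearMap.coeLM ℝ))).comp
    (h.continuous_fderiv one_ne_zero)

variable [MeasurableSpace E] [BorelSpace E] {μ : Measure E} [μ.IsAddHaarMeasure]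

lemma integral_mul_fderiv_inner {v : E → ℝ} {φ : E → E} (hv : ContDiff ℝ 1 v)
    (h : ContDiff ℝ 1 φ) (h' : HasCompactSupport φ) (e : E) :
    Integrable (fun x => v x * fderiv ℝ (fun y => inner ℝ e (φ y)) x e) μ ∧
    Integrable (fun x => fderiv ℝ v x e * inner ℝ e (φ x)) μ ∧
    ∫ x, v x * fderiv ℝ (fun y => inner ℝ e (φ y)) x e ∂μ =
      -∫ x, fderiv ℝ v x e * inner ℝ e (φ x) ∂μ := by
  have hψ : ContDiff ℝ 1 fun y => inner ℝ e (φ y) := contDiff_const.inner ℝ h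
  have hψs : HasCompactSupport fun y => inner ℝ e (φ y) :=
    h'.comp_left (g := fun z => inner ℝ e z) (inner_zero_right e)
  have hleft : Integrable (fun x => v x * fderiv ℝ (fun y => inner ℝ e (φ y)) x e) μ :=
    Continuous.integrable_of_hasCompactSupport
      (hv.continuous.mul ((hψ.continuous_fderiv one_ne_zero).clm_apply continuous_const))
      (hψs.fderiv_apply (𝕜 := ℝ) e).mul_left
  have hright : Integrable (fun x => fderiv ℝ v x e * inner ℝ e (φ x)) μ :=
    (((hv.continuous_fderiv one_ne_zero).clm_apply continuous_const).mul
      hψ.continuous).integrable_of_hasCompactSupport hψs.mul_left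
  have hprod : Integrable (fun x => v x * inner ℝ e (φ x)) μ :=
    (hv.continuous.mul hψ.continuous).integrable_of_hasCompactSupport hψs.mul_left
  exact ⟨hleft, hright, integral_mul_fderiv_eq_neg_fderiv_mul_of_integrable hright hleft hprod
    (fun x _ => hv.differentiable one_ne_zero x) fun x _ => hψ.differentiable one_ne_zero x⟩

lemma integral_mul_trace_fderiv {v : E → ℝ} {φ : E → E} (hv : ContDiff ℝ 1 v)
    (h : ContDiff ℝ 1 φ) (h' : HasCompactSupport φ) :
    ∫ x, v x * LinearMap.trace ℝ E (fderiv ℝ φ x) ∂μ = -∫ x, fderiv ℝ v x (φ x) ∂μ := by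
  set b := stdOrthonormalBasis ℝ E
  have key := fun i => integral_mul_fderiv_inner (μ := μ) hv h h' (b i)
  calc ∫ x, v x * LinearMap.trace ℝ E (fderiv ℝ φ x) ∂μ
      = ∫ x, ∑ i, v x * fderiv ℝ (fun y => inner ℝ (b i) (φ y)) x (b i) ∂μ := by
        simp_rw [trace_fderiv_eq_sum b (h.differentiable one_ne_zero _), Finset.mul_sum]
    _ = -∑ i, ∫ x, fderiv ℝ v x (b i) * inner ℝ (b i) (φ x) ∂μ := by
        rw [integral_finsetSum _ fun i _ => (key i).1, ← Finset.sum_neg_distrib]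
        exact Finset.sum_congr rfl fun i _ => (key i).2.2
    _ = -∫ x, fderiv ℝ v x (φ x) ∂μ := by
        rw [← integral_finsetSum _ fun i _ => (key i).2.1]
        refine congrArg Neg.neg (integral_congr_ae (Eventually.of_forall fun x => ?_))
        beta_reduce
        conv_rhs => rw [← b.sum_repr' (φ x), map_sum]
        simp only [map_smul, smul_eq_mul, mul_comm]

lemma ofReal_integral_mul_trace_fderiv_le {w : E → ℝ} {φ : E → E} (hw : ContDiff ℝ 1 w)
    (hφ : IsTestField φ) :
    ENNReal.ofReal (∫ x, w x * LinearMap.trace ℝ E (fderiv ℝ φ x) ∂μ) ≤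
      ∫⁻ x, ‖fderiv ℝ w x‖ₑ ∂μ := by
  rw [integral_mul_trace_fderiv hw hφ.contDiff hφ.hasCompactSupport]
  calc ENNReal.ofReal (-∫ x, fderiv ℝ w x (φ x) ∂μ)
      ≤ ‖∫ x, fderiv ℝ w x (φ x) ∂μ‖ₑ := by
        rw [← ofReal_norm]
        exact ENNReal.ofReal_le_ofReal (neg_le_abs _)
    _ ≤ ∫⁻ x, ‖fderiv ℝ w x (φ x)‖ₑ ∂μ := enorm_integral_le_lintegral_enorm _
    _ ≤ ∫⁻ x, ‖fderiv ℝ w x‖ₑ ∂μ := lintegral_mono fun x => by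
        rw [← ofReal_norm, ← ofReal_norm]
        exact ENNReal.ofReal_le_ofReal ((ContinuousLinearMap.le_opNorm _ _).trans
          (mul_le_of_le_one_right (norm_nonneg _) (hφ.norm_le_one x)))

/-- The test field is `-∇u / √(‖∇u‖² + κ²)`. -/
lemma integral_norm_fderiv_le_add_of_forall_isTestField {u : E → ℝ} (hu : ContDiff ℝ 2 u)
    (hus : HasCompactSupport u) {c : ℝ} (hc : ∀ φ : E → E, IsTestField φ →
      ∫ x, u x * LinearMap.trace ℝ E (fderiv ℝ φ x) ∂μ ≤ c) {κ : ℝ} (hκ : 0 < κ) :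
    ∫ x, ‖fderiv ℝ u x‖ ∂μ ≤ c + κ * μ.real (tsupport (fderiv ℝ u)) := by
  have hd : ContDiff ℝ 1 (fderiv ℝ u) := hu.fderiv_right (by norm_num)
  have hds : HasCompactSupport (fderiv ℝ u) := hus.fderiv (𝕜 := ℝ)
  set S := tsupport (fderiv ℝ u)
  have hSm : MeasurableSet S := (isClosed_tsupport _).measurableSet
  set G : E → E := fun x => (InnerProductSpace.toDual ℝ E).symm (fderiv ℝ u x) with hG
  set φ : E → E := fun x => -softUnit κ (G x) with hφ
  have hφt : IsTestField φ :=
    { contDiff := ((contDiff_softUnit hκ).comp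
        ((InnerProductSpace.toDual ℝ E).symm.contDiff.comp hd)).neg
      hasCompactSupport := (hds.comp_left (g := fun A =>
        softUnit κ ((InnerProductSpace.toDual ℝ E).symm A)) (by simp [softUnit_zero])).neg
      norm_le_one := fun x => (norm_neg _).trans_le (norm_softUnit_le_one κ _) }
  have hpair : Integrable (fun x => -fderiv ℝ u x (φ x)) μ :=
    (hd.continuous.clm_apply hφt.contDiff.continuous).neg.integrable_of_hasCompactSupport
      (hφt.hasCompactSupport.mono fun x hx h0 => hx (by simp [h0]))
  have htest := hc φ hφt
  rw [integral_mul_trace_fderiv (hu.of_le (by norm_num)) hφt.contDiff hφt.hasCompactSupport,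
    ← integral_neg] at htest
  have hκS : Integrable (S.indicator fun _ => κ) μ :=
    (integrable_indicator_iff hSm).2 (integrableOn_const hds.measure_lt_top.ne)
  have hpt : ∀ x, ‖fderiv ℝ u x‖ ≤ -fderiv ℝ u x (φ x) + S.indicator (fun _ => κ) x := by
    intro x
    by_cases hx : x ∈ S
    · simpa [hx, hφ, hG] using norm_le_inner_softUnit_add hκ (G x)
    · simp [hx, image_eq_zero_of_notMem_tsupport hx]
  calc ∫ x, ‖fderiv ℝ u x‖ ∂μ
      ≤ ∫ x, (-fderiv ℝ u x (φ x) + S.indicator (fun _ => κ) x) ∂μ :=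
        integral_mono (hd.continuous.integrable_of_hasCompactSupport hds).norm (hpair.add hκS) hpt
    _ ≤ c + κ * μ.real S := by
        rw [integral_add hpair hκS, integral_indicator_const _ hSm, smul_eq_mul, mul_comm κ]
        exact add_le_add_left htest _

lemma lintegral_enorm_fderiv_le_of_forall_isTestField {u : E → ℝ} (hu : ContDiff ℝ 2 u)
    (hus : HasCompactSupport u) {c : ℝ} (hc : ∀ φ : E → E, IsTestField φ →
      ∫ x, u x * LinearMap.trace ℝ E (fderiv ℝ φ x) ∂μ ≤ c) :
    ∫⁻ x, ‖fderiv ℝ u x‖ₑ ∂μ ≤ ENNReal.ofReal c := by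
  have hint : Integrable (fderiv ℝ u) μ :=
    (hu.continuous_fderiv two_ne_zero).integrable_of_hasCompactSupport (hus.fderiv (𝕜 := ℝ))
  rw [← ofReal_integral_norm_eq_lintegral_enorm hint]
  refine ENNReal.ofReal_le_ofReal (le_of_tendsto_of_tendsto (b := 𝓝[>] (0 : ℝ))
    tendsto_const_nhds ?_ (eventually_mem_nhdsWithin.mono fun κ hκ =>
      integral_norm_fderiv_le_add_of_forall_isTestField hu hus hc hκ))
  refine (Continuous.tendsto' (by fun_prop) _ _ ?_).mono_left nhdsWithin_le_nhds
  rw [zero_mul, add_zero]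

end Divergence

end TestField

section Perimeter

lemma mem_perCand_iff {Ω : Set E3} {a : ℝ} :
    a ∈ perCand Ω ↔ ∃ φ, IsTestField φ ∧ a = ∫ x in Ω, divg φ x :=
  ⟨fun ⟨φ, h, h', h₁, ha⟩ => ⟨φ, ⟨h, h', h₁⟩, ha⟩,
    fun ⟨φ, hφ, ha⟩ => ⟨φ, hφ.contDiff, hφ.hasCompactSupport, hφ.norm_le_one, ha⟩⟩

lemma IsTestField.integrable_divg {φ : E3 → E3} (hφ : IsTestField φ) : Integrable (divg φ) :=
  (continuous_trace_fderiv hφ.contDiff).integrable_of_hasCompactSupport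
    (hasCompactSupport_trace_fderiv hφ.hasCompactSupport)

lemma divg_comp_add_right (φ : E3 → E3) (s x : E3) :
    divg (fun y => φ (y + s)) x = divg φ (x + s) := by
  simp only [divg, fderiv_comp_add_right]

lemma zero_mem_perCand (Ω : Set E3) : (0 : ℝ) ∈ perCand Ω :=
  mem_perCand_iff.2 ⟨fun _ => 0, ⟨contDiff_const, HasCompactSupport.zero, by simp⟩,
    by simp [divg]⟩

lemma per_nonneg (Ω : Set E3) : 0 ≤ per Ω :=
  Real.sSup_nonneg' ⟨0, zero_mem_perCand Ω, le_rfl⟩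

lemma integral_divg_le_per {Ω : Set E3} (hΩ : HasFinPer Ω) {φ : E3 → E3} (hφ : IsTestField φ) :
    ∫ x in Ω, divg φ x ≤ per Ω :=
  le_csSup hΩ (mem_perCand_iff.2 ⟨φ, hφ, rfl⟩)

lemma hasFinPer_and_per_le {Ω : Set E3} {c : ℝ}
    (h : ∀ φ : E3 → E3, IsTestField φ → ∫ x in Ω, divg φ x ≤ c) : HasFinPer Ω ∧ per Ω ≤ c := by
  have hc : ∀ a ∈ perCand Ω, a ≤ c := fun a ha => by
    obtain ⟨φ, hφ, rfl⟩ := mem_perCand_iff.1 ha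
    exact h φ hφ
  exact ⟨⟨c, hc⟩, csSup_le ⟨0, zero_mem_perCand Ω⟩ hc⟩

end Perimeter

/-! ### Mollified indicator functions -/

section Mollify

variable {E : Type*} [NormedAddCommGroup E] [InnerProductSpace ℝ E] [FiniteDimensional ℝ E]
  [MeasurableSpace E] [BorelSpace E]

/-- A sequence of smooth bump functions at the origin whose supports shrink to a point. -/
def shrinkingBump (E : Type*) [NormedAddCommGroup E] (n : ℕ) : ContDiffBump (0 : E) where
  rIn := 1 / (n + 1)
  rOut := 2 / (n + 1)
  rIn_pos := by positivity
  rIn_lt_rOut := by gcongr; norm_num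

/-- The normalized bump function used as the mollification kernel. -/
def mollifier (n : ℕ) : E → ℝ := (shrinkingBump E n).normed volume

lemma mollifier_nonneg (n : ℕ) (x : E) : 0 ≤ mollifier n x := (shrinkingBump E n).nonneg_normed x

lemma integrable_mollifier (n : ℕ) : Integrable (mollifier n : E → ℝ) :=
  (shrinkingBump E n).integrable_normed

lemma integral_mollifier (n : ℕ) : ∫ x : E, mollifier n x = 1 :=
  (shrinkingBump E n).integral_normed

/-- The mollification of the indicator function of a set. -/
def mollify (n : ℕ) (Ω : Set E) : E → ℝ :=
  convolution (mollifier n) (Ω.indicator 1) (ContinuousLinearMap.lsmul ℝ ℝ) volume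

variable {Ω : Set E}

lemma mollify_apply (n : ℕ) (Ω : Set E) (x : E) :
    mollify n Ω x = ∫ t, mollifier n t * Ω.indicator 1 (x - t) := by
  simp [mollify, convolution_def]

lemma mollify_nonneg (n : ℕ) (Ω : Set E) (x : E) : 0 ≤ mollify n Ω x := by
  rw [mollify_apply]
  exact integral_nonneg fun t => mul_nonneg (mollifier_nonneg n t)
    (indicator_nonneg (fun _ _ => zero_le_one) _)

lemma indicator_one_le_one {α : Type*} (s : Set α) (x : α) : s.indicator (1 : α → ℝ) x ≤ 1 :=
  indicator_apply_le' (fun _ => le_rfl) fun _ => zero_le_one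

lemma norm_indicator_one_le_one {α : Type*} (s : Set α) (x : α) :
    ‖s.indicator (1 : α → ℝ) x‖ ≤ 1 :=
  (norm_indicator_le_norm_self _ _).trans_eq norm_one

lemma indicator_one_mul_apply {α : Type*} (s : Set α) (f : α → ℝ) (x : α) :
    s.indicator 1 x * f x = s.indicator f x := by
  simp only [← indicator_mul_left, Pi.one_apply, one_mul]

lemma mollify_le_one (n : ℕ) (Ω : Set E) (x : E) : mollify n Ω x ≤ 1 := by
  rw [mollify_apply, ← integral_mollifier (E := E) n]
  exact integral_mono_of_nonneg (Eventually.of_forall fun t => mul_nonneg (mollifier_nonneg n t)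
    (indicator_nonneg (fun _ _ => zero_le_one) _)) (integrable_mollifier n)
    (Eventually.of_forall fun t => mul_le_of_le_one_right (mollifier_nonneg n t)
      (indicator_one_le_one _ _))

lemma integrable_indicator_one {α : Type*} [MeasurableSpace α] {μ : Measure α} {s : Set α}
    (hs : MeasurableSet s) (h : μ s ≠ ⊤) : Integrable (s.indicator (1 : α → ℝ)) μ :=
  (integrable_indicator_iff hs).2 (integrableOn_const h)

lemma contDiff_mollify (n : ℕ) (hΩ : MeasurableSet Ω) (hΩb : IsBounded Ω) :
    ContDiff ℝ 2 (mollify n Ω) :=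
  (shrinkingBump E n).hasCompactSupport_normed.contDiff_convolution_left _
    (shrinkingBump E n).contDiff_normed
    (integrable_indicator_one hΩ hΩb.measure_lt_top.ne).locallyIntegrable

lemma hasCompactSupport_mollify (n : ℕ) (hΩb : IsBounded Ω) :
    HasCompactSupport (mollify n Ω) :=
  (shrinkingBump E n).hasCompactSupport_normed.convolution _
    (HasCompactSupport.intro hΩb.isCompact_closure fun _ hx =>
      indicator_of_notMem (fun h => hx (subset_closure h)) _)

lemma ae_tendsto_mollify (hΩ : MeasurableSet Ω) (hΩb : IsBounded Ω) :
    ∀ᵐ x, Tendsto (fun n => mollify n Ω x) atTop (𝓝 (Ω.indicator 1 x)) := by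
  refine ContDiffBump.ae_convolution_tendsto_right_of_locallyIntegrable (K := 2)
    (φ := shrinkingBump E) ?_ (Eventually.of_forall fun n => ?_)
    (integrable_indicator_one hΩ hΩb.measure_lt_top.ne).locallyIntegrable
  · simpa [shrinkingBump, div_eq_mul_inv] using
      (tendsto_one_div_add_atTop_nhds_zero_nat (𝕜 := ℝ)).const_mul 2
  · simp [shrinkingBump, div_eq_mul_inv]

lemma lintegral_ofReal_mollify (n : ℕ) (hΩ : MeasurableSet Ω) (hΩb : IsBounded Ω) :
    ∫⁻ x, ENNReal.ofReal (mollify n Ω x) = volume Ω := by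
  have hint : Integrable (Ω.indicator (1 : E → ℝ)) :=
    integrable_indicator_one hΩ hΩb.measure_lt_top.ne
  rw [← ofReal_integral_eq_lintegral_ofReal (f := mollify n Ω)
    ((integrable_mollifier n).integrable_convolution _ hint)
    (Eventually.of_forall (mollify_nonneg n Ω)), mollify,
    integral_convolution _ (integrable_mollifier n) hint, integral_mollifier,
    integral_indicator_one hΩ]
  simp [hΩb.measure_lt_top.ne]

lemma integral_mollify_mul_le (n : ℕ) (hΩ : MeasurableSet Ω) {ψ : E → ℝ} (hψ : Integrable ψ)
    {c : ℝ} (hc : ∀ t, ∫ x in Ω, ψ (x + t) ≤ c) : ∫ x, mollify n Ω x * ψ x ≤ c := by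
  have hjoint : Integrable (fun p : E × E => mollifier n p.1 * Ω.indicator 1 (p.2 - p.1) * ψ p.2)
      (volume.prod volume) := by
    refine (((integrable_mollifier n).mul_prod hψ).bdd_mul (c := 1)
      ((measurable_one.indicator hΩ).comp
        (measurable_snd.sub measurable_fst)).aestronglyMeasurable
      (Eventually.of_forall fun p => norm_indicator_one_le_one Ω (p.2 - p.1))).congr
      (Eventually.of_forall fun p => ?_)
    simp only [Function.comp_apply, Pi.sub_apply]
    ring
  have hinner : ∀ t : E, ∫ x, mollifier n t * Ω.indicator 1 (x - t) * ψ x =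
      mollifier n t * ∫ x in Ω, ψ (x + t) := by
    intro t
    simp_rw [mul_assoc]
    rw [integral_const_mul, ← integral_indicator hΩ, ← integral_add_right_eq_self _ t]
    simp only [add_sub_cancel_right, indicator_one_mul_apply Ω fun x => ψ (x + t)]
  calc ∫ x, mollify n Ω x * ψ x
      = ∫ t, ∫ x, mollifier n t * Ω.indicator 1 (x - t) * ψ x := by
        simp_rw [mollify_apply, ← integral_mul_const]
        exact integral_integral_swap hjoint.swap
    _ ≤ ∫ t : E, mollifier n t * c := by
        refine integral_mono hjoint.integral_prod_left ((integrable_mollifier n).mul_const c)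
          fun t => ?_
        rw [hinner t]
        exact mul_le_mul_of_nonneg_left (hc t) (mollifier_nonneg n t)
    _ = c := by rw [integral_mul_const, integral_mollifier, one_mul]

end Mollify

lemma lintegral_enorm_fderiv_mollify_le (n : ℕ) {Ω : Set E3} (hΩ : MeasurableSet Ω)
    (hΩb : IsBounded Ω) (hΩf : HasFinPer Ω) :
    ∫⁻ x, ‖fderiv ℝ (mollify n Ω) x‖ₑ ≤ ENNReal.ofReal (per Ω) := by
  refine lintegral_enorm_fderiv_le_of_forall_isTestField (contDiff_mollify n hΩ hΩb)
    (hasCompactSupport_mollify n hΩb) fun φ hφ => ?_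
  refine integral_mollify_mul_le n hΩ hφ.integrable_divg fun t => ?_
  simp_rw [← divg_comp_add_right φ t]
  exact integral_divg_le_per hΩf (hφ.comp_add_right t)

/-! ### Averaged perimeter of translated intersections -/

section TranslatedInter

variable {E : Type*} [AddCommGroup E]

/-- `T ∩ (Ω - τ)`: the part of `Ω` seen through the window `T` translated by `τ`, moved back
to `T`. -/
def translatedInter (Ω T : Set E) (τ : E) : Set E := T ∩ (· + τ) ⁻¹' Ω

lemma measurableSet_translatedInter [MeasurableSpace E] [MeasurableAdd₂ E] {Ω T : Set E}
    (hΩ : MeasurableSet Ω) (hT : MeasurableSet T) (τ : E) :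
    MeasurableSet (translatedInter Ω T τ) :=
  hT.inter (hΩ.preimage (measurable_add_const τ))

lemma indicator_translatedInter (Ω T : Set E) (τ x : E) :
    (translatedInter Ω T τ).indicator (1 : E → ℝ) x =
      Ω.indicator 1 (x + τ) * T.indicator 1 x := by
  classical
  simp only [translatedInter, indicator_apply, mem_inter_iff, mem_preimage, Pi.one_apply]
  grind

end TranslatedInter

section GradMass

variable {E : Type*} [NormedAddCommGroup E] [InnerProductSpace ℝ E] {u v : E → ℝ}

lemma fderiv_translate_mul (hu : ContDiff ℝ 1 u) (hv : ContDiff ℝ 1 v) (τ x : E) :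
    fderiv ℝ (fun y => u (y + τ) * v y) x =
      u (x + τ) • fderiv ℝ v x + v x • fderiv ℝ u (x + τ) := by
  have hτ : DifferentiableAt ℝ (fun y => u (y + τ)) x :=
    (hu.differentiable one_ne_zero _).comp x (differentiableAt_id.add_const τ)
  rw [fderiv_fun_mul hτ (hv.differentiable one_ne_zero x), fderiv_comp_add_right]

variable [FiniteDimensional ℝ E] [MeasurableSpace E] [BorelSpace E]

/-- The total variation of the product of the translate `u (· + τ)` with `v`. -/
def gradMass (u v : E → ℝ) (τ : E) : ℝ≥0∞ :=
  ∫⁻ x, ‖fderiv ℝ (fun y => u (y + τ) * v y) x‖ₑ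

lemma measurable_gradMass (hu : ContDiff ℝ 1 u) (hv : ContDiff ℝ 1 v) :
    Measurable (gradMass u v) := by
  have hu' := hu.continuous_fderiv one_ne_zero
  have hv' := hv.continuous_fderiv one_ne_zero
  have huc := hu.continuous
  have hvc := hv.continuous
  refine Measurable.lintegral_prod_right'
    (f := fun p : E × E => ‖fderiv ℝ (fun y => u (y + p.1) * v y) p.2‖ₑ) ?_
  simp_rw [fderiv_translate_mul hu hv]
  exact Continuous.measurable (by fun_prop)

lemma lintegral_gradMass_le (hu : ContDiff ℝ 1 u) (hv : ContDiff ℝ 1 v) :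
    ∫⁻ τ, gradMass u v τ ≤ (∫⁻ x, ‖u x‖ₑ) * (∫⁻ x, ‖fderiv ℝ v x‖ₑ) +
      (∫⁻ x, ‖v x‖ₑ) * ∫⁻ x, ‖fderiv ℝ u x‖ₑ := by
  have hu' := hu.continuous_fderiv one_ne_zero
  have hv' := hv.continuous_fderiv one_ne_zero
  have huc := hu.continuous
  have hvc := hv.continuous
  have hu₂ : ∀ x, Measurable fun τ => ‖u (x + τ)‖ₑ := fun x =>
    (huc.comp (continuous_const_add x)).enorm.measurable
  have hu₂' : ∀ x, Measurable fun τ => ‖fderiv ℝ u (x + τ)‖ₑ := fun x =>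
    (hu'.comp (continuous_const_add x)).enorm.measurable
  have hjoint : Measurable fun p : E × E =>
      ‖u (p.2 + p.1)‖ₑ * ‖fderiv ℝ v p.2‖ₑ + ‖v p.2‖ₑ * ‖fderiv ℝ u (p.2 + p.1)‖ₑ := by
    have hadd : Continuous fun p : E × E => p.2 + p.1 := by fun_prop
    exact ((huc.comp hadd).enorm.measurable.mul (hv'.comp continuous_snd).enorm.measurable).add
      ((hvc.comp continuous_snd).enorm.measurable.mul (hu'.comp hadd).enorm.measurable)
  calc ∫⁻ τ, gradMass u v τ
      ≤ ∫⁻ τ, ∫⁻ x, (‖u (x + τ)‖ₑ * ‖fderiv ℝ v x‖ₑ + ‖v x‖ₑ * ‖fderiv ℝ u (x + τ)‖ₑ) := by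
        refine lintegral_mono fun τ => lintegral_mono fun x => ?_
        rw [fderiv_translate_mul hu hv, ← enorm_smul, ← enorm_smul]
        exact enorm_add_le (u (x + τ) • fderiv ℝ v x) (v x • fderiv ℝ u (x + τ))
    _ = ∫⁻ x, ((∫⁻ z, ‖u z‖ₑ) * ‖fderiv ℝ v x‖ₑ + ‖v x‖ₑ * ∫⁻ z, ‖fderiv ℝ u z‖ₑ) := by
        rw [lintegral_lintegral_swap hjoint.aemeasurable]
        refine lintegral_congr fun x => ?_
        rw [lintegral_add_left ((hu₂ x).mul_const _), lintegral_mul_const _ (hu₂ x),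
          lintegral_const_mul _ (hu₂' x),
          lintegral_add_left_eq_self (fun z => ‖u z‖ₑ) x,
          lintegral_add_left_eq_self (fun z => ‖fderiv ℝ u z‖ₑ) x]
    _ = _ := by
        rw [lintegral_add_left (Measurable.const_mul hv'.enorm.measurable _),
          lintegral_const_mul _ hv'.enorm.measurable, lintegral_mul_const _ hvc.enorm.measurable]

end GradMass

section AveragedPerimeter

variable {Ω T : Set E3}

lemma lintegral_gradMass_mollify_le (hΩ : MeasurableSet Ω) (hΩb : IsBounded Ω)
    (hΩf : HasFinPer Ω) (hT : MeasurableSet T) (hTb : IsBounded T) (hTf : HasFinPer T) (n : ℕ) :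
    ∫⁻ τ, gradMass (mollify n Ω) (mollify n T) τ ≤
      ENNReal.ofReal (vol Ω * per T + vol T * per Ω) := by
  have hmass : ∀ {S : Set E3}, MeasurableSet S → IsBounded S →
      ∫⁻ x, ‖mollify n S x‖ₑ = ENNReal.ofReal (vol S) := fun {S} hS hSb => by
    simp_rw [Real.enorm_of_nonneg (mollify_nonneg n S _)]
    rw [lintegral_ofReal_mollify n hS hSb, vol, ENNReal.ofReal_toReal hSb.measure_lt_top.ne]
  refine (lintegral_gradMass_le ((contDiff_mollify n hΩ hΩb).of_le (by norm_num))
    ((contDiff_mollify n hT hTb).of_le (by norm_num))).trans ?_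
  have hv : ∀ S : Set E3, 0 ≤ vol S := fun S => ENNReal.toReal_nonneg
  rw [hmass hΩ hΩb, hmass hT hTb, ENNReal.ofReal_add (mul_nonneg (hv _) (per_nonneg _))
    (mul_nonneg (hv _) (per_nonneg _)), ENNReal.ofReal_mul (hv _), ENNReal.ofReal_mul (hv _)]
  gcongr
  · exact lintegral_enorm_fderiv_mollify_le n hT hTb hTf
  · exact lintegral_enorm_fderiv_mollify_le n hΩ hΩb hΩf

lemma tendsto_integral_mollify_mul (hΩ : MeasurableSet Ω) (hΩb : IsBounded Ω)
    (hT : MeasurableSet T) (hTb : IsBounded T) (τ : E3) {ψ : E3 → ℝ} (hψ : Integrable ψ) :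
    Tendsto (fun n => ∫ x, mollify n Ω (x + τ) * mollify n T x * ψ x) atTop
      (𝓝 (∫ x in translatedInter Ω T τ, ψ x)) := by
  rw [← integral_indicator (measurableSet_translatedInter hΩ hT τ)]
  refine tendsto_integral_of_dominated_convergence (fun x => ‖ψ x‖) (fun n => ?_) hψ.norm
    (fun n => Eventually.of_forall fun x => ?_) ?_
  · exact AEStronglyMeasurable.mul
      (((contDiff_mollify n hΩ hΩb).continuous.comp (continuous_add_const τ)).mul
        (contDiff_mollify n hT hTb).continuous).aestronglyMeasurable hψ.aestronglyMeasurable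
  · have h₀ := mul_nonneg (mollify_nonneg n Ω (x + τ)) (mollify_nonneg n T x)
    rw [norm_mul, Real.norm_of_nonneg h₀]
    exact mul_le_of_le_one_left (norm_nonneg _)
      (mul_le_one₀ (mollify_le_one n Ω _) (mollify_nonneg _ _ _) (mollify_le_one n T _))
  · have hτ : ∀ᵐ x : E3, Tendsto (fun n => mollify n Ω (x + τ)) atTop
        (𝓝 (Ω.indicator 1 (x + τ))) :=
      (measurePreserving_add_right volume τ).quasiMeasurePreserving.ae (ae_tendsto_mollify hΩ hΩb)
    filter_upwards [hτ, ae_tendsto_mollify hT hTb] with x hxΩ hxT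
    convert (hxΩ.mul hxT).mul_const (ψ x) using 2
    rw [← indicator_translatedInter, indicator_one_mul_apply]

/-- Lower semicontinuity of the perimeter under mollification turns the averaged bound for smooth
functions into one for sets. The majorant `A` is the lower limit of the total variations of the
mollified products; it takes the place of the perimeter, whose measurability in `τ` is not
immediate. -/
lemma exists_measurable_perBound_translatedInter (hΩ : MeasurableSet Ω) (hΩb : IsBounded Ω)
    (hΩf : HasFinPer Ω) (hT : MeasurableSet T) (hTb : IsBounded T) (hTf : HasFinPer T) :
    ∃ A : E3 → ℝ≥0∞, Measurable A ∧
      ∫⁻ τ, A τ ≤ ENNReal.ofReal (vol Ω * per T + vol T * per Ω) ∧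
      ∀ τ, A τ < ⊤ →
        HasFinPer (translatedInter Ω T τ) ∧ per (translatedInter Ω T τ) ≤ (A τ).toReal := by
  have hu : ∀ n, ContDiff ℝ 1 (mollify n Ω) := fun n =>
    (contDiff_mollify n hΩ hΩb).of_le (by norm_num)
  have hv : ∀ n, ContDiff ℝ 1 (mollify n T) := fun n =>
    (contDiff_mollify n hT hTb).of_le (by norm_num)
  have hmeas : ∀ n, Measurable (gradMass (mollify n Ω) (mollify n T)) := fun n =>
    measurable_gradMass (hu n) (hv n)
  refine ⟨fun τ => liminf (fun n => gradMass (mollify n Ω) (mollify n T) τ) atTop,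
    Measurable.liminf hmeas, ?_, fun τ hτ => hasFinPer_and_per_le fun φ hφ => ?_⟩
  · refine (lintegral_liminf_le hmeas).trans ((liminf_le_liminf (Eventually.of_forall
      (lintegral_gradMass_mollify_le hΩ hΩb hΩf hT hTb hTf))).trans_eq (liminf_const _))
  · rw [← ENNReal.ofReal_le_iff_le_toReal hτ.ne]
    have hlim := (ENNReal.continuous_ofReal.tendsto _).comp
      (tendsto_integral_mollify_mul hΩ hΩb hT hTb τ hφ.integrable_divg)
    rw [← hlim.liminf_eq]
    exact liminf_le_liminf (Eventually.of_forall fun n => ofReal_integral_mul_trace_fderiv_le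
      (((hu n).comp (contDiff_id.add contDiff_const)).mul (hv n)) hφ)

lemma exists_integrable_perBound_translatedInter (hΩ : MeasurableSet Ω) (hΩb : IsBounded Ω)
    (hΩf : HasFinPer Ω) (hT : MeasurableSet T) (hTb : IsBounded T) (hTf : HasFinPer T) :
    ∃ a : E3 → ℝ, Integrable a ∧ 0 ≤ a ∧ ∫ τ, a τ ≤ vol Ω * per T + vol T * per Ω ∧
      ∀ᵐ τ, HasFinPer (translatedInter Ω T τ) ∧ per (translatedInter Ω T τ) ≤ a τ := by
  obtain ⟨A, hAm, hAint, hA⟩ :=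
    exists_measurable_perBound_translatedInter hΩ hΩb hΩf hT hTb hTf
  have hAtop : ∫⁻ τ, A τ ≠ ⊤ := ne_top_of_le_ne_top ENNReal.ofReal_ne_top hAint
  have hAlt : ∀ᵐ τ, A τ < ⊤ := ae_lt_top hAm hAtop
  refine ⟨fun τ => (A τ).toReal, integrable_toReal_of_lintegral_ne_top hAm.aemeasurable hAtop,
    fun τ => ENNReal.toReal_nonneg, ?_, hAlt.mono hA⟩
  rw [integral_toReal hAm.aemeasurable hAlt]
  exact ENNReal.toReal_le_of_le_ofReal (add_nonneg
    (mul_nonneg ENNReal.toReal_nonneg (per_nonneg T))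
    (mul_nonneg ENNReal.toReal_nonneg (per_nonneg Ω))) hAint

end AveragedPerimeter

/-! ### Perimeter of convex sets -/

lemma abs_setIntegral_sub_setIntegral_le {α : Type*} [MeasurableSpace α] {μ : Measure α}
    {ψ : α → ℝ} (hψ : Integrable ψ μ) (hψ₁ : ∀ x, |ψ x| ≤ 1)
    {A B : Set α} (hA : MeasurableSet A) (hB : MeasurableSet B) (hμA : μ A ≠ ⊤) (hμB : μ B ≠ ⊤) :
    |∫ x in A, ψ x ∂μ - ∫ x in B, ψ x ∂μ| ≤ μ.real (A \ B) + μ.real (B \ A) := by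
  have hle : ∀ {S : Set α}, μ S ≠ ⊤ → |∫ x in S, ψ x ∂μ| ≤ μ.real S := fun hS => by
    simpa using norm_setIntegral_le_of_norm_le_const (f := ψ) (C := 1) hS.lt_top fun x _ => hψ₁ x
  have hAB := hle (measure_ne_top_of_subset (sdiff_subset (t := B)) hμA)
  have hBA := hle (measure_ne_top_of_subset (sdiff_subset (t := A)) hμB)
  rw [← integral_inter_add_sdiff (s := A) hB hψ.integrableOn,
    ← integral_inter_add_sdiff (s := B) hA hψ.integrableOn, inter_comm B A,
    add_sub_add_left_eq_sub]
  exact (abs_sub _ _).trans (add_le_add hAB hBA)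

section Convex

variable {E : Type*} [NormedAddCommGroup E] [NormedSpace ℝ E] {K : Set E}

lemma homothety_image_subset_inter_preimage_add (hK : Convex ℝ K) {c : E} {r : ℝ}
    (hr : 0 < r) (hc : closedBall c r ⊆ K) {z : E} (hz : ‖z‖ / r ≤ 1) :
    AffineMap.homothety c (1 - ‖z‖ / r) '' K ⊆ K ∩ (· + z) ⁻¹' K := by
  rintro _ ⟨y, hy, rfl⟩
  set s := ‖z‖ / r
  have hs : 0 ≤ s := by positivity
  have hcomb : ∀ p ∈ K, (1 - s) • y + s • p ∈ K := fun p hp =>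
    hK hy hp (sub_nonneg.2 hz) hs (sub_add_cancel 1 s)
  have hhom : AffineMap.homothety c (1 - s) y = (1 - s) • y + s • c := by
    rw [AffineMap.homothety_apply, vsub_eq_sub, vadd_eq_add]
    module
  rw [hhom]
  refine ⟨hcomb c (hc (mem_closedBall_self hr.le)), ?_⟩
  have hshift : (1 - s) • y + s • c + z = (1 - s) • y + s • (c + (r / ‖z‖) • z) := by
    rcases eq_or_ne z 0 with rfl | hz0
    · simp
    · have : s * (r / ‖z‖) = 1 := by
        have := norm_ne_zero_iff.2 hz0
        simp only [s]
        field_simp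
      rw [smul_add, smul_smul, this, one_smul, add_assoc]
  rw [mem_preimage, hshift]
  refine hcomb _ (hc ?_)
  rw [mem_closedBall, dist_self_add_left, norm_smul, norm_div, norm_norm, Real.norm_of_nonneg hr.le,
    div_mul_comm]
  exact mul_le_of_le_one_left hr.le (div_self_le_one _)

variable [FiniteDimensional ℝ E] [MeasurableSpace E] [BorelSpace E] {μ : Measure E}
  [μ.IsAddHaarMeasure]

open Module (finrank)

lemma measureReal_sdiff_preimage_add_le (hK : Convex ℝ K) (hm : MeasurableSet K) (hμ : μ K ≠ ⊤)
    {c : E} {r : ℝ} (hr : 0 < r) (hc : closedBall c r ⊆ K) (z : E) :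
    μ.real (K \ (· + z) ⁻¹' K) ≤ finrank ℝ E * μ.real K / r * ‖z‖ := by
  have hv : 0 ≤ μ.real K := measureReal_nonneg
  set s := ‖z‖ / r with hs
  have hs₀ : 0 ≤ s := by positivity
  have hrhs : finrank ℝ E * μ.real K / r * ‖z‖ = finrank ℝ E * s * μ.real K := by rw [hs]; ring
  rw [hrhs]
  have hsplit : μ.real (K ∩ (· + z) ⁻¹' K) + μ.real (K \ (· + z) ⁻¹' K) = μ.real K :=
    measureReal_inter_add_sdiff (hm.preimage (measurable_add_const z)) hμ
  rcases le_or_gt s 1 with hs₁ | hs₁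
  · have hhom : (1 - s) ^ finrank ℝ E * μ.real K ≤ μ.real (K ∩ (· + z) ⁻¹' K) := by
      have h := measureReal_mono (μ := μ)
        (homothety_image_subset_inter_preimage_add hK hr hc hs₁)
        (measure_ne_top_of_subset inter_subset_left hμ)
      rwa [measureReal_def, Measure.addHaar_image_homothety, ENNReal.toReal_mul,
        ENNReal.toReal_ofReal (abs_nonneg _), abs_of_nonneg (pow_nonneg (sub_nonneg.2 hs₁) _)] at h
    have hbern : 1 + finrank ℝ E * -s ≤ (1 + -s) ^ finrank ℝ E :=
      one_add_mul_le_pow (by linarith) _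
    rw [← sub_eq_add_neg] at hbern
    nlinarith
  · have hz : z ≠ 0 := fun h => by norm_num [hs, h] at hs₁
    have : Nontrivial E := ⟨z, 0, hz⟩
    have hd : (1 : ℝ) ≤ finrank ℝ E := by exact_mod_cast Module.finrank_pos (R := ℝ) (M := E)
    have : 0 ≤ μ.real (K ∩ (· + z) ⁻¹' K) := measureReal_nonneg
    nlinarith [mul_le_mul hd hs₁.le zero_le_one (zero_le_one.trans hd)]

lemma abs_setIntegral_comp_add_sub_le (hK : Convex ℝ K) (hm : MeasurableSet K) (hμ : μ K ≠ ⊤)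
    {c : E} {r : ℝ} (hr : 0 < r) (hc : closedBall c r ⊆ K) {ψ : E → ℝ} (hψ : Integrable ψ μ)
    (hψ₁ : ∀ x, |ψ x| ≤ 1) (z : E) :
    |∫ x in K, ψ (x + z) ∂μ - ∫ x in K, ψ x ∂μ| ≤ 2 * finrank ℝ E * μ.real K / r * ‖z‖ := by
  set A := (· + -z) ⁻¹' K with hA
  have hAm : MeasurableSet A := hm.preimage (measurable_add_const _)
  have hpre : (· + z) ⁻¹' A = K := by ext x; simp [hA]
  have hAK : μ.real (A \ K) = μ.real (K \ (· + z) ⁻¹' K) := by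
    have hpre' : (· + z) ⁻¹' (A \ K) = K \ (· + z) ⁻¹' K := by rw [preimage_sdiff, hpre]
    rw [← hpre', measureReal_def, measureReal_def, measure_preimage_add_right]
  have hμA : μ A ≠ ⊤ := by rwa [hA, measure_preimage_add_right]
  have hint : ∫ x in K, ψ (x + z) ∂μ = ∫ x in A, ψ x ∂μ := by
    rw [← hpre]
    exact (measurePreserving_add_right μ z).setIntegral_preimage_emb
      (measurableEmbedding_addRight z) ψ A
  rw [hint]
  refine (abs_setIntegral_sub_setIntegral_le hψ hψ₁ hAm hm hμA hμ).trans ?_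
  have h₁ := measureReal_sdiff_preimage_add_le (μ := μ) hK hm hμ hr hc z
  have h₂ := measureReal_sdiff_preimage_add_le (μ := μ) hK hm hμ hr hc (-z)
  rw [norm_neg] at h₂
  rw [hAK]
  calc _ ≤ _ := add_le_add h₁ h₂
    _ = _ := by ring

lemma setIntegral_fderiv_apply_le (hK : Convex ℝ K) (hm : MeasurableSet K) (hμ : μ K ≠ ⊤)
    {c : E} {r : ℝ} (hr : 0 < r) (hc : closedBall c r ⊆ K) {ψ : E → ℝ} (hψ : ContDiff ℝ 1 ψ)
    (hψs : HasCompactSupport ψ) (hψ₁ : ∀ x, |ψ x| ≤ 1) (e : E) :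
    ∫ x in K, fderiv ℝ ψ x e ∂μ ≤ 2 * finrank ℝ E * μ.real K / r * ‖e‖ := by
  have hψi : Integrable ψ μ := hψ.continuous.integrable_of_hasCompactSupport hψs
  have hcont := hψ.continuous_fderiv one_ne_zero
  obtain ⟨C, hC⟩ := (hψs.fderiv (𝕜 := ℝ)).exists_bound_of_continuous hcont
  have hderiv := hasDerivAt_integral_of_dominated_loc_of_deriv_le (μ := μ.restrict K)
    (F := fun (t : ℝ) x => ψ (x + t • e)) (F' := fun t x => fderiv ℝ ψ (x + t • e) e)
    (x₀ := (0 : ℝ)) (s := univ) (bound := fun _ => C * ‖e‖) Filter.univ_mem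
    (Eventually.of_forall fun t =>
      (hψ.continuous.comp (continuous_add_const _)).aestronglyMeasurable)
    (by simpa using hψi.restrict)
    (((hcont.comp (continuous_add_const _)).clm_apply continuous_const).aestronglyMeasurable)
    (Eventually.of_forall fun x t _ =>
      (ContinuousLinearMap.le_opNorm _ _).trans (by gcongr; exact hC _))
    (integrableOn_const hμ)
    (Eventually.of_forall fun x t _ => by
      have hline : HasDerivAt (fun t : ℝ => x + t • e) e t := by
        simpa using ((hasDerivAt_id t).smul_const e).const_add x
      exact (hψ.differentiable one_ne_zero _).hasFDerivAt.comp_hasDerivAt t hline)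
  simp only [zero_smul, add_zero] at hderiv
  refine (le_abs_self _).trans <|
    hderiv.2.le_of_lip' (by positivity) (Eventually.of_forall fun t => ?_)
  have hshift := abs_setIntegral_comp_add_sub_le hK hm hμ hr hc hψi hψ₁ (t • e)
  rw [norm_smul, ← mul_assoc] at hshift
  simpa [mul_right_comm] using hshift

end Convex

lemma setIntegral_trace_fderiv_le {E : Type*} [NormedAddCommGroup E] [InnerProductSpace ℝ E]
    [FiniteDimensional ℝ E] [MeasurableSpace E] [BorelSpace E] {μ : Measure E}
    [μ.IsAddHaarMeasure] {K : Set E} (hK : Convex ℝ K) (hm : MeasurableSet K) (hμ : μ K ≠ ⊤)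
    {c : E} {r : ℝ} (hr : 0 < r) (hc : closedBall c r ⊆ K) {φ : E → E} (hφ : IsTestField φ) :
    ∫ x in K, LinearMap.trace ℝ E (fderiv ℝ φ x) ∂μ ≤
      2 * (Module.finrank ℝ E : ℝ) ^ 2 * μ.real K / r := by
  set b := stdOrthonormalBasis ℝ E
  have hψ : ∀ i, ContDiff ℝ 1 fun y => inner ℝ (b i) (φ y) := fun i =>
    contDiff_const.inner ℝ hφ.contDiff
  have hψs : ∀ i, HasCompactSupport fun y => inner ℝ (b i) (φ y) := fun i =>
    hφ.hasCompactSupport.comp_left (g := fun z => inner ℝ (b i) z) (inner_zero_right _)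
  have hint : ∀ i, Integrable (fun x => fderiv ℝ (fun y => inner ℝ (b i) (φ y)) x (b i)) μ :=
    fun i => (((hψ i).continuous_fderiv one_ne_zero).clm_apply
      continuous_const).integrable_of_hasCompactSupport ((hψs i).fderiv_apply (𝕜 := ℝ) _)
  simp_rw [trace_fderiv_eq_sum b (hφ.contDiff.differentiable one_ne_zero _)]
  rw [integral_finsetSum _ fun i _ => (hint i).integrableOn]
  calc _ ≤ ∑ i, 2 * (Module.finrank ℝ E : ℝ) * μ.real K / r * ‖b i‖ :=
        Finset.sum_le_sum fun i _ => setIntegral_fderiv_apply_le hK hm hμ hr hc (hψ i) (hψs i)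
          (hφ.abs_inner_le (b.norm_eq_one i)) (b i)
    _ = _ := by
        simp only [b.norm_eq_one, mul_one, Finset.sum_const, Finset.card_univ, Fintype.card_fin,
          nsmul_eq_mul]
        ring

lemma hasFinPer_and_per_le_of_convex {K : Set E3} (hK : Convex ℝ K) (hm : MeasurableSet K)
    (hKb : IsBounded K) {c : E3} {r : ℝ} (hr : 0 < r) (hc : closedBall c r ⊆ K) :
    HasFinPer K ∧ per K ≤ 18 * vol K / r := by
  refine hasFinPer_and_per_le fun φ hφ =>
    (setIntegral_trace_fderiv_le hK hm hKb.measure_lt_top.ne hr hc hφ).trans_eq ?_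
  rw [finrank_euclideanSpace_fin, vol, measureReal_def]
  norm_num

/-! ### Mixtures of kernels -/

/-- `K` is a mixture of the nonnegative kernels `k t`, with mixing measure `ν`: for `μ`-almost
every `y` the number `K y` is the convergent integral of `k t y`. Quadratic forms with kernel `K`
are then averages of those with kernel `k t`. -/
structure IsMixture {T Y : Type*} [MeasurableSpace T] [MeasurableSpace Y] (ν : Measure T)
    (μ : Measure Y) (k : T → Y → ℝ) (K : Y → ℝ) : Prop where
  measurable : Measurable (Function.uncurry k)
  nonneg : ∀ t y, 0 ≤ k t y
  ae_integrable : ∀ᵐ y ∂μ, Integrable (k · y) ν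
  ae_integral_eq : ∀ᵐ y ∂μ, ∫ t, k t y ∂ν = K y

namespace IsMixture

variable {T Y : Type*} [MeasurableSpace T] [MeasurableSpace Y] {ν : Measure T} {μ : Measure Y}
  {k : T → Y → ℝ} {K g : Y → ℝ}

lemma of_lintegral_eq (hk : Measurable (Function.uncurry k)) (hk₀ : ∀ t y, 0 ≤ k t y)
    (hK : ∀ y, 0 ≤ K y) (h : ∀ᵐ y ∂μ, ∫⁻ t, ENNReal.ofReal (k t y) ∂ν = ENNReal.ofReal (K y)) :
    IsMixture ν μ k K where
  measurable := hk
  nonneg := hk₀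
  ae_integrable := by
    filter_upwards [h] with y hy
    refine (lintegral_ofReal_ne_top_iff_integrable hk.of_uncurry_right.aestronglyMeasurable
      (Eventually.of_forall (hk₀ · y))).1 ?_
    exact hy ▸ ENNReal.ofReal_ne_top
  ae_integral_eq := by
    filter_upwards [h] with y hy
    rw [integral_eq_lintegral_of_nonneg_ae (Eventually.of_forall (hk₀ · y))
      hk.of_uncurry_right.aestronglyMeasurable, hy, ENNReal.toReal_ofReal (hK y)]

lemma of_le [IsFiniteMeasure ν] {B : Y → ℝ} (hk : Measurable (Function.uncurry k))
    (hk₀ : ∀ t y, 0 ≤ k t y) (hkB : ∀ t y, k t y ≤ B y) :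
    IsMixture ν μ k fun y => ∫ t, k t y ∂ν where
  measurable := hk
  nonneg := hk₀
  ae_integrable := Eventually.of_forall fun y =>
    Integrable.of_bound hk.of_uncurry_right.aestronglyMeasurable (B y)
      (Eventually.of_forall fun t => by rw [Real.norm_of_nonneg (hk₀ t y)]; exact hkB t y)
  ae_integral_eq := Eventually.of_forall fun _ => rfl

variable [SFinite ν] [SFinite μ]

lemma integrable_prod_mul (h : IsMixture ν μ k K) (hg : Measurable g)
    (hgK : Integrable (fun y => g y * K y) μ) :
    Integrable (fun q : T × Y => g q.2 * k q.1 q.2) (ν.prod μ) := by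
  have hmeas : Measurable fun q : T × Y => g q.2 * k q.1 q.2 :=
    (hg.comp measurable_snd).mul h.measurable
  rw [integrable_prod_iff' hmeas.aestronglyMeasurable]
  refine ⟨h.ae_integrable.mono fun y hy => hy.const_mul (g y), hgK.norm.congr ?_⟩
  filter_upwards [h.ae_integral_eq] with y hy
  have hKy : 0 ≤ K y := hy ▸ integral_nonneg (h.nonneg · y)
  simp only [norm_mul, Real.norm_of_nonneg (h.nonneg _ y), Real.norm_of_nonneg hKy,
    integral_const_mul, hy]

lemma integrable_integral_mul (h : IsMixture ν μ k K) (hg : Measurable g)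
    (hgK : Integrable (fun y => g y * K y) μ) :
    Integrable (fun t => ∫ y, g y * k t y ∂μ) ν :=
  (h.integrable_prod_mul hg hgK).integral_prod_left

lemma integral_mul_eq (h : IsMixture ν μ k K) (hg : Measurable g)
    (hgK : Integrable (fun y => g y * K y) μ) :
    ∫ y, g y * K y ∂μ = ∫ t, ∫ y, g y * k t y ∂μ ∂ν := by
  rw [integral_integral_swap (f := fun t y => g y * k t y) (h.integrable_prod_mul hg hgK)]
  refine integral_congr_ae ?_
  filter_upwards [h.ae_integral_eq] with y hy
  rw [integral_const_mul, hy]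

lemma integral_mul_nonneg (h : IsMixture ν μ k K) (hg : Measurable g)
    (hgK : Integrable (fun y => g y * K y) μ) (hk : ∀ t, 0 ≤ ∫ y, g y * k t y ∂μ) :
    0 ≤ ∫ y, g y * K y ∂μ :=
  h.integral_mul_eq hg hgK ▸ integral_nonneg hk

lemma exists_integral_mul_le [IsProbabilityMeasure ν] (h : IsMixture ν μ k K) (hg : Measurable g)
    (hgK : Integrable (fun y => g y * K y) μ) :
    ∃ t, ∫ y, g y * K y ∂μ ≤ ∫ y, g y * k t y ∂μ := by
  rw [h.integral_mul_eq hg hgK]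
  exact exists_integral_le (h.integrable_integral_mul hg hgK)

end IsMixture

/-! ### Kernels dominated by the Coulomb kernel -/

lemma integrableOn_inv_norm_ball {E : Type*} [NormedAddCommGroup E] [NormedSpace ℝ E]
    [FiniteDimensional ℝ E] [MeasurableSpace E] [BorelSpace E] (μ : Measure E)
    [μ.IsAddHaarMeasure] (hE : 1 < Module.finrank ℝ E) (R : ℝ) :
    IntegrableOn (fun w : E => ‖w‖⁻¹) (ball 0 R) μ := by
  have hloc : LocallyIntegrable (fun w : E => ‖w‖⁻¹) μ :=
    locallyIntegrable_of_norm_le_rpow (C := 1) (α := 1) (by lia) (by exact_mod_cast hE)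
      (Eventually.of_forall fun x => by rw [Real.rpow_neg_one, one_mul, norm_inv, norm_norm])
      (by fun_prop)
  exact (hloc.integrableOn_isCompact (isCompact_closedBall 0 R)).mono_set ball_subset_closedBall

/-- Charge densities: measurable functions with values in `[-1, 1]` and bounded support. -/
structure IsCharge (f : E3 → ℝ) : Prop where
  measurable : Measurable f
  abs_le_one : ∀ x, |f x| ≤ 1
  isBounded_support : IsBounded (Function.support f)

lemma IsCharge.integrable {f : E3 → ℝ} (hf : IsCharge f) : Integrable f := by
  refine (integrableOn_iff_integrable_of_support_subset (s := Function.support f)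
    Subset.rfl).1 ?_
  exact Measure.integrableOn_of_bounded (M := 1) hf.isBounded_support.measure_lt_top.ne
    hf.measurable.aestronglyMeasurable (Eventually.of_forall hf.abs_le_one)

lemma IsCharge.measurable_mul {f : E3 → ℝ} (hf : IsCharge f) :
    Measurable fun p : E3 × E3 => f p.1 * f p.2 :=
  (hf.measurable.comp measurable_fst).mul (hf.measurable.comp measurable_snd)

lemma IsCharge.mul_indicator {f : E3 → ℝ} (hf : IsCharge f) {s : Set E3} (hs : MeasurableSet s) :
    IsCharge fun x => f x * s.indicator 1 x where
  measurable := hf.measurable.mul (measurable_one.indicator hs)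
  abs_le_one x := by
    rw [abs_mul]
    exact mul_le_one₀ (hf.abs_le_one x) (abs_nonneg _) (norm_indicator_one_le_one s x)
  isBounded_support := hf.isBounded_support.subset fun _ hx => left_ne_zero_of_mul hx

lemma IsCharge.integrable_mul_kernel {f : E3 → ℝ} (hf : IsCharge f) {k : E3 × E3 → ℝ}
    (hk : Measurable k) (hk_le : ∀ p, |k p| ≤ ‖p.1 - p.2‖⁻¹) :
    Integrable fun p : E3 × E3 => f p.1 * f p.2 * k p := by
  obtain ⟨R, hR⟩ := hf.isBounded_support.subset_ball 0
  have hdim : 1 < Module.finrank ℝ E3 := by rw [finrank_euclideanSpace_fin]; norm_num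
  have hconv := hf.integrable.convolution_integrand (ContinuousLinearMap.mul ℝ ℝ)
    ((integrable_indicator_iff measurableSet_ball).2
      (integrableOn_inv_norm_ball volume hdim (2 * R)))
  refine hconv.mono (hf.measurable_mul.mul hk).aestronglyMeasurable
    (Eventually.of_forall fun p => ?_)
  rcases eq_or_ne (f p.1 * f p.2) 0 with h0 | h0
  · rw [h0, zero_mul, norm_zero]
    exact norm_nonneg _
  have hp₁ := mem_ball_zero_iff.1 (hR (left_ne_zero_of_mul h0))
  have hp₂ := mem_ball_zero_iff.1 (hR (right_ne_zero_of_mul h0))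
  have hsub : p.1 - p.2 ∈ ball (0 : E3) (2 * R) := by
    rw [mem_ball_zero_iff]
    linarith [norm_sub_le p.1 p.2]
  rw [ContinuousLinearMap.mul_apply', indicator_of_mem hsub, norm_mul, norm_mul, norm_mul,
    norm_inv, norm_norm]
  gcongr
  · exact mul_le_of_le_one_left (norm_nonneg _) (hf.abs_le_one p.1)
  · exact hk_le p

lemma IsCharge.integrable_mul_inv_norm_sub {f : E3 → ℝ} (hf : IsCharge f) :
    Integrable fun p : E3 × E3 => f p.1 * f p.2 * ‖p.1 - p.2‖⁻¹ :=
  hf.integrable_mul_kernel (by fun_prop) fun p => by rw [abs_inv, abs_norm]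

/-- The Coulomb form, which is twice the electrostatic self-energy of the charge density `f`. -/
def coulombForm (f : E3 → ℝ) : ℝ := ∫ p : E3 × E3, f p.1 * f p.2 * ‖p.1 - p.2‖⁻¹

/-! ### Slab decomposition of the Graf–Schenker kernel -/

lemma measurePreserving_coords : MeasurePreserving fun v : E3 => (v 0, v 1, v 2) :=
  ((MeasurePreserving.id volume).prod (volume_preserving_piFinTwo fun _ => ℝ)).comp
    ((volume_preserving_piFinSuccAbove (fun _ => ℝ) 0).comp (PiLp.volume_preserving_ofLp (Fin 3)))

lemma image_sqrt_sq_add_sq_Ioi (t : ℝ) : (fun r => √(t ^ 2 + r ^ 2)) '' Ioi 0 = Ioi |t| := by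
  ext s
  constructor
  · rintro ⟨r, hr, rfl⟩
    exact Real.lt_sqrt_of_sq_lt (by rw [sq_abs]; linarith [pow_pos (mem_Ioi.1 hr) 2])
  · intro hs
    have hs' : 0 < s ^ 2 - t ^ 2 := sub_pos.2 (sq_lt_sq.2 (lt_of_lt_of_le hs (le_abs_self s)))
    refine ⟨√(s ^ 2 - t ^ 2), Real.sqrt_pos.2 hs', ?_⟩
    simp only [Real.sq_sqrt hs'.le, add_sub_cancel]
    exact Real.sqrt_sq ((abs_nonneg t).trans (le_of_lt hs))

lemma lintegral_comp_sqrt_sq_add_sq (t : ℝ) (H : ℝ → ℝ≥0∞) :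
    ∫⁻ r in Ioi 0, ENNReal.ofReal r * H √(t ^ 2 + r ^ 2) =
      ∫⁻ s in Ioi |t|, ENNReal.ofReal s * H s := by
  have hpos : ∀ r ∈ Ioi (0 : ℝ), 0 < t ^ 2 + r ^ 2 := fun r hr =>
    add_pos_of_nonneg_of_pos (sq_nonneg t) (pow_pos hr 2)
  have hderiv : ∀ r ∈ Ioi (0 : ℝ), HasDerivWithinAt (fun r => √(t ^ 2 + r ^ 2))
      (r / √(t ^ 2 + r ^ 2)) (Ioi 0) r := fun r hr => by
    have h := ((hasDerivAt_pow 2 r).const_add (t ^ 2)).sqrt (hpos r hr).ne'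
    simpa only [Nat.cast_ofNat, Nat.add_one_sub_one, pow_one,
      mul_div_mul_left _ _ (two_ne_zero' ℝ)] using h.hasDerivWithinAt
  have hinj : InjOn (fun r => √(t ^ 2 + r ^ 2)) (Ioi 0) := fun r hr r' hr' h => by
    have hsq := (Real.sqrt_inj (hpos r hr).le (hpos r' hr').le).1 h
    exact (pow_left_inj₀ (le_of_lt hr) (le_of_lt hr') two_ne_zero).1 (add_left_cancel hsq)
  rw [← image_sqrt_sq_add_sq_Ioi, lintegral_image_eq_lintegral_abs_deriv_mul measurableSet_Ioi
    hderiv hinj]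
  refine setLIntegral_congr_fun measurableSet_Ioi fun r hr => ?_
  have hs := Real.sqrt_pos.2 (hpos r hr)
  rw [← mul_assoc, ← ENNReal.ofReal_mul (abs_nonneg _),
    abs_of_pos (div_pos hr hs), div_mul_cancel₀ _ hs.ne']

lemma lintegral_prod_comp_sqrt (t : ℝ) {H : ℝ → ℝ≥0∞} (hH : Measurable H) :
    ∫⁻ p : ℝ × ℝ, H √(t ^ 2 + (p.1 ^ 2 + p.2 ^ 2)) =
      ENNReal.ofReal (2 * Real.pi) * ∫⁻ s in Ioi |t|, ENNReal.ofReal s * H s := by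
  have hpolar : ∀ p : ℝ × ℝ, (polarCoord.symm p).1 ^ 2 + (polarCoord.symm p).2 ^ 2 = p.1 ^ 2 :=
    fun p => by
      simp only [polarCoord_symm_apply, mul_pow, ← mul_add, Real.cos_sq_add_sin_sq, mul_one]
  rw [← lintegral_comp_polarCoord_symm, polarCoord_target, Measure.volume_eq_prod,
    ← Measure.prod_restrict]
  simp only [hpolar, smul_eq_mul]
  rw [lintegral_prod _ (by fun_prop)]
  simp only [lintegral_const, Measure.restrict_apply_univ, Real.volume_Ioo]
  rw [lintegral_mul_const _ (by fun_prop), lintegral_comp_sqrt_sq_add_sq, mul_comm]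
  ring_nf

lemma lintegral_lintegral_Ioi_abs {V G : ℝ → ℝ≥0∞} (hV : Measurable V) (hG : Measurable G) :
    ∫⁻ t, (∫⁻ s in Ioi |t|, V s) * G t = ∫⁻ s, V s * ∫⁻ t in Ioo (-s) s, G t := by
  have hmeas : Measurable
      ({q : ℝ × ℝ | |q.1| < q.2}.indicator fun q => V q.2 * G q.1) :=
    (by fun_prop : Measurable fun q : ℝ × ℝ => V q.2 * G q.1).indicator
      (measurableSet_lt (by fun_prop) (by fun_prop))
  calc ∫⁻ t, (∫⁻ s in Ioi |t|, V s) * G t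
      = ∫⁻ t, ∫⁻ s, {q : ℝ × ℝ | |q.1| < q.2}.indicator (fun q => V q.2 * G q.1) (t, s) :=
        lintegral_congr fun t => by
          rw [← lintegral_mul_const _ hV, ← lintegral_indicator measurableSet_Ioi]
          rfl
    _ = ∫⁻ s, ∫⁻ t, {q : ℝ × ℝ | |q.1| < q.2}.indicator (fun q => V q.2 * G q.1) (t, s) :=
        lintegral_lintegral_swap hmeas.aemeasurable
    _ = ∫⁻ s, V s * ∫⁻ t in Ioo (-s) s, G t :=
        lintegral_congr fun s => by
          rw [← lintegral_const_mul _ hG, ← lintegral_indicator measurableSet_Ioo]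
          exact lintegral_congr fun t => by simp only [indicator, mem_ofPred_eq, abs_lt, mem_Ioo]

/-- Archimedes' hat-box theorem in integrated form: each coordinate of a uniformly distributed
point of the sphere of radius `s` is uniformly distributed on `(-s, s)`. -/
lemma lintegral_norm_mul_apply_zero {W G : ℝ → ℝ≥0∞} (hW : Measurable W) (hG : Measurable G) :
    ∫⁻ v : E3, W ‖v‖ * G (v 0) =
      ENNReal.ofReal (2 * Real.pi) *
        ∫⁻ s, ENNReal.ofReal s * W s * ∫⁻ t in Ioo (-s) s, G t := by
  have hnorm : ∀ v : E3, ‖v‖ = √(v 0 ^ 2 + (v 1 ^ 2 + v 2 ^ 2)) := fun v => by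
    simp only [EuclideanSpace.norm_eq, Fin.sum_univ_three, Real.norm_eq_abs, sq_abs, add_assoc]
  simp only [hnorm]
  rw [measurePreserving_coords.lintegral_comp
    (f := fun q : ℝ × ℝ × ℝ => W √(q.1 ^ 2 + (q.2.1 ^ 2 + q.2.2 ^ 2)) * G q.1) (by fun_prop),
    Measure.volume_eq_prod, lintegral_prod _ (by fun_prop),
    ← lintegral_lintegral_Ioi_abs (by fun_prop) hG,
    ← lintegral_const_mul' _ _ ENNReal.ofReal_ne_top]
  refine lintegral_congr fun t => ?_
  calc ∫⁻ p : ℝ × ℝ, W √(t ^ 2 + (p.1 ^ 2 + p.2 ^ 2)) * G t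
      = (∫⁻ p : ℝ × ℝ, W √(t ^ 2 + (p.1 ^ 2 + p.2 ^ 2))) * G t :=
        lintegral_mul_const _ (by fun_prop)
    _ = _ := by rw [lintegral_prod_comp_sqrt t hW, mul_assoc]

lemma exists_linearIsometryEquiv_apply_eq {E : Type*} [NormedAddCommGroup E]
    [InnerProductSpace ℝ E] {v w : E} (h : ‖v‖ = ‖w‖) : ∃ U : E ≃ₗᵢ[ℝ] E, U v = w :=
  ⟨(ℝ ∙ (v - w))ᗮ.reflection, Submodule.reflection_sub h⟩

lemma lintegral_norm_mul_inner {W G : ℝ → ℝ≥0∞} (hW : Measurable W) (hG : Measurable G) (x : E3) :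
    ∫⁻ v : E3, W ‖v‖ * G (inner ℝ v x) =
      ENNReal.ofReal (2 * Real.pi) *
        ∫⁻ s, ENNReal.ofReal s * W s * ∫⁻ t in Ioo (-s) s, G (‖x‖ * t) := by
  obtain ⟨U, hU⟩ := exists_linearIsometryEquiv_apply_eq (v := x)
    (w := EuclideanSpace.single 0 ‖x‖) (by rw [PiLp.norm_single, norm_norm])
  rw [← lintegral_norm_mul_apply_zero hW (G := fun t => G (‖x‖ * t)) (by fun_prop),
    ← U.measurePreserving.lintegral_comp_emb U.toMeasurableEquiv.measurableEmbedding
      fun v => W ‖v‖ * G (‖x‖ * v 0)]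
  refine lintegral_congr fun v => ?_
  rw [U.norm_map, ← U.inner_map_map v x, hU, EuclideanSpace.inner_single_right]
  rfl

lemma hasDerivAt_max_zero_pow {n : ℕ} (hn : 1 < n) (x : ℝ) :
    HasDerivAt (fun y : ℝ => max 0 y ^ n) (n * max 0 x ^ (n - 1)) x := by
  rcases lt_trichotomy x 0 with hx | rfl | hx
  · rw [max_eq_left hx.le, zero_pow (by lia), mul_zero]
    refine (hasDerivAt_const x (0 : ℝ)).congr_of_eventuallyEq ?_
    filter_upwards [Iio_mem_nhds hx] with y hy
    rw [max_eq_left (le_of_lt hy), zero_pow (by lia)]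
  · rw [max_self, zero_pow (by lia), mul_zero]
    have hbound : (fun y : ℝ => max 0 y ^ n) =O[𝓝 0] fun y => ‖y - 0‖ ^ n := .of_norm_le fun y => by
      rw [sub_zero, norm_pow, Real.norm_of_nonneg (le_max_left _ _)]
      exact pow_le_pow_left₀ (le_max_left _ _) (max_le (norm_nonneg y) (le_abs_self y)) n
    exact (hbound.hasFDerivAt hn).hasDerivAt
  · rw [max_eq_right hx.le]
    refine (hasDerivAt_pow n x).congr_of_eventuallyEq ?_
    filter_upwards [Ioi_mem_nhds hx] with y hy
    rw [max_eq_right (le_of_lt hy)]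

lemma hasDerivAt_max_zero_one_sub_mul_pow {n : ℕ} (hn : 1 < n) (r s : ℝ) :
    HasDerivAt (fun t : ℝ => max 0 (1 - r * t) ^ n)
      (n * max 0 (1 - r * s) ^ (n - 1) * -r) s := by
  have hlin : HasDerivAt (fun t : ℝ => 1 - r * t) (-r) s := by
    simpa only [mul_one, id] using ((hasDerivAt_id s).const_mul r).const_sub 1
  exact (hasDerivAt_max_zero_pow hn _).comp s hlin

lemma intervalIntegral_max_zero_one_sub_mul_abs {r s : ℝ} (hr : r ≠ 0) (hs : 0 ≤ s) :
    ∫ t in -s..s, max 0 (1 - r * |t|) = (1 - max 0 (1 - r * s) ^ 2) / r := by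
  have hcont : Continuous fun t : ℝ => max 0 (1 - r * |t|) := by fun_prop
  have hright : ∫ t in 0..s, max 0 (1 - r * |t|) = (1 - max 0 (1 - r * s) ^ 2) / (2 * r) := by
    rw [intervalIntegral.integral_congr (g := fun t => max 0 (1 - r * t)) fun t ht => by
      simp only [abs_of_nonneg (uIcc_of_le hs ▸ ht).1]]
    have hderiv : ∀ t : ℝ, HasDerivAt (fun t => max 0 (1 - r * t) ^ 2 / (-2 * r))
        (max 0 (1 - r * t)) t := fun t => by
      refine ((hasDerivAt_max_zero_one_sub_mul_pow one_lt_two r t).div_const (-2 * r)).congr_deriv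
        ?_
      simp only [Nat.reduceSub, pow_one, Nat.cast_ofNat]
      field_simp
    rw [intervalIntegral.integral_eq_sub_of_hasDerivAt (fun t _ => hderiv t)
      ((by fun_prop : Continuous fun t : ℝ => max 0 (1 - r * t)).intervalIntegrable _ _),
      mul_zero, sub_zero, max_eq_right zero_le_one]
    field_simp
    ring
  have hleft : ∫ t in -s..0, max 0 (1 - r * |t|) = ∫ t in 0..s, max 0 (1 - r * |t|) := by
    have h := intervalIntegral.integral_comp_neg (a := 0) (b := s) fun t : ℝ => max 0 (1 - r * |t|)
    simpa only [abs_neg, neg_zero] using h.symm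
  rw [← intervalIntegral.integral_add_adjacent_intervals (hcont.intervalIntegrable _ 0)
    (hcont.intervalIntegrable _ _), hleft, hright]
  field_simp
  ring

lemma lintegral_Ioo_one_sub_mul_abs {r s : ℝ} (hr : r ≠ 0) (hs : 0 ≤ s) :
    ∫⁻ t in Ioo (-s) s, ENNReal.ofReal (1 - r * |t|) =
      ENNReal.ofReal ((1 - max 0 (1 - r * s) ^ 2) / r) := by
  have hcont : Continuous fun t : ℝ => max 0 (1 - r * |t|) := by fun_prop
  rw [← intervalIntegral_max_zero_one_sub_mul_abs hr hs,
    intervalIntegral.integral_of_le (neg_le_self hs), integral_Ioc_eq_integral_Ioo,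
    ofReal_integral_eq_lintegral_ofReal
      ((hcont.integrableOn_Icc (a := -s) (b := s)).mono_set Ioo_subset_Icc_self)
      (Eventually.of_forall fun t => le_max_left _ _)]
  simp only [ENNReal.ofReal_max, ENNReal.ofReal_zero, zero_le, max_eq_right]

lemma hasDerivAt_neg_one_sub_max_zero_pow_mul (r : ℝ) {s : ℝ} (hs : s ≠ 0) :
    HasDerivAt (fun s => -((1 - max 0 (1 - r * s) ^ 3) * (s ^ 3)⁻¹ / 3))
      ((s ^ 4)⁻¹ * (1 - max 0 (1 - r * s) ^ 2)) s := by
  have hu : max 0 (1 - r * s) * (1 - r * s - max 0 (1 - r * s)) = 0 := by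
    rcases max_choice 0 (1 - r * s) with h | h <;> rw [h] <;> ring
  have hinv : HasDerivAt (fun s : ℝ => (s ^ 3)⁻¹) (-(3 * s ^ 2) / (s ^ 3) ^ 2) s :=
    (hasDerivAt_pow 3 s).fun_inv (pow_ne_zero 3 hs)
  refine (((hasDerivAt_max_zero_one_sub_mul_pow (by norm_num : 1 < 3) r s).const_sub 1).mul hinv
    |>.div_const 3).neg.congr_deriv ?_
  generalize max 0 (1 - r * s) = u at hu ⊢
  field_simp
  norm_num
  linear_combination (3 : ℝ) * u * hu

lemma lintegral_Ioi_inv_pow_mul_one_sub_max_zero {a r : ℝ} (ha : 0 < a) (hr : 0 ≤ r) :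
    ∫⁻ s in Ioi a, ENNReal.ofReal ((s ^ 4)⁻¹ * (1 - max 0 (1 - r * s) ^ 2)) =
      ENNReal.ofReal ((1 - max 0 (1 - r * a) ^ 3) / (3 * a ^ 3)) := by
  have hle : ∀ s ∈ Ioi a, max 0 (1 - r * s) ≤ 1 := fun s hs =>
    max_le zero_le_one (sub_le_self 1 (mul_nonneg hr (ha.trans hs).le))
  have hnonneg : ∀ s ∈ Ioi a, 0 ≤ (s ^ 4)⁻¹ * (1 - max 0 (1 - r * s) ^ 2) := fun s hs =>
    mul_nonneg (inv_nonneg.2 (by positivity))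
      (sub_nonneg.2 (pow_le_one₀ (le_max_left _ _) (hle s hs)))
  have hderiv : ∀ s ∈ Ici a, HasDerivAt (fun s => -((1 - max 0 (1 - r * s) ^ 3) * (s ^ 3)⁻¹ / 3))
      ((s ^ 4)⁻¹ * (1 - max 0 (1 - r * s) ^ 2)) s := fun s hs =>
    hasDerivAt_neg_one_sub_max_zero_pow_mul r (ha.trans_le hs).ne'
  have hlim : Tendsto (fun s : ℝ => -((1 - max 0 (1 - r * s) ^ 3) * (s ^ 3)⁻¹ / 3)) atTop
      (𝓝 0) := by
    have hinv : Tendsto (fun s : ℝ => (s ^ 3)⁻¹) atTop (𝓝 0) :=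
      tendsto_inv_atTop_zero.comp (tendsto_pow_atTop three_ne_zero)
    refine squeeze_zero_norm' ?_ hinv
    filter_upwards [Ioi_mem_atTop a] with s hs
    have hu := pow_le_one₀ (n := 3) (le_max_left 0 (1 - r * s)) (hle s hs)
    have hu' := pow_nonneg (le_max_left 0 (1 - r * s)) 3
    have hs' : 0 < (s ^ 3)⁻¹ := inv_pos.2 (pow_pos (ha.trans hs) 3)
    rw [norm_neg, Real.norm_of_nonneg (by have := sub_nonneg.2 hu; positivity)]
    nlinarith
  rw [← ofReal_integral_eq_lintegral_ofReal
    (integrableOn_Ioi_deriv_of_nonneg' hderiv hnonneg hlim)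
    (ae_restrict_of_forall_mem measurableSet_Ioi hnonneg),
    integral_Ioi_of_hasDerivAt_of_nonneg' hderiv hnonneg hlim]
  congr 1
  field_simp
  ring

/-- The radial Graf–Schenker kernel: the Coulomb kernel times the defect of a linear volume
fraction cubed. It is the rotational average of the Coulomb kernel weighted by the covariogram
defect of a simplex. -/
def gsKernel (a r : ℝ) : ℝ := (1 - max 0 (1 - a * r) ^ 3) / r

lemma one_sub_max_zero_one_sub_pow_mem_Icc {x : ℝ} (hx : 0 ≤ x) (n : ℕ) :
    1 - max 0 (1 - x) ^ n ∈ Icc (0 : ℝ) 1 :=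
  ⟨sub_nonneg.2 (pow_le_one₀ (le_max_left _ _) (max_le zero_le_one (sub_le_self 1 hx))),
    sub_le_self 1 (pow_nonneg (le_max_left _ _) n)⟩

lemma measurable_gsKernel {α : Type*} [MeasurableSpace α] {a r : α → ℝ} (ha : Measurable a)
    (hr : Measurable r) : Measurable fun x => gsKernel (a x) (r x) := by
  unfold gsKernel
  fun_prop

lemma gsKernel_nonneg {a r : ℝ} (ha : 0 ≤ a) (hr : 0 ≤ r) : 0 ≤ gsKernel a r :=
  div_nonneg (one_sub_max_zero_one_sub_pow_mem_Icc (mul_nonneg ha hr) 3).1 hr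

lemma gsKernel_le_inv {a r : ℝ} (ha : 0 ≤ a) (hr : 0 ≤ r) : gsKernel a r ≤ r⁻¹ := by
  rw [gsKernel, div_eq_mul_inv]
  exact mul_le_of_le_one_left (inv_nonneg.2 hr)
    (one_sub_max_zero_one_sub_pow_mem_Icc (mul_nonneg ha hr) 3).2

lemma tendsto_gsKernel_atTop {r : ℝ} (hr : 0 < r) :
    Tendsto (fun n : ℕ => gsKernel n r) atTop (𝓝 r⁻¹) := by
  refine tendsto_const_nhds.congr' ?_
  filter_upwards [eventually_ge_atTop ⌈r⁻¹⌉₊] with n hn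
  have h : 1 ≤ n * r := (inv_le_iff_one_le_mul₀ hr).1 (Nat.ceil_le.1 hn)
  rw [gsKernel, max_eq_left (sub_nonpos.2 h), zero_pow three_ne_zero, sub_zero, one_div]

/-- The slab of width one orthogonal to `v` whose points `x` have `⟪v, x⟫` within `1 / 2` of `c`;
its width is measured by `⟪v, ·⟫`, so its thickness is `‖v‖⁻¹`. -/
def slab (q : E3 × ℝ) : Set E3 := {x | inner ℝ q.1 x ∈ ball q.2 (1 / 2)}

lemma measurable_indicator_slab {α : Type*} [MeasurableSpace α] {q : α → E3 × ℝ} {x : α → E3}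
    (hq : Measurable q) (hx : Measurable x) :
    Measurable fun a => (slab (q a)).indicator (1 : E3 → ℝ) (x a) := by
  have hs : MeasurableSet {a | dist (inner ℝ (q a).1 (x a)) (q a).2 < 1 / 2} :=
    measurableSet_lt (by fun_prop) measurable_const
  exact measurable_one.indicator hs

lemma lintegral_slab_mul_slab (v x y : E3) :
    ∫⁻ c, ENNReal.ofReal ((slab (v, c)).indicator 1 x * (slab (v, c)).indicator 1 y) =
      ENNReal.ofReal (1 - |inner ℝ v (x - y)|) := by
  have hmem : ∀ c z, (slab (v, c)).indicator 1 z =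
      (ball (inner ℝ v z) (1 / 2)).indicator (1 : ℝ → ℝ) c := fun c z => by
    simp only [indicator, slab, mem_ofPred_eq, mem_ball, dist_comm c, Pi.one_apply]
  have hind : ∀ c, ENNReal.ofReal ((slab (v, c)).indicator 1 x * (slab (v, c)).indicator 1 y) =
      (ball (inner ℝ v x) (1 / 2) ∩ ball (inner ℝ v y) (1 / 2)).indicator 1 c := fun c => by
    rw [hmem, hmem, ← Pi.mul_apply, ← inter_indicator_one]
    by_cases h : c ∈ ball (inner ℝ v x) (1 / 2) ∩ ball (inner ℝ v y) (1 / 2)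
    · rw [indicator_of_mem h, indicator_of_mem h, Pi.one_apply, Pi.one_apply, ENNReal.ofReal_one]
    · rw [indicator_of_notMem h, indicator_of_notMem h, ENNReal.ofReal_zero]
  simp only [hind]
  rw [lintegral_indicator_one (measurableSet_ball.inter measurableSet_ball), Real.ball_eq_Ioo,
    Real.ball_eq_Ioo, Ioo_inter_Ioo, Real.volume_Ioo, min_add_add_right, max_sub_sub_right,
    inner_sub_right]
  congr 1
  linarith [max_sub_min_eq_abs' (inner ℝ v x) (inner ℝ v y)]

/-- The density of slab normals which decomposes `gsKernel a`. -/
def slabDensity (a s : ℝ) : ℝ := (Ioi a).indicator (fun s => 3 * a ^ 3 / (2 * Real.pi * s ^ 5)) s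

lemma measurable_slabDensity (a : ℝ) : Measurable (slabDensity a) :=
  Measurable.indicator (by fun_prop) measurableSet_Ioi

lemma slabDensity_nonneg {a : ℝ} (ha : 0 ≤ a) (s : ℝ) : 0 ≤ slabDensity a s :=
  indicator_nonneg (fun s hs => by have := ha.trans (le_of_lt hs); positivity) s

lemma lintegral_slabDensity_mul_one_sub_abs_inner {a : ℝ} (ha : 0 < a) {x : E3} (hx : x ≠ 0) :
    ∫⁻ v : E3, ENNReal.ofReal (slabDensity a ‖v‖) * ENNReal.ofReal (1 - |inner ℝ v x|) =
      ENNReal.ofReal (gsKernel a ‖x‖) := by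
  have hr : 0 < ‖x‖ := norm_pos_iff.2 hx
  have hinner : ∀ s, ENNReal.ofReal s * ENNReal.ofReal (slabDensity a s) *
      ∫⁻ t in Ioo (-s) s, ENNReal.ofReal (1 - |‖x‖ * t|) =
      (Ioi a).indicator (fun s => ENNReal.ofReal (3 * a ^ 3 / (2 * Real.pi * ‖x‖)) *
        ENNReal.ofReal ((s ^ 4)⁻¹ * (1 - max 0 (1 - ‖x‖ * s) ^ 2))) s := fun s => by
    by_cases hs : s ∈ Ioi a
    · have hs₀ : 0 < s := ha.trans hs
      simp only [abs_mul, abs_norm]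
      rw [lintegral_Ioo_one_sub_mul_abs hr.ne' hs₀.le, slabDensity, indicator_of_mem hs,
        indicator_of_mem hs, ← ENNReal.ofReal_mul hs₀.le, ← ENNReal.ofReal_mul (by positivity),
        ← ENNReal.ofReal_mul (by positivity)]
      congr 1
      field_simp
    · rw [slabDensity, indicator_of_notMem hs, indicator_of_notMem hs, ENNReal.ofReal_zero,
        mul_zero, zero_mul]
  have hW := (measurable_slabDensity a).ennreal_ofReal
  rw [lintegral_norm_mul_inner hW (G := fun t => ENNReal.ofReal (1 - |t|)) (by fun_prop) x]
  simp only [hinner]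
  rw [lintegral_indicator measurableSet_Ioi, lintegral_const_mul' _ _ ENNReal.ofReal_ne_top,
    lintegral_Ioi_inv_pow_mul_one_sub_max_zero ha hr.le, ← ENNReal.ofReal_mul (by positivity),
    ← ENNReal.ofReal_mul (by positivity), gsKernel, mul_comm a]
  congr 1
  field_simp

lemma ae_fst_ne_snd : ∀ᵐ p : E3 × E3, p.1 ≠ p.2 := by
  have hmeas : MeasurableSet {p : E3 × E3 | p.1 ≠ p.2} :=
    (isOpen_ne_fun continuous_fst continuous_snd).measurableSet
  rw [Measure.volume_eq_prod, Measure.ae_prod_iff_ae_ae hmeas]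
  exact Eventually.of_forall fun x => (Measure.ae_ne volume x).mono fun _ hy => hy.symm

lemma isMixture_slab_gsKernel {a : ℝ} (ha : 0 < a) :
    IsMixture (volume : Measure (E3 × ℝ)) (volume : Measure (E3 × E3))
      (fun q p => slabDensity a ‖q.1‖ * ((slab q).indicator 1 p.1 * (slab q).indicator 1 p.2))
      fun p => gsKernel a ‖p.1 - p.2‖ := by
  have hmeas : Measurable (Function.uncurry fun (q : E3 × ℝ) (p : E3 × E3) =>
      slabDensity a ‖q.1‖ * ((slab q).indicator 1 p.1 * (slab q).indicator 1 p.2)) :=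
    ((measurable_slabDensity a).comp (by fun_prop)).mul
      ((measurable_indicator_slab (by fun_prop) (by fun_prop)).mul
        (measurable_indicator_slab (by fun_prop) (by fun_prop)))
  have hind : ∀ (q : E3 × ℝ) (x : E3), 0 ≤ (slab q).indicator (1 : E3 → ℝ) x := fun q =>
    indicator_nonneg fun _ _ => zero_le_one
  refine .of_lintegral_eq hmeas (fun q p => mul_nonneg (slabDensity_nonneg ha.le _)
    (mul_nonneg (hind _ _) (hind _ _))) (fun p => gsKernel_nonneg ha.le (norm_nonneg _)) ?_
  filter_upwards [ae_fst_ne_snd] with p hp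
  rw [← lintegral_slabDensity_mul_one_sub_abs_inner ha (sub_ne_zero.2 hp), Measure.volume_eq_prod,
    lintegral_prod _ (by exact hmeas.of_uncurry_right.ennreal_ofReal.aemeasurable)]
  refine lintegral_congr fun v => ?_
  simp only [ENNReal.ofReal_mul (slabDensity_nonneg ha.le _)]
  rw [lintegral_const_mul' _ _ ENNReal.ofReal_ne_top, lintegral_slab_mul_slab]

lemma IsCharge.integral_mul_gsKernel_nonneg {f : E3 → ℝ} (hf : IsCharge f) {a : ℝ} (ha : 0 ≤ a) :
    0 ≤ ∫ p : E3 × E3, f p.1 * f p.2 * gsKernel a ‖p.1 - p.2‖ := by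
  rcases ha.eq_or_lt with rfl | ha
  · simp [gsKernel]
  refine (isMixture_slab_gsKernel ha).integral_mul_nonneg hf.measurable_mul
    (hf.integrable_mul_kernel (measurable_gsKernel measurable_const (by fun_prop)) fun p => ?_)
    fun q => ?_
  · rw [abs_of_nonneg (gsKernel_nonneg ha.le (norm_nonneg _))]
    exact gsKernel_le_inv ha.le (norm_nonneg _)
  · have hsquare : ∫ p : E3 × E3, f p.1 * f p.2 * (slabDensity a ‖q.1‖ *
        ((slab q).indicator 1 p.1 * (slab q).indicator 1 p.2)) =
        slabDensity a ‖q.1‖ * (∫ x, f x * (slab q).indicator 1 x) ^ 2 := by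
      rw [sq, ← integral_prod_mul, ← Measure.volume_eq_prod, ← integral_const_mul]
      congr 1 with p
      ring
    rw [hsquare]
    exact mul_nonneg (slabDensity_nonneg ha.le _) (sq_nonneg _)

theorem IsCharge.coulombForm_nonneg {f : E3 → ℝ} (hf : IsCharge f) : 0 ≤ coulombForm f := by
  refine ge_of_tendsto' (tendsto_integral_of_dominated_convergence
    (F := fun (n : ℕ) (p : E3 × E3) => f p.1 * f p.2 * gsKernel n ‖p.1 - p.2‖)
    (fun p => ‖f p.1 * f p.2 * ‖p.1 - p.2‖⁻¹‖)
    (fun n => (hf.measurable_mul.mul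
      (measurable_gsKernel measurable_const (by fun_prop))).aestronglyMeasurable)
    hf.integrable_mul_inv_norm_sub.norm
    (fun n => Eventually.of_forall fun p => ?_) ?_)
    fun n => hf.integral_mul_gsKernel_nonneg n.cast_nonneg
  · rw [norm_mul, norm_mul _ ‖p.1 - p.2‖⁻¹,
      Real.norm_of_nonneg (gsKernel_nonneg n.cast_nonneg (norm_nonneg _)),
      Real.norm_of_nonneg (inv_nonneg.2 (norm_nonneg _))]
    gcongr
    exact gsKernel_le_inv n.cast_nonneg (norm_nonneg _)
  · filter_upwards [ae_fst_ne_snd] with p hp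
    exact (tendsto_gsKernel_atTop (norm_pos_iff.2 (sub_ne_zero.2 hp))).const_mul _

/-! ### The covariogram of a simplex -/

section Simplex

variable {ι E : Type*} [NormedAddCommGroup E] [NormedSpace ℝ E]

lemma affineBasis_coord_add (b : AffineBasis ι ℝ E) (i : ι) (x w : E) :
    b.coord i (x + w) = b.coord i x + (b.coord i).linear w := by
  rw [add_comm, ← vadd_eq_add, AffineMap.map_vadd, vadd_eq_add, add_comm]

/-- The open simplex with vertices `b`. -/
def openSimplex (b : AffineBasis ι ℝ E) : Set E := interior (convexHull ℝ (range b))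

lemma mem_translatedInter_openSimplex [Finite ι] (b : AffineBasis ι ℝ E) (w x : E) :
    x ∈ translatedInter (openSimplex b) (openSimplex b) w ↔
      ∀ i, max 0 (-(b.coord i).linear w) < b.coord i x := by
  simp only [translatedInter, openSimplex, b.interior_convexHull, mem_inter_iff, mem_preimage,
    mem_ofPred_eq, affineBasis_coord_add, max_lt_iff, forall_and, neg_lt_iff_pos_add]

variable [Fintype ι]

lemma affineBasis_coord_smul_add_sum (b : AffineBasis ι ℝ E) {m : ι → ℝ} {t : ℝ}
    (h : t + ∑ j, m j = 1) (i : ι) (y : E) :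
    b.coord i (t • y + ∑ j, m j • b j) = t * b.coord i y + m i := by
  classical
  have hlin : ∀ x, b.coord i x = b.coord i 0 + (b.coord i).linear x := fun x => by
    rw [← affineBasis_coord_add, zero_add]
  have hvertex : ∀ j, (b.coord i).linear (b j) = (if i = j then 1 else 0) - b.coord i 0 :=
    fun j => by rw [← b.coord_apply, hlin (b j), add_sub_cancel_left]
  rw [hlin, hlin y, map_add, map_smul, map_sum]
  simp only [map_smul, hvertex, smul_eq_mul, mul_sub, mul_ite, mul_one, mul_zero,
    Finset.sum_sub_distrib, Finset.sum_ite_eq, Finset.mem_univ, if_true, ← Finset.sum_mul]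
  linear_combination -(b.coord i 0) * h

/-- The gauge whose value at `w` is the fraction by which the simplex with vertices `b` shrinks
when it is intersected with its translate by `-w`. -/
def simplexGauge (b : AffineBasis ι ℝ E) (w : E) : ℝ := ∑ i, max 0 (-(b.coord i).linear w)

lemma simplexGauge_nonneg (b : AffineBasis ι ℝ E) (w : E) : 0 ≤ simplexGauge b w :=
  Finset.sum_nonneg fun _ _ => le_max_left _ _

lemma simplexGauge_smul (b : AffineBasis ι ℝ E) {t : ℝ} (ht : 0 ≤ t) (w : E) :
    simplexGauge b (t • w) = t * simplexGauge b w := by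
  simp only [simplexGauge, Finset.mul_sum, map_smul, smul_eq_mul, mul_max_of_nonneg _ _ ht,
    mul_zero, mul_neg]

lemma translatedInter_openSimplex_of_one_le (b : AffineBasis ι ℝ E) {w : E}
    (hw : 1 ≤ simplexGauge b w) :
    translatedInter (openSimplex b) (openSimplex b) w = ∅ := by
  refine eq_empty_of_forall_notMem fun x hx => hw.not_gt ?_
  have : Nonempty ι := b.nonempty
  rw [← b.sum_coord_apply_eq_one x]
  exact Finset.sum_lt_sum_of_nonempty Finset.univ_nonempty fun i _ =>
    (mem_translatedInter_openSimplex b w x).1 hx i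

lemma translatedInter_openSimplex_of_lt_one (b : AffineBasis ι ℝ E) {w : E}
    (hw : simplexGauge b w < 1) :
    translatedInter (openSimplex b) (openSimplex b) w =
      (· + -∑ j, max 0 (-(b.coord j).linear w) • b j) ⁻¹'
        ((1 - simplexGauge b w) • openSimplex b) := by
  set t := 1 - simplexGauge b w with ht
  have ht₀ : 0 < t := sub_pos.2 hw
  set q := ∑ j, max 0 (-(b.coord j).linear w) • b j with hq
  ext x
  rw [mem_translatedInter_openSimplex, mem_preimage, mem_smul_set_iff_inv_smul_mem₀ ht₀.ne',
    openSimplex, b.interior_convexHull, mem_ofPred_eq]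
  refine forall_congr' fun i => ?_
  have hx : t • t⁻¹ • (x + -q) + q = x := by
    rw [smul_inv_smul₀ ht₀.ne', neg_add_cancel_right]
  have hcoord : b.coord i x = t * b.coord i (t⁻¹ • (x + -q)) + max 0 (-(b.coord i).linear w) := by
    rw [← affineBasis_coord_smul_add_sum b (sub_add_cancel 1 (simplexGauge b w)) i, ← hq, ← ht, hx]
  rw [hcoord, lt_add_iff_pos_left, mul_pos_iff_of_pos_left ht₀]

variable [FiniteDimensional ℝ E]

lemma continuous_simplexGauge (b : AffineBasis ι ℝ E) : Continuous (simplexGauge b) :=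
  continuous_finsetSum _ fun i _ =>
    continuous_const.max (b.coord i).linear.continuous_of_finiteDimensional.neg

theorem addHaar_translatedInter_openSimplex [MeasurableSpace E] [BorelSpace E] (μ : Measure E)
    [μ.IsAddHaarMeasure] (b : AffineBasis ι ℝ E) (w : E) :
    μ (translatedInter (openSimplex b) (openSimplex b) w) =
      ENNReal.ofReal (max 0 (1 - simplexGauge b w) ^ Module.finrank ℝ E) *
        μ (openSimplex b) := by
  rcases lt_or_ge (simplexGauge b w) 1 with hw | hw
  · rw [translatedInter_openSimplex_of_lt_one b hw, measure_preimage_add_right,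
      Measure.addHaar_smul, abs_of_nonneg (pow_nonneg (sub_pos.2 hw).le _),
      max_eq_right (sub_pos.2 hw).le]
  · have hw₀ : w ≠ 0 := by
      rintro rfl
      have h₀ : simplexGauge b 0 = 0 := by simpa using simplexGauge_smul b le_rfl 0
      exact absurd (h₀ ▸ hw) one_pos.not_ge
    have : Nontrivial E := ⟨w, 0, hw₀⟩
    rw [translatedInter_openSimplex_of_one_le b hw, measure_empty, max_eq_left (sub_nonpos.2 hw),
      zero_pow Module.finrank_pos.ne', ENNReal.ofReal_zero, zero_mul]

end Simplex

lemma exists_affineBasis_of_isTetra {T : Set E3} (hT : IsTetra T) :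
    ∃ b : AffineBasis (Fin 4) ℝ E3, T = openSimplex b := by
  obtain ⟨v, hv, rfl⟩ := hT
  refine ⟨⟨v, hv, ?_⟩, rfl⟩
  rw [hv.affineSpan_eq_top_iff_card_eq_finrank_add_one, finrank_euclideanSpace_fin,
    Fintype.card_fin]

lemma exists_vol_translatedInter_eq_of_isTetra {T : Set E3} (hT : IsTetra T) :
    ∃ p : E3 → ℝ, Continuous p ∧ (∀ w, 0 ≤ p w) ∧ (∀ t : ℝ, 0 ≤ t → ∀ w, p (t • w) = t * p w) ∧
      ∀ w, vol (translatedInter T T w) = max 0 (1 - p w) ^ 3 * vol T := by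
  obtain ⟨b, rfl⟩ := exists_affineBasis_of_isTetra hT
  refine ⟨simplexGauge b, continuous_simplexGauge b, simplexGauge_nonneg b,
    fun t ht => simplexGauge_smul b ht, fun w => ?_⟩
  rw [vol, addHaar_translatedInter_openSimplex, finrank_euclideanSpace_fin, ENNReal.toReal_mul,
    ENNReal.toReal_ofReal (pow_nonneg (le_max_left _ _) 3), vol]

lemma IsTetra.smul {T : Set E3} (hT : IsTetra T) {l : ℝ} (hl : l ≠ 0) : IsTetra (l • T) := by
  obtain ⟨v, hv, rfl⟩ := hT
  refine ⟨fun i => l • v i, hv.map'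
    ((LinearEquiv.smulOfNeZero ℝ E3 l hl).toAffineEquiv : E3 →ᵃ[ℝ] E3)
    (LinearEquiv.smulOfNeZero ℝ E3 l hl).injective, ?_⟩
  rw [← interior_smul₀ hl, ← convexHull_smul, ← image_smul, ← range_comp]
  rfl

lemma IsTetra.isOpen {T : Set E3} (hT : IsTetra T) : IsOpen T := by
  obtain ⟨v, -, rfl⟩ := hT
  exact isOpen_interior

lemma IsTetra.convex {T : Set E3} (hT : IsTetra T) : Convex ℝ T := by
  obtain ⟨v, -, rfl⟩ := hT
  exact (convex_convexHull ℝ _).interior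

lemma IsTetra.isBounded {T : Set E3} (hT : IsTetra T) : IsBounded T := by
  obtain ⟨v, -, rfl⟩ := hT
  exact (isBounded_convexHull.2 (finite_range v).isBounded).subset interior_subset

/-! ### Averaging over the orthogonal group -/

section OrthogonalGroup

variable {E : Type*} [NormedAddCommGroup E] [InnerProductSpace ℝ E] [FiniteDimensional ℝ E]

instance compactSpace_unitary : CompactSpace (unitary (E →L[ℝ] E)) := by
  refine isCompact_iff_compactSpace.1
    (Metric.isCompact_of_isClosed_isBounded isClosed_unitary ?_)
  refine (isBounded_iff_subset_closedBall 0).2 ⟨1, fun u hu => ?_⟩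
  rw [mem_closedBall_zero_iff]
  refine ContinuousLinearMap.opNorm_le_bound _ zero_le_one fun x => ?_
  rw [one_mul]
  exact (Unitary.norm_map ⟨u, hu⟩ x).le

lemma exists_isProbabilityMeasure_isMulLeftInvariant (G : Type*) [Group G] [TopologicalSpace G]
    [IsTopologicalGroup G] [CompactSpace G] [MeasurableSpace G] [BorelSpace G] :
    ∃ ν : Measure G, IsProbabilityMeasure ν ∧ ν.IsMulLeftInvariant :=
  ⟨Measure.haarMeasure ⊤, ⟨Measure.haarMeasure_self⟩, inferInstance⟩

/-- `U` is a random linear isometry, with law described by `ν`, under which the image of a vector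
has a distribution that depends only on the norm of the vector. -/
structure IsRotationInvariant {G : Type*} [MeasurableSpace G] [MeasurableSpace E] (ν : Measure G)
    (U : G → E ≃ₗᵢ[ℝ] E) : Prop where
  measurable_apply : Measurable fun q : G × E => U q.1 q.2
  integral_apply_eq (F : E → ℝ) {v w : E} (h : ‖v‖ = ‖w‖) :
    ∫ g, F (U g v) ∂ν = ∫ g, F (U g w) ∂ν

lemma isRotationInvariant_unitary [MeasurableSpace E] [BorelSpace E]
    (ν : Measure (unitary (E →L[ℝ] E))) [ν.IsMulLeftInvariant] :
    IsRotationInvariant ν fun R => Unitary.linearIsometryEquiv R⁻¹ where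
  measurable_apply := ((continuous_subtype_val.comp continuous_fst.inv).clm_apply
    continuous_snd).measurable
  integral_apply_eq F v w h := by
    obtain ⟨V, hV⟩ := exists_linearIsometryEquiv_apply_eq h.symm
    set u : unitary (E →L[ℝ] E) := Unitary.linearIsometryEquiv.symm V
    have hu : Unitary.linearIsometryEquiv u w = v := hV
    rw [← integral_mul_left_eq_self _ u]
    refine integral_congr_ae (Eventually.of_forall fun R => ?_)
    simp only [← hu, mul_inv_rev, map_mul, map_inv, LinearIsometryEquiv.inv_def,
      LinearIsometryEquiv.coe_mul, Function.comp_apply, LinearIsometryEquiv.symm_apply_apply]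

lemma exists_isRotationInvariant [MeasurableSpace E] [BorelSpace E] :
    ∃ (ν : Measure (unitary (E →L[ℝ] E))) (U : unitary (E →L[ℝ] E) → E ≃ₗᵢ[ℝ] E),
      IsProbabilityMeasure ν ∧ IsRotationInvariant ν U := by
  obtain ⟨ν, hν, _⟩ := exists_isProbabilityMeasure_isMulLeftInvariant (unitary (E →L[ℝ] E))
  exact ⟨ν, _, hν, isRotationInvariant_unitary ν⟩

end OrthogonalGroup

/-- The kernel `(1 - (1 - p(w))₊³) / |w|`, written as a Graf–Schenker kernel whose parameter
`p(w) / |w|` depends only on the direction of `w` if `p` is positively homogeneous. -/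
def gaugeKernel (p : E3 → ℝ) (w : E3) : ℝ := gsKernel (p w / ‖w‖) ‖w‖

section GaugeKernel

variable {p : E3 → ℝ}

lemma gaugeKernel_eq (p : E3 → ℝ) (w : E3) :
    gaugeKernel p w = (1 - max 0 (1 - p w) ^ 3) * ‖w‖⁻¹ := by
  rcases eq_or_ne w 0 with rfl | hw
  · simp [gaugeKernel, gsKernel]
  · rw [gaugeKernel, gsKernel, div_mul_cancel₀ _ (norm_ne_zero_iff.2 hw), div_eq_mul_inv]

lemma gaugeKernel_smul (hp : ∀ t : ℝ, 0 ≤ t → ∀ w, p (t • w) = t * p w) {t : ℝ} (ht : 0 ≤ t)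
    {e : E3} (he : ‖e‖ = 1) : gaugeKernel p (t • e) = gsKernel (p e) t := by
  rw [gaugeKernel_eq, hp t ht, norm_smul, he, mul_one, Real.norm_of_nonneg ht, gsKernel,
    mul_comm t, div_eq_mul_inv]

lemma gaugeKernel_nonneg (hp : ∀ w, 0 ≤ p w) (w : E3) : 0 ≤ gaugeKernel p w :=
  gsKernel_nonneg (div_nonneg (hp w) (norm_nonneg w)) (norm_nonneg w)

lemma gaugeKernel_le_inv_norm (hp : ∀ w, 0 ≤ p w) (w : E3) : gaugeKernel p w ≤ ‖w‖⁻¹ :=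
  gsKernel_le_inv (div_nonneg (hp w) (norm_nonneg w)) (norm_nonneg w)

lemma measurable_gaugeKernel (hp : Measurable p) : Measurable (gaugeKernel p) :=
  measurable_gsKernel (hp.div measurable_norm) measurable_norm

lemma IsCharge.integrable_mul_gaugeKernel {f : E3 → ℝ} (hf : IsCharge f) (hpc : Continuous p)
    (hp₀ : ∀ w, 0 ≤ p w) (U : E3 ≃ₗᵢ[ℝ] E3) :
    Integrable fun q : E3 × E3 => f q.1 * f q.2 * gaugeKernel p (U (q.1 - q.2)) := by
  refine hf.integrable_mul_kernel ((measurable_gaugeKernel hpc.measurable).comp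
    (by fun_prop : Continuous fun q : E3 × E3 => U (q.1 - q.2)).measurable) fun q => ?_
  rw [abs_of_nonneg (gaugeKernel_nonneg hp₀ _), ← U.norm_map]
  exact gaugeKernel_le_inv_norm hp₀ _

variable {G : Type*} [MeasurableSpace G] {ν : Measure G} {U : G → E3 ≃ₗᵢ[ℝ] E3}

lemma IsRotationInvariant.integral_gaugeKernel (hU : IsRotationInvariant ν U)
    (hp : ∀ t : ℝ, 0 ≤ t → ∀ w, p (t • w) = t * p w) {e : E3} (he : ‖e‖ = 1) (w : E3) :
    ∫ g, gaugeKernel p (U g w) ∂ν = ∫ g, gsKernel (p (U g e)) ‖w‖ ∂ν := by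
  have hw : ‖w‖ = ‖‖w‖ • e‖ := by rw [norm_smul, he, mul_one, norm_norm]
  rw [hU.integral_apply_eq (gaugeKernel p) hw]
  refine integral_congr_ae (Eventually.of_forall fun g => ?_)
  simp only [map_smul, gaugeKernel_smul hp (norm_nonneg w) (((U g).norm_map e).trans he)]

lemma IsRotationInvariant.isMixture_gaugeKernel [IsFiniteMeasure ν]
    (hU : IsRotationInvariant ν U) (hpc : Continuous p) (hp₀ : ∀ w, 0 ≤ p w) :
    IsMixture ν volume (fun g (q : E3 × E3) => gaugeKernel p (U g (q.1 - q.2)))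
      fun q => ∫ g, gaugeKernel p (U g (q.1 - q.2)) ∂ν := by
  refine .of_le (B := fun q => ‖q.1 - q.2‖⁻¹) ?_ (fun _ _ => gaugeKernel_nonneg hp₀ _)
    fun g q => ?_
  · exact (measurable_gaugeKernel hpc.measurable).comp (hU.measurable_apply.comp
      (by fun_prop : Measurable fun q : G × (E3 × E3) => (q.1, q.2.1 - q.2.2)))
  · exact (gaugeKernel_le_inv_norm hp₀ _).trans_eq (by rw [(U g).norm_map])

lemma IsRotationInvariant.isMixture_gsKernel [IsFiniteMeasure ν]
    (hU : IsRotationInvariant ν U) (hpc : Continuous p) (hp₀ : ∀ w, 0 ≤ p w)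
    (hp : ∀ t : ℝ, 0 ≤ t → ∀ w, p (t • w) = t * p w) {e : E3} (he : ‖e‖ = 1) :
    IsMixture ν volume (fun g (q : E3 × E3) => gsKernel (p (U g e)) ‖q.1 - q.2‖)
      fun q => ∫ g, gaugeKernel p (U g (q.1 - q.2)) ∂ν := by
  simp only [hU.integral_gaugeKernel hp he]
  have hpe : Measurable fun g => p (U g e) :=
    hpc.measurable.comp (hU.measurable_apply.comp measurable_prodMk_right)
  exact .of_le (B := fun q => ‖q.1 - q.2‖⁻¹)
    (measurable_gsKernel (hpe.comp measurable_fst) (by fun_prop))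
    (fun _ _ => gsKernel_nonneg (hp₀ _) (norm_nonneg _))
    fun _ _ => gsKernel_le_inv (hp₀ _) (norm_nonneg _)

lemma IsCharge.integrable_mul_integral_gaugeKernel [IsProbabilityMeasure ν] {f : E3 → ℝ}
    (hf : IsCharge f) (hU : IsRotationInvariant ν U) (hpc : Continuous p) (hp₀ : ∀ w, 0 ≤ p w) :
    Integrable fun q : E3 × E3 => f q.1 * f q.2 * ∫ g, gaugeKernel p (U g (q.1 - q.2)) ∂ν := by
  refine hf.integrable_mul_kernel (hU.isMixture_gaugeKernel hpc
    hp₀).measurable.stronglyMeasurable.integral_prod_left'.measurable fun q => ?_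
  have hle : ∀ g, ‖gaugeKernel p (U g (q.1 - q.2))‖ ≤ ‖q.1 - q.2‖⁻¹ := fun g => ?_
  · simpa using norm_integral_le_of_norm_le_const (Eventually.of_forall hle) (μ := ν)
  rw [Real.norm_of_nonneg (gaugeKernel_nonneg hp₀ _), ← (U g).norm_map]
  exact gaugeKernel_le_inv_norm hp₀ _

/-- The average of a gauge kernel over the orthogonal group is at the same time an average of
Graf–Schenker kernels, and these are positive definite. -/
theorem IsCharge.exists_integral_mul_gaugeKernel_nonneg {f : E3 → ℝ} (hf : IsCharge f)
    (hpc : Continuous p) (hp₀ : ∀ w, 0 ≤ p w)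
    (hp : ∀ t : ℝ, 0 ≤ t → ∀ w, p (t • w) = t * p w) :
    ∃ U : E3 ≃ₗᵢ[ℝ] E3, 0 ≤ ∫ q : E3 × E3, f q.1 * f q.2 * gaugeKernel p (U (q.1 - q.2)) := by
  obtain ⟨ν, U, _, hU⟩ := exists_isRotationInvariant (E := E3)
  obtain ⟨e, he⟩ := exists_norm_eq E3 zero_le_one
  have hint := hf.integrable_mul_integral_gaugeKernel hU hpc hp₀
  obtain ⟨g, hg⟩ :=
    (hU.isMixture_gaugeKernel hpc hp₀).exists_integral_mul_le hf.measurable_mul hint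
  refine ⟨U g, le_trans ?_ hg⟩
  exact (hU.isMixture_gsKernel hpc hp₀ hp he).integral_mul_nonneg hf.measurable_mul hint
    fun g => hf.integral_mul_gsKernel_nonneg (hp₀ (U g e))

end GaugeKernel

theorem IsTetra.exists_integral_mul_vol_translatedInter_le {T : Set E3} (hT : IsTetra T)
    {f : E3 → ℝ} (hf : IsCharge f) :
    ∃ U : E3 ≃ₗᵢ[ℝ] E3,
      ∫ q : E3 × E3, f q.1 * f q.2 *
          (vol (translatedInter T T (U (q.1 - q.2))) * ‖q.1 - q.2‖⁻¹) ≤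
        vol T * coulombForm f := by
  obtain ⟨p, hpc, hp₀, hp, hvol⟩ := exists_vol_translatedInter_eq_of_isTetra hT
  obtain ⟨U, hU⟩ := hf.exists_integral_mul_gaugeKernel_nonneg hpc hp₀ hp
  refine ⟨U, ?_⟩
  have hsplit : ∀ q : E3 × E3, f q.1 * f q.2 *
      (vol (translatedInter T T (U (q.1 - q.2))) * ‖q.1 - q.2‖⁻¹) =
        vol T * (f q.1 * f q.2 * ‖q.1 - q.2‖⁻¹) -
          vol T * (f q.1 * f q.2 * gaugeKernel p (U (q.1 - q.2))) := fun q => by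
    rw [hvol, gaugeKernel_eq, U.norm_map]
    ring
  simp only [hsplit]
  rw [integral_sub (hf.integrable_mul_inv_norm_sub.const_mul _)
    ((hf.integrable_mul_gaugeKernel hpc hp₀ U).const_mul _), integral_const_mul, integral_const_mul]
  exact sub_le_self _ (mul_nonneg ENNReal.toReal_nonneg hU)

/-! ### Averaging over translations -/

section Covariogram

variable {E : Type*} [AddCommGroup E] {Ω T : Set E}

lemma translatedInter_subset (Ω T : Set E) (τ : E) : translatedInter Ω T τ ⊆ T := inter_subset_left

variable [MeasurableSpace E] [MeasurableAdd₂ E] {μ : Measure E} [SFinite μ]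

lemma measurable_measure_translatedInter (hΩ : MeasurableSet Ω) (hT : MeasurableSet T) :
    Measurable fun τ => μ (translatedInter Ω T τ) :=
  measurable_measure_prodMk_left (s := {q : E × E | q.2 ∈ T ∧ q.2 + q.1 ∈ Ω})
    ((hT.preimage measurable_snd).inter (hΩ.preimage (measurable_snd.add measurable_fst)))

lemma lintegral_measure_translatedInter [μ.IsAddLeftInvariant] (hΩ : MeasurableSet Ω)
    (hT : MeasurableSet T) : ∫⁻ τ, μ (translatedInter Ω T τ) ∂μ = μ T * μ Ω := by
  have hm : MeasurableSet {q : E × E | q.2 ∈ T ∧ q.2 + q.1 ∈ Ω} :=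
    (hT.preimage measurable_snd).inter (hΩ.preimage (measurable_snd.add measurable_fst))
  have hfiber : ∀ x, μ {τ | x ∈ T ∧ x + τ ∈ Ω} = T.indicator (fun _ => μ Ω) x := fun x => by
    by_cases hx : x ∈ T
    · simp only [hx, true_and, indicator_of_mem]
      exact measure_preimage_add μ x Ω
    · simp only [hx, false_and, ofPred_false, measure_empty, not_false_eq_true,
        indicator_of_notMem]
  calc ∫⁻ τ, μ (translatedInter Ω T τ) ∂μ = μ.prod μ {q : E × E | q.2 ∈ T ∧ q.2 + q.1 ∈ Ω} :=
        (Measure.prod_apply hm).symm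
    _ = ∫⁻ x, T.indicator (fun _ => μ Ω) x ∂μ :=
        (Measure.prod_apply_symm hm).trans (lintegral_congr hfiber)
    _ = μ T * μ Ω := by rw [lintegral_indicator hT, setLIntegral_const, mul_comm]

end Covariogram

section TranslatedVolume

variable {Ω T : Set E3}

lemma vol_translatedInter_le (hTb : IsBounded T) (τ : E3) :
    vol (translatedInter Ω T τ) ≤ vol T :=
  measureReal_mono (translatedInter_subset Ω T τ) hTb.measure_lt_top.ne

lemma integrable_vol_translatedInter (hΩ : MeasurableSet Ω) (hΩb : IsBounded Ω)
    (hT : MeasurableSet T) (hTb : IsBounded T) :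
    Integrable fun τ => vol (translatedInter Ω T τ) :=
  integrable_toReal_of_lintegral_ne_top
      (measurable_measure_translatedInter hΩ hT).aemeasurable <| by
    rw [lintegral_measure_translatedInter hΩ hT]
    exact ENNReal.mul_ne_top hTb.measure_lt_top.ne hΩb.measure_lt_top.ne

lemma integral_vol_translatedInter (hΩ : MeasurableSet Ω) (hT : MeasurableSet T)
    (hTb : IsBounded T) : ∫ τ, vol (translatedInter Ω T τ) = vol T * vol Ω := by
  simp only [vol]
  rw [integral_toReal (measurable_measure_translatedInter hΩ hT).aemeasurable
    (Eventually.of_forall fun τ => measure_lt_top_mono (translatedInter_subset Ω T τ)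
      hTb.measure_lt_top), lintegral_measure_translatedInter hΩ hT, ENNReal.toReal_mul]

/-- Translates of `T` by vectors outside `S` miss `Ω'`, so restricting the average to `S` loses
nothing of `Ω'`. -/
lemma le_setIntegral_vol_translatedInter {Ω' S : Set E3} (hΩ : MeasurableSet Ω)
    (hΩb : IsBounded Ω) (hΩ' : MeasurableSet Ω') (hsub : Ω' ⊆ Ω) (hT : MeasurableSet T)
    (hTb : IsBounded T) (hS : ∀ z ∈ Ω', ∀ x ∈ T, z - x ∈ S) :
    vol T * vol Ω' ≤ ∫ τ in S, vol (translatedInter Ω T τ) := by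
  have hzero : ∀ τ, τ ∉ S → vol (translatedInter Ω' T τ) = 0 := fun τ hτ => by
    have : translatedInter Ω' T τ = ∅ := eq_empty_of_forall_notMem fun x hx =>
      hτ (add_sub_cancel_left x τ ▸ hS _ hx.2 x hx.1)
    rw [this, vol, measure_empty, ENNReal.toReal_zero]
  rw [← integral_vol_translatedInter hΩ' hT hTb,
    ← setIntegral_eq_integral_of_forall_compl_eq_zero hzero]
  refine setIntegral_mono
    (integrable_vol_translatedInter hΩ' (hΩb.subset hsub) hT hTb).integrableOn
    (integrable_vol_translatedInter hΩ hΩb hT hTb).integrableOn fun τ => ?_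
  exact measureReal_mono (inter_subset_inter_right T (preimage_mono hsub))
    (measure_lt_top_mono (translatedInter_subset Ω T τ) hTb.measure_lt_top).ne

end TranslatedVolume

/-- The Coulomb interaction between points of the window `T` translated by `τ`. -/
def localKernel (T : Set E3) (τ : E3) (p : E3 × E3) : ℝ :=
  T.indicator 1 (p.1 - τ) * T.indicator 1 (p.2 - τ) * ‖p.1 - p.2‖⁻¹

section LocalKernel

variable {T : Set E3} {f : E3 → ℝ}

lemma localKernel_eq_indicator (T : Set E3) (τ : E3) (p : E3 × E3) :
    localKernel T τ p =
      (translatedInter T T (p.1 - p.2)).indicator 1 (p.2 - τ) * ‖p.1 - p.2‖⁻¹ := by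
  rw [indicator_translatedInter, sub_add_sub_cancel', localKernel]

lemma isMixture_localKernel (hT : MeasurableSet T) (hTb : IsBounded T) :
    IsMixture volume volume (localKernel T) fun p : E3 × E3 =>
      vol (translatedInter T T (p.1 - p.2)) * ‖p.1 - p.2‖⁻¹ := by
  have hint : ∀ w, Integrable ((translatedInter T T w).indicator (1 : E3 → ℝ)) := fun w =>
    integrable_indicator_one (measurableSet_translatedInter hT hT w)
      (measure_lt_top_mono (translatedInter_subset T T w) hTb.measure_lt_top).ne
  refine ⟨?_, fun τ p => ?_, Eventually.of_forall fun p => ?_, Eventually.of_forall fun p => ?_⟩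
  · have hind : Measurable (T.indicator (1 : E3 → ℝ)) := measurable_one.indicator hT
    unfold Function.uncurry localKernel
    exact ((hind.comp (by fun_prop)).mul (hind.comp (by fun_prop))).mul (by fun_prop)
  · have hind : ∀ x, 0 ≤ T.indicator (1 : E3 → ℝ) x := fun x =>
      indicator_nonneg (fun _ _ => zero_le_one) x
    exact mul_nonneg (mul_nonneg (hind _) (hind _)) (inv_nonneg.2 (norm_nonneg _))
  · simp only [localKernel_eq_indicator]
    exact ((hint _).comp_sub_left p.2).mul_const _
  · simp only [localKernel_eq_indicator]
    rw [integral_mul_const, integral_sub_left_eq_self,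
      integral_indicator_one (measurableSet_translatedInter hT hT _)]
    rfl

lemma IsCharge.integrable_mul_vol_translatedInter (hf : IsCharge f) (hT : MeasurableSet T)
    (hTb : IsBounded T) :
    Integrable fun p : E3 × E3 =>
      f p.1 * f p.2 * (vol (translatedInter T T (p.1 - p.2)) * ‖p.1 - p.2‖⁻¹) := by
  have hmeas : Measurable fun p : E3 × E3 => vol (translatedInter T T (p.1 - p.2)) :=
    ((measurable_measure_translatedInter hT hT).comp
      (measurable_fst.sub measurable_snd)).ennreal_toReal
  refine (hf.integrable_mul_inv_norm_sub.bdd_mul (c := vol T) hmeas.aestronglyMeasurable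
    (Eventually.of_forall fun p => ?_)).congr (Eventually.of_forall fun p => mul_left_comm _ _ _)
  exact (Real.norm_of_nonneg ENNReal.toReal_nonneg).trans_le (vol_translatedInter_le hTb _)

lemma IsCharge.integral_mul_localKernel_nonneg (hf : IsCharge f) (hT : MeasurableSet T) (τ : E3) :
    0 ≤ ∫ p : E3 × E3, f p.1 * f p.2 * localKernel T τ p := by
  refine (hf.mul_indicator (hT.preimage (measurable_sub_const τ))).coulombForm_nonneg.trans_eq
    (integral_congr_ae (Eventually.of_forall fun p => ?_))
  have hpre : ∀ x, ((· - τ) ⁻¹' T).indicator (1 : E3 → ℝ) x = T.indicator 1 (x - τ) := fun _ => rfl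
  simp only [hpre, localKernel]
  ring

end LocalKernel

/-! ### Invariance under linear isometries -/

section LinearIsometry

variable (U : E3 ≃ₗᵢ[ℝ] E3)

lemma divg_conj {φ : E3 → E3} (hφ : Differentiable ℝ φ) (x : E3) :
    divg (fun x => U.symm (φ (U x))) x = divg φ (U x) := by
  have hderiv : HasFDerivAt (fun x => U.symm (φ (U x))) ((U.symm : E3 →L[ℝ] E3).comp
      ((fderiv ℝ φ (U x)).comp (U : E3 →L[ℝ] E3))) x :=
    U.symm.toContinuousLinearEquiv.hasFDerivAt.comp x
      ((hφ (U x)).hasFDerivAt.comp x U.toContinuousLinearEquiv.hasFDerivAt)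
  rw [divg, hderiv.fderiv, divg,
    ← LinearMap.trace_conj' (fderiv ℝ φ (U x) : E3 →ₗ[ℝ] E3) U.symm.toLinearEquiv]
  rfl

lemma perCand_subset_perCand_preimage (Ω : Set E3) : perCand Ω ⊆ perCand (U ⁻¹' Ω) := by
  intro a ha
  obtain ⟨φ, hφ, rfl⟩ := mem_perCand_iff.1 ha
  refine mem_perCand_iff.2 ⟨_, hφ.conj U, ?_⟩
  simp only [divg_conj U (hφ.contDiff.differentiable one_ne_zero)]
  exact (U.measurePreserving.setIntegral_preimage_emb
    U.toHomeomorph.measurableEmbedding (divg φ) Ω).symm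

lemma perCand_preimage (Ω : Set E3) : perCand (U ⁻¹' Ω) = perCand Ω := by
  refine (Subset.antisymm (perCand_subset_perCand_preimage U Ω) ?_).symm
  simpa only [← preimage_comp, U.self_comp_symm, preimage_id] using
    perCand_subset_perCand_preimage U.symm (U ⁻¹' Ω)

lemma per_preimage (Ω : Set E3) : per (U ⁻¹' Ω) = per Ω :=
  congrArg sSup (perCand_preimage U Ω)

lemma hasFinPer_preimage {Ω : Set E3} : HasFinPer (U ⁻¹' Ω) ↔ HasFinPer Ω := by
  rw [HasFinPer, perCand_preimage, HasFinPer]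

lemma vol_preimage (Ω : Set E3) : vol (U ⁻¹' Ω) = vol Ω :=
  congrArg ENNReal.toReal
    (U.measurePreserving.measure_preimage_emb U.toHomeomorph.measurableEmbedding Ω)

lemma translatedInter_preimage (Ω T : Set E3) (τ : E3) :
    translatedInter (U ⁻¹' Ω) (U ⁻¹' T) τ = U ⁻¹' translatedInter Ω T (U τ) := by
  ext x
  simp only [translatedInter, mem_inter_iff, mem_preimage, map_add]

lemma ldEnergy_preimage (Λ : Set E3) (ρ : ℝ) (Ω : Set E3) :
    ldEnergy (U ⁻¹' Λ) ρ (U ⁻¹' Ω) = ldEnergy Λ ρ Ω := by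
  have hsubst : ∀ g : E3 → ℝ, ∫ x, g (U x) = ∫ x, g x := fun g =>
    U.measurePreserving.integral_comp U.toHomeomorph.measurableEmbedding g
  have hsubst₂ : ∀ g : E3 → E3 → ℝ, ∫ x, ∫ y, g (U x) (U y) = ∫ x, ∫ y, g x y := fun g => by
    simp only [fun x => hsubst (g (U x))]
    exact hsubst fun x => ∫ y, g x y
  have hind : ∀ (A : Set E3) x,
      (U ⁻¹' A).indicator (fun _ => (1 : ℝ)) x = A.indicator (fun _ => 1) (U x) := fun _ _ => rfl
  simp only [ldEnergy, per_preimage, hind]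
  congr 2
  refine Eq.trans ?_ (hsubst₂ _)
  simp only [← map_sub, LinearIsometryEquiv.norm_map]

lemma FF_preimage (T : Set E3) (ρ : ℝ) : FF (U ⁻¹' T) ρ = FF T ρ := by
  have hsub : ∀ (V : E3 ≃ₗᵢ[ℝ] E3) (A : Set E3),
      {t : ℝ | ∃ Ω : Set E3, MeasurableSet Ω ∧ Ω ⊆ A ∧ HasFinPer Ω ∧
        t = ldEnergy A ρ Ω - muStar * vol Ω} ⊆
      {t : ℝ | ∃ Ω : Set E3, MeasurableSet Ω ∧ Ω ⊆ V ⁻¹' A ∧ HasFinPer Ω ∧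
        t = ldEnergy (V ⁻¹' A) ρ Ω - muStar * vol Ω} := by
    rintro V A t ⟨Ω, hΩ, hΩA, hΩf, rfl⟩
    exact ⟨V ⁻¹' Ω, V.continuous.measurable hΩ, preimage_mono hΩA, (hasFinPer_preimage V).2 hΩf,
      by rw [ldEnergy_preimage, vol_preimage]⟩
  refine congrArg sInf (Subset.antisymm ?_ (hsub U T))
  simpa only [← preimage_comp, U.self_comp_symm, preimage_id] using hsub U.symm (U ⁻¹' T)

end LinearIsometry

/-! ### Localizing the liquid drop energy -/

/-- The total charge density of the set `Ω` in the background of density `ρ` on `Λ`. -/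
def chargeDensity (Λ : Set E3) (ρ : ℝ) (Ω : Set E3) (x : E3) : ℝ :=
  Ω.indicator 1 x - ρ * Λ.indicator 1 x

section Energy

variable {Λ Ω : Set E3} {ρ : ℝ}

lemma isCharge_chargeDensity (hρ₀ : 0 ≤ ρ) (hρ₁ : ρ ≤ 1) (hΛ : MeasurableSet Λ)
    (hΛb : IsBounded Λ) (hΩ : MeasurableSet Ω) (hΩΛ : Ω ⊆ Λ) :
    IsCharge (chargeDensity Λ ρ Ω) where
  measurable := (measurable_one.indicator hΩ).sub ((measurable_one.indicator hΛ).const_mul ρ)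
  abs_le_one x := by
    have hΩx : 0 ≤ Ω.indicator (1 : E3 → ℝ) x := indicator_nonneg (fun _ _ => zero_le_one) x
    have hΛx : Λ.indicator (1 : E3 → ℝ) x ≤ 1 := indicator_one_le_one Λ x
    have hle : Ω.indicator (1 : E3 → ℝ) x ≤ Λ.indicator 1 x :=
      indicator_le_indicator_of_subset hΩΛ (fun _ => zero_le_one) x
    rw [chargeDensity, abs_le]
    constructor <;> nlinarith
  isBounded_support := hΛb.subset fun x hx => by
    by_contra h
    refine hx ?_
    rw [chargeDensity, indicator_of_notMem h, indicator_of_notMem fun hxΩ => h (hΩΛ hxΩ),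
      mul_zero, sub_zero]

lemma ldEnergy_eq (hc : IsCharge (chargeDensity Λ ρ Ω)) :
    ldEnergy Λ ρ Ω = per Ω + 1 / 2 * coulombForm (chargeDensity Λ ρ Ω) := by
  have hint := hc.integrable_mul_inv_norm_sub
  rw [Measure.volume_eq_prod] at hint
  rw [coulombForm, Measure.volume_eq_prod, integral_prod _ hint]
  simp only [← div_eq_mul_inv]
  rfl

lemma ldEnergy_nonneg (hc : IsCharge (chargeDensity Λ ρ Ω)) : 0 ≤ ldEnergy Λ ρ Ω := by
  rw [ldEnergy_eq hc]
  exact add_nonneg (per_nonneg Ω) (mul_nonneg (by norm_num) hc.coulombForm_nonneg)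

lemma muStar_nonneg : 0 ≤ muStar := by
  refine Real.sInf_nonneg ?_
  rintro t ⟨Ω, -, -, -, -, rfl⟩
  refine div_nonneg (add_nonneg (per_nonneg Ω) (mul_nonneg (by norm_num) ?_))
    ENNReal.toReal_nonneg
  exact integral_nonneg fun x => integral_nonneg fun y => by positivity

lemma FF_le (hρ₀ : 0 ≤ ρ) (hρ₁ : ρ ≤ 1) (hΛ : MeasurableSet Λ) (hΛb : IsBounded Λ)
    (hΩ : MeasurableSet Ω) (hΩΛ : Ω ⊆ Λ) (hΩf : HasFinPer Ω) :
    FF Λ ρ ≤ ldEnergy Λ ρ Ω - muStar * vol Ω := by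
  refine csInf_le ⟨-(muStar * vol Λ), ?_⟩ ⟨Ω, hΩ, hΩΛ, hΩf, rfl⟩
  rintro t ⟨A, hA, hAΛ, -, rfl⟩
  have hE := ldEnergy_nonneg (isCharge_chargeDensity hρ₀ hρ₁ hΛ hΛb hA hAΛ)
  have hvol : muStar * vol A ≤ muStar * vol Λ :=
    mul_le_mul_of_nonneg_left (measureReal_mono hAΛ hΛb.measure_lt_top.ne) muStar_nonneg
  linarith

end Energy

section Localization

variable {Λ Ω T : Set E3} {ρ : ℝ}

lemma chargeDensity_translatedInter {τ : E3} (h : ∀ x ∈ T, x + τ ∈ Λ) (x : E3) :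
    chargeDensity T ρ (translatedInter Ω T τ) x =
      T.indicator 1 x * chargeDensity Λ ρ Ω (x + τ) := by
  rw [chargeDensity, chargeDensity, indicator_translatedInter]
  by_cases hx : x ∈ T
  · rw [indicator_of_mem hx, indicator_of_mem (h x hx)]
    simp only [Pi.one_apply, mul_one, one_mul]
  · rw [indicator_of_notMem hx]
    simp only [mul_zero, zero_mul, sub_zero]

lemma coulombForm_chargeDensity_translatedInter {τ : E3} (h : ∀ x ∈ T, x + τ ∈ Λ) :
    coulombForm (chargeDensity T ρ (translatedInter Ω T τ)) =
      ∫ p : E3 × E3, chargeDensity Λ ρ Ω p.1 * chargeDensity Λ ρ Ω p.2 * localKernel T τ p := by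
  rw [coulombForm, Measure.volume_eq_prod, ← integral_add_right_eq_self
    (fun p : E3 × E3 => chargeDensity Λ ρ Ω p.1 * chargeDensity Λ ρ Ω p.2 * localKernel T τ p)
    (τ, τ)]
  refine integral_congr_ae (Eventually.of_forall fun p => ?_)
  simp only [chargeDensity_translatedInter h, localKernel, Prod.fst_add, Prod.snd_add,
    add_sub_cancel_right, add_sub_add_right_eq_sub]
  ring

variable (hρ₀ : 0 ≤ ρ) (hρ₁ : ρ ≤ 1) (hΛ : MeasurableSet Λ) (hΛb : IsBounded Λ)
  (hΩ : MeasurableSet Ω) (hΩΛ : Ω ⊆ Λ) (hΩf : HasFinPer Ω)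
  (hT : MeasurableSet T) (hTb : IsBounded T)
include hρ₀ hρ₁ hΩ hT hTb

lemma FF_add_le_of_translatedInter {τ : E3} (h : ∀ x ∈ T, x + τ ∈ Λ)
    (hf : HasFinPer (translatedInter Ω T τ)) :
    FF T ρ + muStar * vol (translatedInter Ω T τ) ≤ per (translatedInter Ω T τ) + 1 / 2 *
      ∫ p : E3 × E3, chargeDensity Λ ρ Ω p.1 * chargeDensity Λ ρ Ω p.2 * localKernel T τ p := by
  have hm := measurableSet_translatedInter hΩ hT τ
  have hsub := translatedInter_subset Ω T τ
  have hFF := FF_le hρ₀ hρ₁ hT hTb hm hsub hf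
  rw [ldEnergy_eq (isCharge_chargeDensity hρ₀ hρ₁ hT hTb hm hsub),
    coulombForm_chargeDensity_translatedInter h] at hFF
  linarith

include hΛ hΛb hΩΛ hΩf

lemma mul_FF_add_mul_vol_le_of_window {S Ω' : Set E3} (hTf : HasFinPer T) (hSm : MeasurableSet S)
    (hSb : IsBounded S) (hST : ∀ τ ∈ S, ∀ x ∈ T, x + τ ∈ Λ) (hΩ' : MeasurableSet Ω')
    (hsub : Ω' ⊆ Ω) (hS : ∀ z ∈ Ω', ∀ x ∈ T, z - x ∈ S) :
    vol S * FF T ρ + muStar * (vol T * vol Ω') ≤ vol T * per Ω + vol Ω * per T + 1 / 2 *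
      ∫ p : E3 × E3, chargeDensity Λ ρ Ω p.1 * chargeDensity Λ ρ Ω p.2 *
        (vol (translatedInter T T (p.1 - p.2)) * ‖p.1 - p.2‖⁻¹) := by
  have hc := isCharge_chargeDensity hρ₀ hρ₁ hΛ hΛb hΩ hΩΛ
  have hΩb := hΛb.subset hΩΛ
  have hcov := hc.integrable_mul_vol_translatedInter hT hTb
  have hmix := isMixture_localKernel hT hTb
  obtain ⟨a, ha, ha₀, ha_le, hper⟩ :=
    exists_integrable_perBound_translatedInter hΩ hΩb hΩf hT hTb hTf
  rw [hmix.integral_mul_eq hc.measurable_mul hcov]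
  have hg := hmix.integrable_integral_mul hc.measurable_mul hcov
  set g : E3 → ℝ := fun τ =>
    ∫ p : E3 × E3, chargeDensity Λ ρ Ω p.1 * chargeDensity Λ ρ Ω p.2 * localKernel T τ p
  have hv := integrable_vol_translatedInter hΩ hΩb hT hTb
  have hpointwise : ∀ᵐ τ ∂volume.restrict S,
      FF T ρ + muStar * vol (translatedInter Ω T τ) ≤ a τ + 1 / 2 * g τ := by
    filter_upwards [ae_restrict_of_ae hper, ae_restrict_mem hSm] with τ ⟨hf, hle⟩ hτ
    exact (FF_add_le_of_translatedInter hρ₀ hρ₁ hΩ hT hTb (hST τ hτ) hf).trans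
      (add_le_add_left hle _)
  have hFF : IntegrableOn (fun _ => FF T ρ) S := integrableOn_const hSb.measure_lt_top.ne
  have hmono := integral_mono_ae (hFF.add (hv.integrableOn.const_mul muStar))
    (ha.integrableOn.add (hg.integrableOn.const_mul (1 / 2))) hpointwise
  simp only [Pi.add_apply] at hmono
  rw [integral_add hFF (hv.integrableOn.const_mul muStar), setIntegral_const, smul_eq_mul,
    integral_const_mul, integral_add ha.integrableOn (hg.integrableOn.const_mul (1 / 2)),
    integral_const_mul] at hmono
  have haS : ∫ τ in S, a τ ≤ ∫ τ, a τ := setIntegral_le_integral ha (Eventually.of_forall ha₀)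
  have hgS : ∫ τ in S, g τ ≤ ∫ τ, g τ := setIntegral_le_integral hg
    (Eventually.of_forall fun τ => hc.integral_mul_localKernel_nonneg hT τ)
  calc vol S * FF T ρ + muStar * (vol T * vol Ω')
      ≤ vol S * FF T ρ + muStar * ∫ τ in S, vol (translatedInter Ω T τ) := by
        gcongr
        · exact muStar_nonneg
        · exact le_setIntegral_vol_translatedInter hΩ hΩb hΩ' hsub hT hTb hS
    _ ≤ (∫ τ in S, a τ) + 1 / 2 * ∫ τ in S, g τ := hmono
    _ ≤ vol T * per Ω + vol Ω * per T + 1 / 2 * ∫ τ, g τ := by linarith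

end Localization

section Tetrahedron

variable {Λ Ω T S Ω' : Set E3} {ρ D : ℝ}

/-- The window is first rotated so that the Graf–Schenker inequality controls its Coulomb energy. -/
lemma IsTetra.mul_FF_add_mul_vol_le (hTet : IsTetra T) (hTf : HasFinPer T) (hTD : T ⊆ ball 0 D)
    (hρ₀ : 0 ≤ ρ) (hρ₁ : ρ ≤ 1) (hΛ : MeasurableSet Λ) (hΛb : IsBounded Λ) (hΩ : MeasurableSet Ω)
    (hΩΛ : Ω ⊆ Λ) (hΩf : HasFinPer Ω) (hSm : MeasurableSet S) (hSb : IsBounded S)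
    (hSΛ : ∀ τ ∈ S, ∀ x ∈ ball (0 : E3) D, x + τ ∈ Λ) (hΩ' : MeasurableSet Ω') (hsub : Ω' ⊆ Ω)
    (hΩ'S : ∀ z ∈ Ω', ∀ x ∈ ball (0 : E3) D, z - x ∈ S) :
    vol S * FF T ρ + muStar * (vol T * vol Ω') ≤
      vol T * ldEnergy Λ ρ Ω + vol Ω * per T := by
  have hc := isCharge_chargeDensity hρ₀ hρ₁ hΛ hΛb hΩ hΩΛ
  obtain ⟨U, hU⟩ := hTet.exists_integral_mul_vol_translatedInter_le hc
  have hball : ∀ x ∈ U ⁻¹' T, x ∈ ball (0 : E3) D := fun x hx => by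
    rw [mem_ball_zero_iff, ← U.norm_map, ← mem_ball_zero_iff]
    exact hTD hx
  have hwindow := mul_FF_add_mul_vol_le_of_window hρ₀ hρ₁ hΛ hΛb hΩ hΩΛ hΩf
    (U.continuous.measurable hTet.isOpen.measurableSet) (isBounded_ball.subset hball)
    ((hasFinPer_preimage U).2 hTf) hSm hSb (fun τ hτ x hx => hSΛ τ hτ x (hball x hx)) hΩ' hsub
    fun z hz x hx => hΩ'S z hz x (hball x hx)
  simp only [translatedInter_preimage, vol_preimage, per_preimage, FF_preimage] at hwindow
  rw [ldEnergy_eq hc]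
  linarith

end Tetrahedron

/-! ### Cubes -/

section Cube

variable {a b : ℝ}

lemma cubeL_eq_preimage (a : ℝ) :
    cubeL a = WithLp.ofLp ⁻¹' Set.univ.pi fun _ : Fin 3 => Ioo (-(a / 2)) (a / 2) := by
  ext x
  simp only [cubeL, mem_ofPred_eq, mem_preimage, mem_univ_pi, mem_Ioo, abs_lt]

lemma measurableSet_cubeL (a : ℝ) : MeasurableSet (cubeL a) := by
  rw [cubeL_eq_preimage]
  exact (PiLp.volume_preserving_ofLp (Fin 3)).measurable
    (MeasurableSet.univ_pi fun _ => measurableSet_Ioo)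

lemma isBounded_cubeL (a : ℝ) : IsBounded (cubeL a) := by
  rw [cubeL_eq_preimage]
  exact (PiLp.antilipschitzWith_ofLp 2 fun _ : Fin 3 => ℝ).isBounded_preimage
    (IsBounded.pi fun _ => isBounded_Ioo _ _)

lemma convex_cubeL (a : ℝ) : Convex ℝ (cubeL a) := by
  rw [cubeL_eq_preimage]
  exact (convex_pi fun _ _ => convex_Ioo _ _).linear_preimage
    (WithLp.linearEquiv 2 ℝ (Fin 3 → ℝ)).toLinearMap

lemma vol_cubeL (ha : 0 ≤ a) : vol (cubeL a) = a ^ 3 := by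
  rw [vol, cubeL_eq_preimage, (PiLp.volume_preserving_ofLp (Fin 3)).measure_preimage
    (MeasurableSet.univ_pi fun _ => measurableSet_Ioo).nullMeasurableSet, Real.volume_pi_Ioo,
    Finset.prod_const, Finset.card_univ, Fintype.card_fin, sub_neg_eq_add, add_halves,
    ENNReal.toReal_pow, ENNReal.toReal_ofReal ha]

lemma cubeL_subset_cubeL (h : a ≤ b) : cubeL a ⊆ cubeL b := fun _ hx i =>
  (hx i).trans_le (by linarith)

lemma add_mem_cubeL {D : ℝ} {x y : E3} (hx : x ∈ ball (0 : E3) D) (hy : y ∈ cubeL a) :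
    x + y ∈ cubeL (a + 2 * D) := fun i => by
  have hxi : |x i| < D := (PiLp.norm_apply_le x i).trans_lt (mem_ball_zero_iff.1 hx)
  have hyi := hy i
  calc |x i + y i| ≤ |x i| + |y i| := abs_add_le _ _
    _ < (a + 2 * D) / 2 := by linarith

lemma hasFinPer_empty : HasFinPer ∅ :=
  (hasFinPer_and_per_le (c := 0) fun _ _ => by rw [setIntegral_empty]).1

lemma hasFinPer_cubeL (a : ℝ) : HasFinPer (cubeL a) := by
  rcases le_or_gt a 0 with ha | ha
  · have : cubeL a = ∅ := eq_empty_of_forall_notMem fun x hx => by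
      linarith [hx 0, abs_nonneg (x 0)]
    exact this ▸ hasFinPer_empty
  · refine (hasFinPer_and_per_le_of_convex (convex_cubeL a) (measurableSet_cubeL a)
      (isBounded_cubeL a) (c := 0) (r := a / 4) (by positivity) fun x hx i => ?_).1
    exact (PiLp.norm_apply_le x i).trans_lt ((mem_closedBall_zero_iff.1 hx).trans_lt (by linarith))

lemma vol_sub_le_vol_inter_cubeL {Ω : Set E3} (hΩ : Ω ⊆ cubeL b) (hab : a ≤ b) :
    vol Ω - (vol (cubeL b) - vol (cubeL a)) ≤ vol (Ω ∩ cubeL a) := by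
  have hcover : Ω ⊆ Ω ∩ cubeL a ∪ cubeL b \ cubeL a := fun x hx => by
    by_cases hxa : x ∈ cubeL a
    · exact Or.inl ⟨hx, hxa⟩
    · exact Or.inr ⟨hΩ hx, hxa⟩
  have hdiff : volume.real (cubeL b \ cubeL a) = vol (cubeL b) - vol (cubeL a) :=
    measureReal_sdiff (cubeL_subset_cubeL hab) (measurableSet_cubeL a)
      (isBounded_cubeL b).measure_lt_top.ne
  rw [← hdiff, sub_le_iff_le_add]
  refine (measureReal_mono hcover (measure_ne_top_of_subset ?_
    (isBounded_cubeL b).measure_lt_top.ne)).trans (measureReal_union_le _ _)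
  exact union_subset (inter_subset_left.trans hΩ) sdiff_subset

end Cube

section CubeEnergy

variable {ρ L : ℝ}

lemma exists_subset_cubeL_vol_eq (hρ₀ : 0 ≤ ρ) (hρ₁ : ρ ≤ 1) (hL : 0 ≤ L) :
    ∃ Ω : Set E3, MeasurableSet Ω ∧ Ω ⊆ cubeL L ∧ HasFinPer Ω ∧ vol Ω = ρ * vol (cubeL L) := by
  have hs : (ρ ^ (1 / 3 : ℝ)) ^ 3 = ρ := by
    rw [← Real.rpow_natCast, ← Real.rpow_mul hρ₀]
    norm_num
  have hs₀ : 0 ≤ ρ ^ (1 / 3 : ℝ) := Real.rpow_nonneg hρ₀ _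
  have hs₁ : ρ ^ (1 / 3 : ℝ) ≤ 1 := Real.rpow_le_one hρ₀ hρ₁ (by norm_num)
  refine ⟨cubeL (ρ ^ (1 / 3 : ℝ) * L), measurableSet_cubeL _,
    cubeL_subset_cubeL (mul_le_of_le_one_left hL hs₁), hasFinPer_cubeL _, ?_⟩
  rw [vol_cubeL (mul_nonneg hs₀ hL), vol_cubeL hL, mul_pow, hs]

lemma le_EE_cubeL (hρ₀ : 0 ≤ ρ) (hρ₁ : ρ ≤ 1) (hL : 0 ≤ L) {c : ℝ}
    (h : ∀ Ω, MeasurableSet Ω → Ω ⊆ cubeL L → HasFinPer Ω → vol Ω = ρ * L ^ 3 →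
      c ≤ ldEnergy (cubeL L) ρ Ω) : c ≤ EE (cubeL L) ρ := by
  obtain ⟨A, hA, hAL, hAf, hAv⟩ := exists_subset_cubeL_vol_eq hρ₀ hρ₁ hL
  refine le_csInf ⟨_, A, hA, hAL, hAf, hAv, rfl⟩ ?_
  rintro t ⟨Ω, hΩ, hΩL, hΩf, hΩv, rfl⟩
  exact h Ω hΩ hΩL hΩf (vol_cubeL hL ▸ hΩv)

lemma EE_cubeL_nonneg (hρ₀ : 0 ≤ ρ) (hρ₁ : ρ ≤ 1) (hL : 0 ≤ L) : 0 ≤ EE (cubeL L) ρ :=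
  le_EE_cubeL hρ₀ hρ₁ hL fun _ hΩ hΩL _ _ => ldEnergy_nonneg
    (isCharge_chargeDensity hρ₀ hρ₁ (measurableSet_cubeL L) (isBounded_cubeL L) hΩ hΩL)

end CubeEnergy

/-! ### Comparing the cube with a tetrahedron -/

lemma pow_three_sub_le_sub_pow_three {L t : ℝ} (h : t ≤ 3 * L) :
    L ^ 3 - 3 * t * L ^ 2 ≤ (L - t) ^ 3 := by
  nlinarith [mul_nonneg (sq_nonneg t) (sub_nonneg.2 h)]

section Comparison

variable {T : Set E3} {ρ L D : ℝ} (hT : IsTetra T) (hTf : HasFinPer T) (hTD : T ⊆ ball 0 D)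
  (hρ₀ : 0 ≤ ρ) (hρ₁ : ρ ≤ 1)
include hT hTf hTD hρ₀ hρ₁

lemma IsTetra.pow_three_mul_FF_add_le (hD : 0 ≤ D) (hDL : 4 * D ≤ L) {Ω : Set E3}
    (hΩ : MeasurableSet Ω) (hΩL : Ω ⊆ cubeL L) (hΩf : HasFinPer Ω) :
    L ^ 3 * FF T ρ - 6 * D * L ^ 2 * |FF T ρ| + muStar * (vol T * (vol Ω - 12 * D * L ^ 2)) ≤
      vol T * ldEnergy (cubeL L) ρ Ω + vol Ω * per T := by
  have hloc := hT.mul_FF_add_mul_vol_le hTf hTD hρ₀ hρ₁ (measurableSet_cubeL L)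
    (isBounded_cubeL L) hΩ hΩL hΩf (measurableSet_cubeL (L - 2 * D)) (isBounded_cubeL _)
    (fun τ hτ x hx => by simpa only [sub_add_cancel] using add_mem_cubeL hx hτ)
    (hΩ.inter (measurableSet_cubeL (L - 4 * D))) inter_subset_left fun z hz x hx => by
      have hmem := add_mem_cubeL (x := -x) (by simpa using hx) hz.2
      rwa [neg_add_eq_sub, show L - 4 * D + 2 * D = L - 2 * D by ring] at hmem
  rw [vol_cubeL (by linarith)] at hloc
  have hΩvol : vol Ω - 12 * D * L ^ 2 ≤ vol (Ω ∩ cubeL (L - 4 * D)) := by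
    refine le_trans ?_ (vol_sub_le_vol_inter_cubeL hΩL (by linarith))
    rw [vol_cubeL (by linarith), vol_cubeL (by linarith)]
    linarith [pow_three_sub_le_sub_pow_three (L := L) (t := 4 * D) (by linarith)]
  have hF : L ^ 3 * FF T ρ - 6 * D * L ^ 2 * |FF T ρ| ≤ (L - 2 * D) ^ 3 * FF T ρ := by
    have hle : (L - 2 * D) ^ 3 ≤ L ^ 3 := pow_le_pow_left₀ (by linarith) (by linarith) 3
    have hge := pow_three_sub_le_sub_pow_three (L := L) (t := 2 * D) (by linarith)
    nlinarith [mul_le_mul_of_nonneg_left (le_abs_self (FF T ρ)) (sub_nonneg.2 hle),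
      mul_le_mul_of_nonneg_right hge (abs_nonneg (FF T ρ))]
  have hμ : muStar * (vol T * (vol Ω - 12 * D * L ^ 2)) ≤
      muStar * (vol T * vol (Ω ∩ cubeL (L - 4 * D))) := by
    gcongr
    · exact muStar_nonneg
    · exact ENNReal.toReal_nonneg
  linarith

theorem IsTetra.FF_div_vol_sub_le (hTv : 0 < vol T) (hD : 0 < D) (hL : 0 < L) :
    FF T ρ / vol T - 12 * (D / L) * (muStar + |FF T ρ| / vol T) - ρ * (per T / vol T) ≤
      EE (cubeL L) ρ / L ^ 3 - muStar * ρ := by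
  have hμ := muStar_nonneg
  have hF : 0 ≤ |FF T ρ| / vol T := by positivity
  have hper : 0 ≤ ρ * (per T / vol T) := mul_nonneg hρ₀ (div_nonneg (per_nonneg T) hTv.le)
  rcases le_total (4 * D) L with hDL | hDL
  · have hEE : (L ^ 3 * FF T ρ - 6 * D * L ^ 2 * |FF T ρ| + muStar * (vol T * (ρ * L ^ 3 -
        12 * D * L ^ 2)) - ρ * L ^ 3 * per T) / vol T ≤ EE (cubeL L) ρ :=
      le_EE_cubeL hρ₀ hρ₁ hL.le fun Ω hΩ hΩL hΩf hΩv => by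
        have hΩE := hT.pow_three_mul_FF_add_le hTf hTD hρ₀ hρ₁ hD.le hDL hΩ hΩL hΩf
        rw [hΩv] at hΩE
        rw [div_le_iff₀ hTv]
        linarith
    have hdiv := div_le_div_of_nonneg_right hEE (pow_pos hL 3).le
    have hnormalize : (L ^ 3 * FF T ρ - 6 * D * L ^ 2 * |FF T ρ| + muStar * (vol T * (ρ * L ^ 3 -
        12 * D * L ^ 2)) - ρ * L ^ 3 * per T) / vol T / L ^ 3 =
        FF T ρ / vol T - 6 * (D / L) * (|FF T ρ| / vol T) + muStar * ρ - 12 * (D / L) * muStar -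
          ρ * (per T / vol T) := by
      field_simp
      ring
    have hslack : 0 ≤ 6 * (D / L) * (|FF T ρ| / vol T) := by positivity
    linarith
  · have hEE : 0 ≤ EE (cubeL L) ρ / L ^ 3 :=
      div_nonneg (EE_cubeL_nonneg hρ₀ hρ₁ hL.le) (pow_pos hL 3).le
    have hone : 1 ≤ 12 * (D / L) := by
      rw [← mul_div_assoc, one_le_div hL]
      linarith
    have habs : FF T ρ / vol T ≤ |FF T ρ| / vol T := by gcongr; exact le_abs_self _
    have hμρ : muStar * ρ ≤ muStar := mul_le_of_le_one_right hμ hρ₁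
    linarith [le_mul_of_one_le_left (add_nonneg hμ hF) hone]

end Comparison

section Scaling

variable {l : ℝ}

lemma vol_smul (hl : 0 ≤ l) (A : Set E3) : vol (l • A) = l ^ 3 * vol A := by
  rw [vol, Measure.addHaar_smul, finrank_euclideanSpace_fin, abs_of_nonneg (pow_nonneg hl 3),
    ENNReal.toReal_mul, ENNReal.toReal_ofReal (pow_nonneg hl 3), vol]

lemma IsTetra.hasFinPer_smul_and_per_smul_le {T : Set E3} (hT : IsTetra T) (hl : 0 < l) {c : E3}
    {r : ℝ} (hr : 0 < r) (hc : closedBall c r ⊆ T) :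
    HasFinPer (l • T) ∧ per (l • T) ≤ 18 * vol (l • T) / (l * r) := by
  have hlT := hT.smul hl.ne'
  have hball : l • closedBall c r = closedBall (l • c) (l * r) := by
    rw [_root_.smul_closedBall l c hr.le, Real.norm_of_nonneg hl.le]
  exact hasFinPer_and_per_le_of_convex hlT.convex hlT.isOpen.measurableSet hlT.isBounded
    (mul_pos hl hr) (hball ▸ smul_set_mono hc)

lemma smul_subset_ball {A : Set E3} {d : ℝ} (hl : 0 < l) (hA : A ⊆ ball 0 d) :
    l • A ⊆ ball 0 (l * d) := by
  rintro _ ⟨x, hx, rfl⟩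
  simpa only [mem_ball_zero_iff, norm_smul, Real.norm_of_nonneg hl.le, mul_lt_mul_iff_right₀ hl]
    using hA hx

end Scaling

/-- **Finite volume Graf–Schenker bound**: for a tetrahedron `Δ` of unit volume there is a
constant `C` depending only on `Δ` such that for every `ρ ∈ [0,1]` and all `ℓ, L > 0`,
`E_{Λ_L}(ρ)/L³ − μ*ρ ≥ F_{ℓΔ}(ρ)/ℓ³ − C(μ* + |F_{ℓΔ}(ρ)|/ℓ³)(ℓ/L) − Cρ/ℓ`. -/
theorem graf_schenker_finite_volume (Δ : Set E3) (hΔ : IsTetra Δ) (hΔvol : volume Δ = 1) :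
    ∃ C : ℝ, 0 < C ∧ ∀ ρ : ℝ, 0 ≤ ρ → ρ ≤ 1 → ∀ ℓ L : ℝ, 0 < ℓ → 0 < L →
      FF (ℓ • Δ) ρ / ℓ^3 - C * (muStar + |FF (ℓ • Δ) ρ| / ℓ^3) * (ℓ / L) - C * ρ / ℓ
        ≤ EE (cubeL L) ρ / L^3 - muStar * ρ := by
  obtain ⟨d, hd, hΔd⟩ := hΔ.isBounded.subset_ball_lt 0 0
  obtain ⟨c, hcΔ⟩ := nonempty_of_measure_ne_zero (hΔvol.trans_ne one_ne_zero)
  obtain ⟨r, hr, hcr⟩ := nhds_basis_closedBall.mem_iff.1 (hΔ.isOpen.mem_nhds hcΔ)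
  refine ⟨12 * d + 18 / r, by positivity, fun ρ hρ₀ hρ₁ ℓ L hℓ hL => ?_⟩
  have hvol : vol (ℓ • Δ) = ℓ ^ 3 := by
    rw [vol_smul hℓ.le, vol, hΔvol, ENNReal.toReal_one, mul_one]
  obtain ⟨hfin, hper⟩ := hΔ.hasFinPer_smul_and_per_smul_le hℓ hr hcr
  have hmain := (hΔ.smul hℓ.ne').FF_div_vol_sub_le hfin (smul_subset_ball hℓ hΔd) hρ₀ hρ₁
    (hvol ▸ pow_pos hℓ 3) (mul_pos hℓ hd) hL
  rw [hvol] at hper hmain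
  refine le_trans (sub_le_sub (sub_le_sub_left ?_ _) ?_) hmain
  · have hnonneg : 0 ≤ muStar + |FF (ℓ • Δ) ρ| / ℓ ^ 3 := add_nonneg muStar_nonneg (by positivity)
    calc 12 * (ℓ * d / L) * (muStar + |FF (ℓ • Δ) ρ| / ℓ ^ 3)
        = 12 * d * (muStar + |FF (ℓ • Δ) ρ| / ℓ ^ 3) * (ℓ / L) := by ring
      _ ≤ (12 * d + 18 / r) * (muStar + |FF (ℓ • Δ) ρ| / ℓ ^ 3) * (ℓ / L) := by
        gcongr
        exact le_add_of_nonneg_right (by positivity)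
  · calc ρ * (per (ℓ • Δ) / ℓ ^ 3) ≤ ρ * (18 * ℓ ^ 3 / (ℓ * r) / ℓ ^ 3) := by gcongr
      _ = 18 / r * ρ / ℓ := by field_simp
      _ ≤ (12 * d + 18 / r) * ρ / ℓ := by gcongr; exact le_add_of_nonneg_left (by positivity)

end
end

section
/- Let r* > 0, let Ω* ⊂ B(0,r*) be a measurable set with |Ω*| = m, let z ∈ ℝ³, and let Λ ⊂ ℝ³ be a bounded measurable set. Then the rotation-averaged interaction with the background satisfies ⨍_{SO(3)} ∬_{(z+RΩ*)×Λ} |x − y|⁻¹ dx dy dR ≥ m ∫_Λ |z − y|⁻¹ dy − 2π r*² m, where ⨍ denotes the average with respect to the Haar probability measure on SO(3). -/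
open MeasureTheory Metric Set Filter Bornology
open scoped Topology ENNReal NNReal Pointwise

noncomputable section

/-!
The orbit average over a rotation of a point of norm `ρ` is the uniform distribution on the sphere
of radius `ρ`, of which only isotropy is used. Expanding the identity
`𝔼 ⟪u + d • v, X⟫ ^ (2 * k + 2) = (1 + d ^ 2) ^ (k + 1) * 𝔼 ⟪u, X⟫ ^ (2 * k + 2)` (`u ⟂ v` unit
vectors) to second order in `d` determines all moments of `⟪w, X⟫`, and in dimension three they are
those of the uniform distribution on `[-‖w‖ * ρ, ‖w‖ * ρ]` (Archimedes' hat-box theorem).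
Integrating `1 / ‖w - X‖ = (‖w‖ ^ 2 + ρ ^ 2 - 2 * ⟪w, X⟫) ^ (-1 / 2)` against it gives Newton's
theorem: outside the sphere the averaged charge has the potential of a point charge at the centre.
Hence averaging over rotations loses at most the interaction of the point charge `z` with the part
of the background inside `B(z, r)`, and `∫_{B(0, r)} |y|⁻¹ dy = 2 * π * r ^ 2`.
-/

open Module (finrank)
open scoped Polynomial RealInnerProductSpace

section HausdorffMoments

variable {P Q : Measure ℝ} {a b : ℝ}

lemma integrable_of_continuous_of_ae_mem_Icc [IsFiniteMeasure P] (hP : ∀ᵐ x ∂P, x ∈ Icc a b)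
    {f : ℝ → ℝ} (hf : Continuous f) : Integrable f P := by
  obtain ⟨C, hC⟩ := isCompact_Icc.exists_bound_of_continuousOn (hf.continuousOn (s := Icc a b))
  exact .of_bound hf.aestronglyMeasurable C (hP.mono hC)

lemma integral_eval_eq_sum_coeff_mul_integral_pow [IsFiniteMeasure P]
    (hP : ∀ᵐ x ∂P, x ∈ Icc a b) (p : ℝ[X]) :
    ∫ x, p.eval x ∂P = p.sum fun n c => c * ∫ x, x ^ n ∂P := by
  simp only [Polynomial.eval_eq_sum, Polynomial.sum_def, ← integral_const_mul]
  exact integral_finsetSum _ fun n _ => integrable_of_continuous_of_ae_mem_Icc hP (by fun_prop)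

lemma abs_integral_sub_le_of_ae_abs_sub_le [IsFiniteMeasure P] {f g : ℝ → ℝ} {ε : ℝ}
    (hf : Integrable f P) (hg : Integrable g P) (h : ∀ᵐ x ∂P, |f x - g x| ≤ ε) :
    |∫ x, f x ∂P - ∫ x, g x ∂P| ≤ ε * P.real univ := by
  rw [← integral_sub hf hg]
  exact norm_integral_le_of_norm_le_const (f := fun x => f x - g x) h

theorem measure_ext_of_forall_integral_pow_eq [IsFiniteMeasure P] [IsFiniteMeasure Q]
    (hP : ∀ᵐ x ∂P, x ∈ Icc a b) (hQ : ∀ᵐ x ∂Q, x ∈ Icc a b)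
    (h : ∀ n : ℕ, ∫ x, x ^ n ∂P = ∫ x, x ^ n ∂Q) : P = Q := by
  refine ext_of_forall_integral_eq_of_IsFiniteMeasure fun f =>
    eq_of_forall_dist_le fun δ hδ => ?_
  set K := P.real univ + Q.real univ
  have : 0 ≤ K := by positivity
  obtain ⟨p, hp⟩ := exists_polynomial_near_of_continuousOn a b f f.continuous.continuousOn
    (δ / (K + 1)) (by positivity)
  have approx {M : Measure ℝ} [IsFiniteMeasure M] (hM : ∀ᵐ x ∂M, x ∈ Icc a b) :
      dist (∫ x, p.eval x ∂M) (∫ x, f x ∂M) ≤ δ / (K + 1) * M.real univ :=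
    abs_integral_sub_le_of_ae_abs_sub_le
      (integrable_of_continuous_of_ae_mem_Icc hM p.continuous)
      (integrable_of_continuous_of_ae_mem_Icc hM f.continuous)
      (hM.mono fun x hx => (hp x hx).le)
  have polynomial_eq : ∫ x, p.eval x ∂P = ∫ x, p.eval x ∂Q := by
    simp only [integral_eval_eq_sum_coeff_mul_integral_pow hP,
      integral_eval_eq_sum_coeff_mul_integral_pow hQ, h]
  calc dist (∫ x, f x ∂P) (∫ x, f x ∂Q)
      ≤ dist (∫ x, p.eval x ∂P) (∫ x, f x ∂P) + dist (∫ x, p.eval x ∂P) (∫ x, f x ∂Q) :=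
        dist_triangle_left _ _ _
    _ ≤ δ / (K + 1) * P.real univ + δ / (K + 1) * Q.real univ :=
        add_le_add (approx hP) (polynomial_eq ▸ approx hQ)
    _ = δ * (K / (K + 1)) := by ring
    _ ≤ δ := mul_le_of_le_one_right hδ.le (div_le_one_of_le₀ (by linarith) (by positivity))

end HausdorffMoments

section CoulombPotential

variable {E : Type*} [NormedAddCommGroup E]

lemma preimage_sub_right_ball_zero (x : E) (r : ℝ) : (· - x) ⁻¹' ball 0 r = ball x r := by
  ext y
  simp [dist_eq_norm]

lemma one_div_norm_sub_le_indicator_add_one (x y : E) :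
    1 / ‖x - y‖ ≤ (ball x 1).indicator (fun y => 1 / ‖x - y‖) y + 1 := by
  by_cases hy : y ∈ ball x 1
  · simp [hy]
  · have : 1 ≤ ‖x - y‖ := by simpa [dist_eq_norm, norm_sub_rev] using hy
    simpa [hy] using inv_le_one_of_one_le₀ this

variable [MeasurableSpace E]

/-- The Coulomb potential at `x` of the charge distribution `ν`. The kernel takes the junk value
`1 / 0 = 0` at `y = x`, and the potential is `0` where the kernel is not integrable. -/
def coulombPotential (ν : Measure E) (x : E) : ℝ := ∫ y, 1 / ‖x - y‖ ∂ν

lemma coulombPotential_nonneg (ν : Measure E) (x : E) : 0 ≤ coulombPotential ν x :=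
  integral_nonneg fun _ => by positivity

variable [BorelSpace E]

lemma measurable_coulombPotential [SecondCountableTopology E] (ν : Measure E) [SFinite ν] :
    Measurable (coulombPotential ν) :=
  have kernel : Measurable fun p : E × E => 1 / ‖p.1 - p.2‖ := by fun_prop
  kernel.stronglyMeasurable.integral_prod_right.measurable

lemma setIntegral_ball_norm_sub (ν : Measure E) [ν.IsAddRightInvariant] (f : ℝ → ℝ) (x : E)
    (r : ℝ) : ∫ y in ball x r, f ‖x - y‖ ∂ν = ∫ y in ball 0 r, f ‖y‖ ∂ν := by
  simp only [norm_sub_rev x]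
  rw [← preimage_sub_right_ball_zero x]
  exact (measurePreserving_sub_right ν x).setIntegral_preimage_emb
    (Homeomorph.subRight x).measurableEmbedding (f ‖·‖) _

variable [NormedSpace ℝ E] [FiniteDimensional ℝ E] (ν : Measure E) [ν.IsAddHaarMeasure]

lemma integrableOn_ball_one_div_norm_sub (hE : 1 < finrank ℝ E) (x : E) (r : ℝ) :
    IntegrableOn (fun y => 1 / ‖x - y‖) (ball x r) ν := by
  have centered : IntegrableOn (fun y : E => 1 / ‖y‖) (ball 0 r) ν :=
    integrableOn_ball_of_norm_le_rpow (C := 1) (α := 1) hE.le (by exact_mod_cast hE)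
      (.of_forall fun y => by simp [Real.rpow_neg_one])
      (by fun_prop : Measurable _).aestronglyMeasurable
  simp only [norm_sub_rev x]
  rw [← preimage_sub_right_ball_zero x]
  exact ((measurePreserving_sub_right ν x).integrableOn_comp_preimage
    (Homeomorph.subRight x).measurableEmbedding).2 centered

variable {ν} {Λ : Set E}

lemma integrable_indicator_ball_one_div_norm_sub (hE : 1 < finrank ℝ E) (x : E) (r : ℝ) :
    Integrable ((ball x r).indicator fun y => 1 / ‖x - y‖) ν :=
  (integrableOn_ball_one_div_norm_sub ν hE x r).integrable_indicator measurableSet_ball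

lemma setIntegral_indicator_ball_one_div_norm_sub_le (hE : 1 < finrank ℝ E) (Λ : Set E) (x : E)
    (r : ℝ) : ∫ y in Λ, (ball x r).indicator (fun y => 1 / ‖x - y‖) y ∂ν ≤
      ∫ y in ball 0 r, 1 / ‖y‖ ∂ν := by
  rw [← setIntegral_ball_norm_sub ν (1 / ·) x, ← integral_indicator measurableSet_ball]
  exact setIntegral_le_integral (integrable_indicator_ball_one_div_norm_sub hE x r)
    (.of_forall fun y => indicator_nonneg (fun _ _ => by positivity) y)

lemma integrableOn_one_div_norm_sub (hE : 1 < finrank ℝ E) (hΛ : ν Λ ≠ ∞) (x : E) :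
    IntegrableOn (fun y => 1 / ‖x - y‖) Λ ν := by
  have near := integrable_indicator_ball_one_div_norm_sub (ν := ν) hE x 1
  refine (near.integrableOn.add (integrableOn_const hΛ (C := (1 : ℝ)))).mono'
    (by fun_prop : Measurable _).aestronglyMeasurable (.of_forall fun y => ?_)
  rw [Real.norm_of_nonneg (by positivity)]
  exact one_div_norm_sub_le_indicator_add_one x y

lemma coulombPotential_restrict_le (hE : 1 < finrank ℝ E) (hΛ : ν Λ ≠ ∞) (x : E) :
    coulombPotential (ν.restrict Λ) x ≤ (∫ y in ball 0 1, 1 / ‖y‖ ∂ν) + ν.real Λ := by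
  have near := integrable_indicator_ball_one_div_norm_sub (ν := ν) hE x 1
  have far : IntegrableOn (fun _ => (1 : ℝ)) Λ ν := integrableOn_const hΛ
  calc ∫ y in Λ, 1 / ‖x - y‖ ∂ν
      ≤ ∫ y in Λ, ((ball x 1).indicator (fun y => 1 / ‖x - y‖) y + 1) ∂ν :=
        integral_mono (integrableOn_one_div_norm_sub hE hΛ x) (near.integrableOn.add far)
          (one_div_norm_sub_le_indicator_add_one x)
    _ = (∫ y in Λ, (ball x 1).indicator (fun y => 1 / ‖x - y‖) y ∂ν) + ν.real Λ := by
        rw [integral_add near.integrableOn far]; simp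
    _ ≤ (∫ y in ball 0 1, 1 / ‖y‖ ∂ν) + ν.real Λ := by
        gcongr
        exact setIntegral_indicator_ball_one_div_norm_sub_le hE Λ x 1

variable {α : Type*} [MeasurableSpace α] {P : Measure α} [IsFiniteMeasure P] {φ : α → E}

lemma integrable_coulombPotential_restrict_comp (hE : 1 < finrank ℝ E) (hΛ : ν Λ ≠ ∞)
    (hφ : Measurable φ) : Integrable (fun a => coulombPotential (ν.restrict Λ) (φ a)) P :=
  .of_bound ((measurable_coulombPotential (ν.restrict Λ)).comp hφ).aestronglyMeasurable _
    (.of_forall fun a => by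
      rw [Real.norm_of_nonneg (coulombPotential_nonneg _ _)]
      exact coulombPotential_restrict_le hE hΛ (φ a))

lemma integrable_prod_one_div_norm_sub (hE : 1 < finrank ℝ E) (hΛ : ν Λ ≠ ∞) (hφ : Measurable φ) :
    Integrable (fun q : α × E => 1 / ‖φ q.1 - q.2‖) (P.prod (ν.restrict Λ)) := by
  refine (integrable_prod_iff (by fun_prop : Measurable _).aestronglyMeasurable).2
    ⟨.of_forall fun a => integrableOn_one_div_norm_sub hE hΛ (φ a), ?_⟩
  simp only [Real.norm_of_nonneg (one_div_nonneg.2 (norm_nonneg _))]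
  exact integrable_coulombPotential_restrict_comp hE hΛ hφ

end CoulombPotential

lemma integral_cond_Icc {a b : ℝ} (hab : a ≤ b) (f : ℝ → ℝ) :
    ∫ s, f s ∂(ProbabilityTheory.cond volume (Icc a b)) = (b - a)⁻¹ * ∫ s in a..b, f s := by
  rw [ProbabilityTheory.cond, integral_smul_measure, Real.volume_Icc, ENNReal.toReal_inv,
    ENNReal.toReal_ofReal (sub_nonneg.2 hab), intervalIntegral.integral_of_le hab,
    integral_Icc_eq_integral_Ioc, smul_eq_mul]

lemma integral_inv_sqrt_sub_two_mul {s t : ℝ} (ht : 0 ≤ t) (hts : t < s) :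
    ∫ τ in -(s * t)..s * t, 1 / √(s ^ 2 + t ^ 2 - 2 * τ) = 2 * t := by
  have pos {τ : ℝ} (hτ : τ ∈ uIcc (-(s * t)) (s * t)) : 0 < s ^ 2 + t ^ 2 - 2 * τ := by
    rw [uIcc_of_le (by nlinarith)] at hτ
    nlinarith [hτ.2, sq_pos_of_pos (sub_pos.2 hts)]
  have deriv {τ : ℝ} (hτ : τ ∈ uIcc (-(s * t)) (s * t)) :
      HasDerivAt (fun τ => -√(s ^ 2 + t ^ 2 - 2 * τ)) (1 / √(s ^ 2 + t ^ 2 - 2 * τ)) τ := by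
    have inside : HasDerivAt (fun τ => s ^ 2 + t ^ 2 - 2 * τ) (-2) τ := by
      simpa using ((hasDerivAt_id τ).const_mul 2).const_sub (s ^ 2 + t ^ 2)
    exact (inside.sqrt (pos hτ).ne').fun_neg.congr_deriv (by field_simp)
  have cont : ContinuousOn (fun τ => 1 / √(s ^ 2 + t ^ 2 - 2 * τ)) (uIcc (-(s * t)) (s * t)) :=
    continuousOn_const.div (by fun_prop) fun τ hτ => (Real.sqrt_pos.2 (pos hτ)).ne'
  rw [intervalIntegral.integral_eq_sub_of_hasDerivAt (fun τ => deriv) cont.intervalIntegrable,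
    show s ^ 2 + t ^ 2 - 2 * (s * t) = (s - t) ^ 2 by ring,
    show s ^ 2 + t ^ 2 - 2 * -(s * t) = (s + t) ^ 2 by ring,
    Real.sqrt_sq (by linarith), Real.sqrt_sq (by linarith)]
  ring

lemma coeff_two_eq_of_forall_sum_eq_one_add_sq_pow {c : ℕ → ℝ} {M : ℝ} {n k : ℕ} (hn : 2 ≤ n)
    (h : ∀ d : ℝ, ∑ j ∈ Finset.range (n + 1), c j * d ^ j = (1 + d ^ 2) ^ k * M) :
    c 2 = k * M := by
  set p : ℝ[X] := ∑ j ∈ Finset.range (n + 1), Polynomial.monomial j (c j)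
  set q : ℝ[X] := Polynomial.expand ℝ 2 ((1 + Polynomial.X) ^ k) * Polynomial.C M
  have p_eq_q : p = q := Polynomial.funext fun d => by
    simpa [p, q, Polynomial.eval_finsetSum] using h d
  have coeff_q : q.coeff 2 = k * M := by
    have := Polynomial.coeff_expand_mul (R := ℝ) two_pos ((1 + Polynomial.X) ^ k) 1
    rw [one_mul] at this
    rw [Polynomial.coeff_mul_C, this, Polynomial.coeff_one_add_X_pow, Nat.choose_one_right]
  have coeff_p : p.coeff 2 = c 2 := by
    simp [p, Polynomial.coeff_monomial, hn]
  rw [← coeff_p, p_eq_q, coeff_q]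

section IsotropicMeasures

variable {E : Type*} [NormedAddCommGroup E] [InnerProductSpace ℝ E] [MeasurableSpace E]

/-- A measure all of whose one-dimensional marginals `⟪v, ·⟫` depend on `v` only through `‖v‖`; for
finite measures on a Euclidean space this is invariance under the orthogonal group. -/
def IsIsotropic (σ : Measure E) : Prop :=
  ∀ ⦃v w : E⦄, ‖v‖ = ‖w‖ → σ.map (⟪v, ·⟫) = σ.map (⟪w, ·⟫)

variable [BorelSpace E] {σ : Measure E} {ρ : ℝ}

lemma IsIsotropic.integral_comp_inner_eq (hσ : IsIsotropic σ) {v w : E} (h : ‖v‖ = ‖w‖)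
    {f : ℝ → ℝ} (hf : Measurable f) : ∫ y, f ⟪v, y⟫ ∂σ = ∫ y, f ⟪w, y⟫ ∂σ := by
  rw [← integral_map (φ := (⟪v, ·⟫)) (by fun_prop) hf.aestronglyMeasurable, hσ h,
    integral_map (by fun_prop) hf.aestronglyMeasurable]

lemma IsIsotropic.integral_inner_pow_eq_zero_of_odd (hσ : IsIsotropic σ) (w : E) {n : ℕ}
    (hn : Odd n) : ∫ y, ⟪w, y⟫ ^ n ∂σ = 0 := by
  have reflected := hσ.integral_comp_inner_eq (norm_neg w) (f := (· ^ n)) (by fun_prop)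
  simp only [inner_neg_left, hn.neg_pow, integral_neg] at reflected
  linarith

lemma IsIsotropic.integral_inner_pow (hσ : IsIsotropic σ) {u : E} (hu : ‖u‖ = 1) (w : E) (n : ℕ) :
    ∫ y, ⟪w, y⟫ ^ n ∂σ = ‖w‖ ^ n * ∫ y, ⟪u, y⟫ ^ n ∂σ := by
  have h : ‖w‖ = ‖‖w‖ • u‖ := by rw [norm_smul, norm_norm, hu, mul_one]
  rw [hσ.integral_comp_inner_eq h (f := (· ^ n)) (by fun_prop), ← integral_const_mul]
  simp only [real_inner_smul_left, mul_pow]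

lemma integrable_inner_pow_mul_inner_pow [IsFiniteMeasure σ] (hρ : ∀ᵐ y ∂σ, ‖y‖ = ρ) (u v : E)
    (i j : ℕ) : Integrable (fun y => ⟪u, y⟫ ^ i * ⟪v, y⟫ ^ j) σ := by
  refine .of_bound (by fun_prop : Measurable _).aestronglyMeasurable ((‖u‖ * ρ) ^ i * (‖v‖ * ρ) ^ j)
    (hρ.mono fun y hy => ?_)
  rw [norm_mul, norm_pow, norm_pow, ← hy]
  gcongr <;> exact norm_inner_le_norm _ _

lemma integral_inner_add_smul_pow [IsFiniteMeasure σ] (hρ : ∀ᵐ y ∂σ, ‖y‖ = ρ) (u v : E) (d : ℝ)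
    (n : ℕ) : ∫ y, ⟪u + d • v, y⟫ ^ n ∂σ =
      ∑ j ∈ Finset.range (n + 1), (∫ y, ⟪u, y⟫ ^ (n - j) * ⟪v, y⟫ ^ j ∂σ) * n.choose j * d ^ j := by
  simp only [mul_assoc _ (n.choose _ : ℝ), ← integral_mul_const]
  rw [← integral_finsetSum _ fun j _ =>
    (integrable_inner_pow_mul_inner_pow hρ u v (n - j) j).mul_const _]
  refine integral_congr_ae (.of_forall fun y => ?_)
  simp only [inner_add_left, real_inner_smul_left, add_comm ⟪u, y⟫, add_pow]
  exact Finset.sum_congr rfl fun j _ => by ring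

lemma IsIsotropic.integral_inner_pow_mul_inner_sq [IsFiniteMeasure σ] (hσ : IsIsotropic σ)
    (hρ : ∀ᵐ y ∂σ, ‖y‖ = ρ) {u v : E} (hu : ‖u‖ = 1) (hv : ‖v‖ = 1) (huv : ⟪u, v⟫ = 0) (k : ℕ) :
    (2 * k + 1) * ∫ y, ⟪u, y⟫ ^ (2 * k) * ⟪v, y⟫ ^ 2 ∂σ = ∫ y, ⟪u, y⟫ ^ (2 * k + 2) ∂σ := by
  have norm_sq (d : ℝ) : ‖u + d • v‖ ^ 2 = 1 + d ^ 2 := by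
    rw [norm_add_sq_real, inner_smul_right, huv, norm_smul, hu, hv]
    simp
  have coeff_two := coeff_two_eq_of_forall_sum_eq_one_add_sq_pow (n := 2 * k + 2) (k := k + 1)
    (by lia) fun d => by
      rw [← integral_inner_add_smul_pow hρ u v d, hσ.integral_inner_pow hu,
        show 2 * k + 2 = 2 * (k + 1) by ring, pow_mul, norm_sq]
  rw [Nat.add_sub_cancel, Nat.cast_choose_two] at coeff_two
  push_cast at coeff_two
  have : (k + 1 : ℝ) ≠ 0 := by positivity
  apply mul_left_cancel₀ this
  linear_combination coeff_two

lemma IsIsotropic.integral_inner_pow_recursion [IsFiniteMeasure σ] (hσ : IsIsotropic σ)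
    (hρ : ∀ᵐ y ∂σ, ‖y‖ = ρ) {ι : Type*} [Fintype ι] (b : OrthonormalBasis ι ℝ E) (i : ι) (k : ℕ) :
    (2 * k + 1) * ρ ^ 2 * ∫ y, ⟪b i, y⟫ ^ (2 * k) ∂σ =
      (2 * k + Fintype.card ι) * ∫ y, ⟪b i, y⟫ ^ (2 * k + 2) ∂σ := by
  classical
  set M := ∫ y, ⟪b i, y⟫ ^ (2 * k + 2) ∂σ
  have summand (j : ι) : (2 * k + 1) * ∫ y, ⟪b i, y⟫ ^ (2 * k) * ⟪b j, y⟫ ^ 2 ∂σ =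
      M + if j = i then 2 * k * M else 0 := by
    split_ifs with hji
    · simp only [hji, ← pow_add, M]
      ring
    · rw [add_zero, hσ.integral_inner_pow_mul_inner_sq hρ (b.norm_eq_one i) (b.norm_eq_one j)
        (b.inner_eq_zero (Ne.symm hji))]
  calc (2 * k + 1) * ρ ^ 2 * ∫ y, ⟪b i, y⟫ ^ (2 * k) ∂σ
      = (2 * k + 1) * ∫ y, ∑ j, ⟪b i, y⟫ ^ (2 * k) * ⟪b j, y⟫ ^ 2 ∂σ := by
        rw [mul_assoc, ← integral_const_mul]
        congr 1
        refine integral_congr_ae (hρ.mono fun y hy => ?_)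
        simp only [← Finset.mul_sum, b.sum_sq_inner_right, hy]
        ring
    _ = ∑ j, (2 * k + 1) * ∫ y, ⟪b i, y⟫ ^ (2 * k) * ⟪b j, y⟫ ^ 2 ∂σ := by
        rw [integral_finsetSum _ fun j _ =>
          integrable_inner_pow_mul_inner_pow hρ (b i) (b j) (2 * k) 2, Finset.mul_sum]
    _ = (2 * k + Fintype.card ι) * M := by
        simp only [summand, Finset.sum_add_distrib, Finset.sum_ite_eq', Finset.sum_const,
          Finset.mem_univ, if_true, nsmul_eq_mul, Finset.card_univ]
        ring

variable [IsProbabilityMeasure σ]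

lemma IsIsotropic.integral_inner_pow_two_mul (hσ : IsIsotropic σ)
    (hρ : ∀ᵐ y ∂σ, ‖y‖ = ρ) (hE : finrank ℝ E = 3) (w : E) (k : ℕ) :
    ∫ y, ⟪w, y⟫ ^ (2 * k) ∂σ = (‖w‖ * ρ) ^ (2 * k) / (2 * k + 1) := by
  have : FiniteDimensional ℝ E := .of_finrank_pos (by lia)
  let b : OrthonormalBasis (Fin 3) ℝ E := (stdOrthonormalBasis ℝ E).reindex (finCongr hE)
  have unit (k : ℕ) : ∫ y, ⟪b 0, y⟫ ^ (2 * k) ∂σ = ρ ^ (2 * k) / (2 * k + 1) := by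
    induction k with
    | zero => simp
    | succ k ih =>
      have recursion := hσ.integral_inner_pow_recursion hρ b 0 k
      rw [ih, Fintype.card_fin] at recursion
      rw [mul_add_one]
      push_cast at recursion ⊢
      field_simp at recursion ⊢
      linear_combination -recursion
  rw [hσ.integral_inner_pow (b.norm_eq_one 0), unit, mul_pow, mul_div_assoc]

theorem IsIsotropic.isUniform_inner (hσ : IsIsotropic σ)
    (hρ : ∀ᵐ y ∂σ, ‖y‖ = ρ) (hE : finrank ℝ E = 3) {w : E} (hw : 0 < ‖w‖ * ρ) :
    pdf.IsUniform (⟪w, ·⟫) (Icc (-(‖w‖ * ρ)) (‖w‖ * ρ)) σ := by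
  set c := ‖w‖ * ρ
  have inner_mem : ∀ᵐ y ∂σ, ⟪w, y⟫ ∈ Icc (-c) c :=
    hρ.mono fun y hy => abs_le.1 (by simpa only [c, ← hy] using abs_real_inner_le_norm w y)
  have measurable_inner : Measurable (⟪w, ·⟫) := by fun_prop
  have : IsProbabilityMeasure (σ.map (⟪w, ·⟫)) := Measure.isProbabilityMeasure_map (by fun_prop)
  refine measure_ext_of_forall_integral_pow_eq (a := -c) (b := c) ?_
    (ProbabilityTheory.ae_cond_mem measurableSet_Icc) fun n => ?_
  · exact (ae_map_iff (by fun_prop) measurableSet_Icc).2 inner_mem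
  rw [integral_map (by fun_prop) (by fun_prop), integral_cond_Icc (by linarith), integral_pow]
  rcases n.even_or_odd' with ⟨k, rfl | rfl⟩
  · rw [hσ.integral_inner_pow_two_mul hρ hE]
    have : Odd (2 * k + 1) := by simp
    rw [this.neg_pow]
    push_cast
    field_simp
    ring
  · rw [hσ.integral_inner_pow_eq_zero_of_odd w (by simp)]
    have : Even (2 * k + 1 + 1) := by simp [parity_simps]
    rw [this.neg_pow, sub_self, zero_div, mul_zero]

theorem IsIsotropic.coulombPotential_eq (hσ : IsIsotropic σ)
    (hρ : ∀ᵐ y ∂σ, ‖y‖ = ρ) (hE : finrank ℝ E = 3) {w : E} (hw : ρ < ‖w‖) :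
    coulombPotential σ w = 1 / ‖w‖ := by
  have ρ_nonneg : 0 ≤ ρ := by
    obtain ⟨y, hy⟩ := hρ.exists
    exact hy ▸ norm_nonneg y
  have distance : ∀ᵐ y ∂σ, 1 / ‖w - y‖ = 1 / √(‖w‖ ^ 2 + ρ ^ 2 - 2 * ⟪w, y⟫) := by
    filter_upwards [hρ] with y hy
    rw [← hy, ← Real.sqrt_sq (norm_nonneg (w - y)), norm_sub_sq_real]
    ring_nf
  rcases ρ_nonneg.eq_or_lt with rfl | ρ_pos
  · have : ∀ᵐ y ∂σ, 1 / ‖w - y‖ = 1 / ‖w‖ := hρ.mono fun y hy => by simp [norm_eq_zero.1 hy]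
    rw [coulombPotential, integral_congr_ae this, integral_const, probReal_univ, one_smul]
  have norm_pos : 0 < ‖w‖ := ρ_pos.trans hw
  have uniform := hσ.isUniform_inner hρ hE (mul_pos norm_pos ρ_pos)
  calc ∫ y, 1 / ‖w - y‖ ∂σ
      = ∫ τ, 1 / √(‖w‖ ^ 2 + ρ ^ 2 - 2 * τ) ∂(σ.map (⟪w, ·⟫)) := by
        rw [integral_congr_ae distance, integral_map (by fun_prop)]
        exact (by fun_prop : Measurable _).aestronglyMeasurable
    _ = (‖w‖ * ρ - -(‖w‖ * ρ))⁻¹ * (2 * ρ) := by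
        rw [uniform, integral_cond_Icc (by linarith [mul_pos norm_pos ρ_pos]),
          integral_inv_sqrt_sub_two_mul ρ_nonneg hw]
    _ = 1 / ‖w‖ := by
        field_simp
        ring

lemma IsIsotropic.one_div_norm_sub_le_indicator_add_integral (hσ : IsIsotropic σ)
    (hρ : ∀ᵐ x ∂σ, ‖x‖ = ρ) (hE : finrank ℝ E = 3) {r : ℝ} (hr : ρ < r) (z y : E) :
    1 / ‖z - y‖ ≤
      (ball z r).indicator (fun y => 1 / ‖z - y‖) y + ∫ x, 1 / ‖x + z - y‖ ∂σ := by
  by_cases hy : y ∈ ball z r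
  · rw [indicator_of_mem hy]
    exact le_add_of_nonneg_right (integral_nonneg fun _ => by positivity)
  · have far : ρ < ‖y - z‖ := hr.trans_le (by simpa [dist_eq_norm] using hy)
    have newton : ∫ x, 1 / ‖x + z - y‖ ∂σ = 1 / ‖z - y‖ := by
      rw [norm_sub_rev z, ← hσ.coulombPotential_eq hρ hE far]
      exact integral_congr_ae (.of_forall fun x => by
        simp only [norm_sub_rev, add_comm x, ← sub_sub])
    rw [indicator_of_notMem hy, zero_add, newton]

theorem IsIsotropic.coulombPotential_restrict_le_add_integral [FiniteDimensional ℝ E]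
    (hσ : IsIsotropic σ) (hρ : ∀ᵐ x ∂σ, ‖x‖ = ρ) (hE : finrank ℝ E = 3) {r : ℝ} (hr : ρ < r)
    {ν : Measure E} [ν.IsAddHaarMeasure] {Λ : Set E} (hΛ : ν Λ ≠ ∞) (z : E) :
    coulombPotential (ν.restrict Λ) z ≤
      (∫ y in ball 0 r, 1 / ‖y‖ ∂ν) + ∫ x, coulombPotential (ν.restrict Λ) (x + z) ∂σ := by
  have hE' : 1 < finrank ℝ E := by lia
  have near := (integrable_indicator_ball_one_div_norm_sub (ν := ν) hE' z r).integrableOn (s := Λ)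
  have kernel := integrable_prod_one_div_norm_sub (P := σ) hE' hΛ (measurable_add_const z)
  calc ∫ y in Λ, 1 / ‖z - y‖ ∂ν
      ≤ ∫ y in Λ, ((ball z r).indicator (fun y => 1 / ‖z - y‖) y +
          ∫ x, 1 / ‖x + z - y‖ ∂σ) ∂ν :=
        integral_mono (integrableOn_one_div_norm_sub hE' hΛ z)
          (near.add kernel.integral_prod_right)
          (hσ.one_div_norm_sub_le_indicator_add_integral hρ hE hr z)
    _ = (∫ y in Λ, (ball z r).indicator (fun y => 1 / ‖z - y‖) y ∂ν) +
          ∫ x, coulombPotential (ν.restrict Λ) (x + z) ∂σ := by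
        rw [integral_add near kernel.integral_prod_right,
          ← integral_integral_swap kernel]
        rfl
    _ ≤ (∫ y in ball 0 r, 1 / ‖y‖ ∂ν) + ∫ x, coulombPotential (ν.restrict Λ) (x + z) ∂σ := by
        gcongr
        exact setIntegral_indicator_ball_one_div_norm_sub_le hE' Λ z r

end IsotropicMeasures

section Rotations

variable {R : Matrix (Fin 3) (Fin 3) ℝ}

lemma rot_eq_toEuclideanLin (R : Matrix (Fin 3) (Fin 3) ℝ) (x : E3) :
    rot R x = R.toEuclideanLin x := rfl

lemma rot_mul (S R : Matrix (Fin 3) (Fin 3) ℝ) (x : E3) : rot (S * R) x = rot S (rot R x) := by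
  simp [rot_eq_toEuclideanLin, Matrix.toLpLin_mul_same]

lemma inner_rot_left (R : Matrix (Fin 3) (Fin 3) ℝ) (x y : E3) :
    ⟪rot R x, y⟫ = ⟪x, rot R.transpose y⟫ := by
  rw [rot_eq_toEuclideanLin, rot_eq_toEuclideanLin, ← Matrix.conjTranspose_eq_transpose_of_trivial,
    Matrix.toEuclideanLin_conjTranspose_eq_adjoint, LinearMap.adjoint_inner_right]

lemma inner_rot_rot (hR : R ∈ SO3) (x y : E3) : ⟪rot R x, rot R y⟫ = ⟪x, y⟫ := by
  rw [inner_rot_left, ← rot_mul, mul_eq_one_comm.mp hR.1, rot_eq_toEuclideanLin,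
    Matrix.toLpLin_one, LinearMap.id_apply]

lemma norm_rot (hR : R ∈ SO3) (x : E3) : ‖rot R x‖ = ‖x‖ := by
  rw [norm_eq_sqrt_real_inner, inner_rot_rot hR, ← norm_eq_sqrt_real_inner]

/-- A rotation matrix as a linear isometry of Euclidean space. -/
def rotEquiv (hR : R ∈ SO3) : E3 ≃ₗᵢ[ℝ] E3 :=
  LinearIsometry.toLinearIsometryEquiv ⟨R.toEuclideanLin, norm_rot hR⟩ rfl

instance : BorelSpace (Matrix (Fin 3) (Fin 3) ℝ) :=
  inferInstanceAs (BorelSpace (Fin 3 → Fin 3 → ℝ))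

lemma measurable_uncurry_rot :
    Measurable fun q : Matrix (Fin 3) (Fin 3) ℝ × E3 => rot q.1 q.2 := by
  unfold rot
  fun_prop

lemma measurable_rot (x : E3) : Measurable (rot · x) :=
  measurable_uncurry_rot.comp measurable_prodMk_right

/-- The rotation by the angle `π` about the axis spanned by `u ≠ 0`. -/
def halfTurn (u : E3) : Matrix (Fin 3) (Fin 3) ℝ := (2 / ‖u‖ ^ 2) • Matrix.vecMulVec u u - 1

lemma rot_halfTurn (u x : E3) : rot (halfTurn u) x = (2 / ‖u‖ ^ 2 * ⟪u, x⟫) • u - x := by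
  ext i
  simp only [halfTurn, rot_eq_toEuclideanLin, map_sub, map_smul, Matrix.toLpLin_one,
    LinearMap.sub_apply, LinearMap.smul_apply, LinearMap.id_apply, PiLp.sub_apply, PiLp.smul_apply,
    Matrix.ofLp_toLpLin, Matrix.toLin'_apply, Matrix.vecMulVec_mulVec, Pi.smul_apply,
    MulOpposite.smul_eq_mul_unop, MulOpposite.unop_op, smul_eq_mul,
    EuclideanSpace.inner_eq_star_dotProduct, star_trivial, dotProduct_comm]
  ring

lemma halfTurn_mem_SO3 {u : E3} (hu : u ≠ 0) : halfTurn u ∈ SO3 := by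
  have norm_ne : ‖u‖ ^ 2 ≠ 0 := by simpa using hu
  have sum_sq : ‖u‖ ^ 2 = u 0 ^ 2 + u 1 ^ 2 + u 2 ^ 2 := by
    simp [EuclideanSpace.real_norm_sq_eq, Fin.sum_univ_three]
  have dot : u.ofLp ⬝ᵥ u.ofLp = ‖u‖ ^ 2 := by
    simp only [sum_sq, dotProduct, Fin.sum_univ_three, sq]
  constructor
  · have symm : (halfTurn u).transpose = halfTurn u := by
      simp [halfTurn]
    rw [symm]
    simp only [halfTurn, sub_mul, mul_sub, Matrix.smul_mul, Matrix.mul_smul,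
      Matrix.vecMulVec_mul_vecMulVec, dot, one_mul, mul_one, Matrix.vecMulVec_smul, smul_smul]
    rw [div_mul_cancel₀ _ norm_ne, mul_comm, mul_smul]
    module
  · have scale : 2 / ‖u‖ ^ 2 * (u 0 ^ 2 + u 1 ^ 2 + u 2 ^ 2) = 2 := by
      rw [← sum_sq, div_mul_cancel₀ _ norm_ne]
    simp only [halfTurn, Matrix.det_fin_three, Matrix.sub_apply, Matrix.smul_apply,
      Matrix.vecMulVec_apply, smul_eq_mul, Matrix.one_apply_eq, ne_eq, Fin.reduceEq,
      not_false_eq_true, Matrix.one_apply_ne, sub_zero]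
    linear_combination scale

lemma exists_ne_zero_inner_eq_zero (v : E3) : ∃ u : E3, u ≠ 0 ∧ ⟪u, v⟫ = 0 := by
  have span_ne_top : Submodule.span ℝ {v} ≠ ⊤ := fun h => by
    have := finrank_span_le_card (R := ℝ) ({v} : Set E3)
    rw [h] at this
    simp at this
  obtain ⟨u, hu, u_ne⟩ := Submodule.exists_mem_ne_zero_of_ne_bot
    (mt Submodule.orthogonal_eq_bot_iff.1 span_ne_top)
  exact ⟨u, u_ne, Submodule.mem_orthogonal_singleton_iff_inner_left.1 hu⟩

lemma exists_mem_SO3_rot_eq {v w : E3} (h : ‖v‖ = ‖w‖) : ∃ S ∈ SO3, rot S v = w := by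
  suffices ∃ u : E3, u ≠ 0 ∧ (2 / ‖u‖ ^ 2 * ⟪u, v⟫) • u = v + w by
    obtain ⟨u, hu, huv⟩ := this
    exact ⟨halfTurn u, halfTurn_mem_SO3 hu, by rw [rot_halfTurn, huv, add_sub_cancel_left]⟩
  by_cases hvw : v + w = 0
  · obtain ⟨u, hu, huv⟩ := exists_ne_zero_inner_eq_zero v
    exact ⟨u, hu, by simp [huv, hvw]⟩
  · have inner_add : 2 * ⟪v + w, v⟫ = ‖v + w‖ ^ 2 := by
      rw [norm_add_sq_real, ← h, inner_add_left, real_inner_self_eq_norm_sq, real_inner_comm]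
      ring
    refine ⟨v + w, hvw, ?_⟩
    rw [div_mul_eq_mul_div, inner_add, div_self (by simpa using hvw), one_smul]

lemma setIntegral_rigidImage (hR : R ∈ SO3) (z : E3) (Ω : Set E3) (f : E3 → ℝ) :
    ∫ x in rigidImage R z Ω, f x = ∫ x in Ω, f (rot R x + z) := by
  have motion : MeasurePreserving (fun x => rot R x + z) (volume : Measure E3) volume :=
    (measurePreserving_add_right volume z).comp (rotEquiv hR).measurePreserving
  have embedding : MeasurableEmbedding fun x => rot R x + z :=
    ((rotEquiv hR).toHomeomorph.trans (Homeomorph.addRight z)).measurableEmbedding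
  exact motion.setIntegral_image_emb embedding f Ω

end Rotations

lemma setIntegral_ball_one_div_norm {r : ℝ} (hr : 0 ≤ r) :
    ∫ y in ball (0 : E3) r, 1 / ‖y‖ = 2 * Real.pi * r ^ 2 := by
  have radial (y : E3) :
      (ball 0 r).indicator (fun y => 1 / ‖y‖) y = (Iio r).indicator (1 / ·) ‖y‖ := by
    simp [indicator]
  have unit_ball : volume.real (ball (0 : E3) 1) = 4 / 3 * Real.pi := by
    rw [measureReal_def, EuclideanSpace.volume_ball_fin_three, ENNReal.ofReal_one, one_pow, one_mul,
      ENNReal.toReal_ofReal (by positivity)]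
    ring
  have integrand : EqOn (fun s : ℝ => s ^ 2 • (Iio r).indicator (1 / ·) s)
      ((Iio r).indicator id) (Ioi 0) := by
    intro s hs
    have s_ne : s ≠ 0 := ne_of_gt hs
    by_cases h : s < r
    · simp [h, sq, s_ne]
    · simp [h]
  rw [← integral_indicator measurableSet_ball, integral_congr_ae (.of_forall radial),
    integral_fun_norm_addHaar, finrank_euclideanSpace_fin, unit_ball,
    setIntegral_congr_fun measurableSet_Ioi integrand, setIntegral_indicator measurableSet_Iio,
    Ioi_inter_Iio, ← integral_Ioc_eq_integral_Ioo, ← intervalIntegral.integral_of_le hr]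
  simp only [id, integral_id, nsmul_eq_mul, smul_eq_mul]
  push_cast
  ring

section RotationAverages

variable {μ : Measure (Matrix (Fin 3) (Fin 3) ℝ)}

lemma IsHaarSO3.ae_mem (hμ : IsHaarSO3 μ) : ∀ᵐ R ∂μ, R ∈ SO3 := hμ.2.1

lemma IsHaarSO3.measurePreserving_mul_left (hμ : IsHaarSO3 μ) {S : Matrix (Fin 3) (Fin 3) ℝ}
    (hS : S ∈ SO3) : MeasurePreserving (S * ·) μ μ := ⟨by fun_prop, hμ.2.2 S hS⟩

lemma IsHaarSO3.isIsotropic_map_rot (hμ : IsHaarSO3 μ) (x : E3) :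
    IsIsotropic (μ.map (rot · x)) := by
  intro v w h
  obtain ⟨S, hS, rfl⟩ := exists_mem_SO3_rot_eq h
  have measurable_inner_rot (w : E3) : Measurable fun R => ⟪w, rot R x⟫ :=
    (measurable_rot x).const_inner
  rw [Measure.map_map (by fun_prop) (measurable_rot x),
    Measure.map_map (by fun_prop) (measurable_rot x)]
  calc μ.map (fun R => ⟪v, rot R x⟫)
      = μ.map fun R => ⟪rot S v, rot (S * R) x⟫ := by simp only [rot_mul, inner_rot_rot hS]
    _ = (μ.map (S * ·)).map fun R => ⟪rot S v, rot R x⟫ :=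
        (Measure.map_map (measurable_inner_rot _)
          (hμ.measurePreserving_mul_left hS).measurable).symm
    _ = μ.map fun R => ⟪rot S v, rot R x⟫ := by rw [(hμ.measurePreserving_mul_left hS).map_eq]

lemma IsHaarSO3.ae_norm_map_rot (hμ : IsHaarSO3 μ) (x : E3) :
    ∀ᵐ y ∂(μ.map (rot · x)), ‖y‖ = ‖x‖ := by
  rw [ae_map_iff (measurable_rot x).aemeasurable
    (measurableSet_eq_fun (by fun_prop) (by fun_prop))]
  exact hμ.ae_mem.mono fun R hR => norm_rot hR x

lemma IsHaarSO3.coulombPotential_sub_le_integral_rot (hμ : IsHaarSO3 μ) {x : E3} {r : ℝ}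
    (hx : ‖x‖ < r) {Λ : Set E3} (hΛ : volume Λ ≠ ∞) (z : E3) :
    coulombPotential (volume.restrict Λ) z - 2 * Real.pi * r ^ 2 ≤
      ∫ R, coulombPotential (volume.restrict Λ) (rot R x + z) ∂μ := by
  have : IsProbabilityMeasure μ := hμ.1
  have : IsProbabilityMeasure (μ.map (rot · x)) :=
    Measure.isProbabilityMeasure_map (measurable_rot x).aemeasurable
  have potential_le := (hμ.isIsotropic_map_rot x).coulombPotential_restrict_le_add_integral
    (hμ.ae_norm_map_rot x) (by simp) hx hΛ z
  have measurable_potential : Measurable fun y => coulombPotential (volume.restrict Λ) (y + z) :=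
    (measurable_coulombPotential _).comp (measurable_add_const z)
  rwa [setIntegral_ball_one_div_norm ((norm_nonneg x).trans hx.le),
    integral_map (measurable_rot x).aemeasurable measurable_potential.aestronglyMeasurable,
    ← sub_le_iff_le_add'] at potential_le

theorem rotation_average_background_general (μ : Measure (Matrix (Fin 3) (Fin 3) ℝ))
    (hμ : IsHaarSO3 μ) (r : ℝ) (Ω : Set E3) (hΩ : Ω ⊆ ball 0 r) (z : E3) (Λ : Set E3)
    (hΛ : volume Λ ≠ ∞) :
    vol Ω * (∫ y in Λ, 1 / ‖z - y‖) - 2 * Real.pi * r ^ 2 * vol Ω ≤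
      ∫ R, (∫ x in rigidImage R z Ω, ∫ y in Λ, 1 / ‖x - y‖) ∂μ := by
  have : IsProbabilityMeasure μ := hμ.1
  have : IsFiniteMeasure (volume.restrict Ω) :=
    isFiniteMeasure_restrict.2 (measure_ne_top_of_subset hΩ measure_ball_lt_top.ne)
  set U := coulombPotential (volume.restrict Λ)
  have integrable : Integrable (fun q : Matrix (Fin 3) (Fin 3) ℝ × E3 => U (rot q.1 q.2 + z))
      (μ.prod (volume.restrict Ω)) :=
    integrable_coulombPotential_restrict_comp (by simp) hΛ (measurable_uncurry_rot.add_const z)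
  calc vol Ω * U z - 2 * Real.pi * r ^ 2 * vol Ω
      = ∫ x in Ω, (U z - 2 * Real.pi * r ^ 2) := by
        rw [setIntegral_const, vol, measureReal_def, smul_eq_mul]
        ring
    _ ≤ ∫ x in Ω, ∫ R, U (rot R x + z) ∂μ := by
        refine integral_mono_ae (integrable_const _) integrable.integral_prod_right ?_
        filter_upwards [ae_restrict_of_ae_restrict_of_subset hΩ
          (ae_restrict_mem measurableSet_ball)] with x hx
        exact hμ.coulombPotential_sub_le_integral_rot (mem_ball_zero_iff.1 hx) hΛ z
    _ = ∫ R, (∫ x in Ω, U (rot R x + z)) ∂μ := (integral_integral_swap integrable).symm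
    _ = ∫ R, (∫ x in rigidImage R z Ω, U x) ∂μ :=
        integral_congr_ae (hμ.ae_mem.mono fun R hR => (setIntegral_rigidImage hR z Ω U).symm)

end RotationAverages

/-- **Rotation-averaged interaction with the background**: for `Ω* ⊆ B(0,r*)` of volume `m`,
any `z` and any bounded measurable background region `Λ`,
`⨍_{SO(3)} ∬_{(z+RΩ*)×Λ} |x-y|⁻¹ ≥ m ∫_Λ |z-y|⁻¹ − 2π r*² m`. -/
theorem rotation_average_background (μ : Measure (Matrix (Fin 3) (Fin 3) ℝ))
    (hμ : IsHaarSO3 μ) (rstar : ℝ) (hr : 0 < rstar)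
    (Ωstar : Set E3) (hΩm : MeasurableSet Ωstar) (hsub : Ωstar ⊆ ball 0 rstar)
    (m : ℝ) (hmass : vol Ωstar = m) (z : E3)
    (Λ : Set E3) (hΛm : MeasurableSet Λ) (hΛb : IsBounded Λ) :
    m * (∫ y in Λ, 1 / ‖z - y‖) - 2 * Real.pi * rstar^2 * m ≤
      ∫ R, (∫ x in rigidImage R z Ωstar, ∫ y in Λ, 1 / ‖x - y‖) ∂μ := by
  rw [← hmass]
  exact rotation_average_background_general μ hμ rstar Ωstar hsub z Λ hΛb.measure_lt_top.ne

end
end
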